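/- If X is an irreducible multiprojective variety of dimension d in P^{n_1} × ... × P^{n_k}, then the degree of its image under the Segre embedding σ into P^N, where N+1 = (n_1+1)···(n_k+1), equals the sum over all e ∈ [n_·] with |e| = d of the multinomial coefficient d!/(e_1!···e_k!) times Deg_X(e). -/

import Mathlib

/-!
# The degree of a Segre embedding

A hyperplane section of `σ(X)` is the image of the section of `X` by a multilinear form, and `σ` is
injective (`segre_section`, `segre_injective`). So the degree of `σ(X)` is the number of points of
`X` on `d` general multilinear forms, `d = dim X`, and this number is found by degeneration
(`IsCone.mul_count`). Specialise each of the forms to a product `∏ i, l j i` of general linear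
forms, one in the coordinates of each factor. The section then breaks up into the sections
`X ∩ {l j (φ j) = 0 for all j}`, one for each choice `φ` of a factor for every form. They are
disjoint, because `d + 1` general linear forms have no common zero on `X`. A general such section is
a multilinear slice of type `cnt φ`, where `cnt φ i` is the number of `j` with `φ j = i`, so it has
`Deg (cnt φ)` points (`deg_eq_of_le`). By `card_cnt_eq` there are `d! / ∏ i, (e i)!` maps `φ` of
type `e`, which gives the formula. Types with `n i < e i` do not contribute, since `n i + 1` general
linear forms in the factor `i` have no common zero (`count_eq_zero_of_lt`).

Two points need proof. First, a general section of complementary dimension must be finite, of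
constant cardinality, and must depend differentiably on its coefficients. Let `K` be the field of
fractions of the coordinate ring of the multicone over `X`. A system whose equations are linear
combinations of given polynomials with free coefficients has an incidence variety over `X`, whose
function field `IncField` is purely transcendental over `K`: each equation can be solved for one of
its coefficients. If the number of equations is the transcendence degree of `K`, then `IncField`
is algebraic over the field of coefficients, or the projection to the coefficients is not dominant.
In the first case the primitive element theorem presents the general fibre as the zero set of a
separable polynomial in one variable (`exists_generic_fibre_model`, `IncGood.finite`). With more
equations the general fibre is empty, and with fewer it is empty or infinite (`IncGood.empty_of_lt`,
`IncGood.empty_or_infinite`). To pass from the cone to `X`, one inhomogeneous linear equation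
`u i = 1` is added for each factor, which selects one representative of every point. As a byproduct,
`dimOf X` is the transcendence degree of `K` minus the number of factors (`IsCone.dimOf_eq`).

Secondly, the number of points must not change when the special system is deformed. At a point of
the section belonging to `φ`, the product of linear forms is `l j (φ j)` times the remaining
factors, which are nonzero. The derivative of the system with respect to the values of the
`l j (φ j)` is therefore diagonal with nonzero entries, and the implicit function theorem gives
exactly one nearby solution of the deformed system (`locAt_of_factor`, `locAt_mulSys`). No further
solutions appear, because the points of the cone with all blocks of norm one form a compact set
(`sol_ncard_eventually`). A count that is constant both on a neighbourhood of the special system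
and off a hypersurface is the general one.
-/


open scoped BigOperators

namespace MultiProj

variable {ι : Type*} [Fintype ι] [DecidableEq ι]

/-- Multiprojective space: a product of complex projective spaces `ℙ^{n i}`. -/
abbrev PStack (n : ι → ℕ) := (i : ι) → Projectivization ℂ (Fin (n i + 1) → ℂ)

/-- A linear form (given by its coefficient vector) vanishes at a point of the
projectivization of a coordinate space. -/
def PLinVanish {κ : Type*} [Fintype κ] (c : κ → ℂ)
    (p : Projectivization ℂ (κ → ℂ)) : Prop :=
  ∀ (v : κ → ℂ) (hv : v ≠ 0), Projectivization.mk ℂ v hv = p → ∑ a, c a * v a = 0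

/-- A polynomial in the multihomogeneous coordinates vanishes at a point of the
multiprojective space, i.e. at every system of homogeneous representatives. -/
def PolyVanish {n : ι → ℕ} (f : MvPolynomial ((i : ι) × Fin (n i + 1)) ℂ)
    (x : PStack n) : Prop :=
  ∀ v : (i : ι) → Fin (n i + 1) → ℂ,
    (∀ i, ∃ hv : v i ≠ 0, Projectivization.mk ℂ (v i) hv = x i) →
    MvPolynomial.eval (fun p => v p.1 p.2) f = 0

/-- Algebraic subsets of multiprojective space. -/
def IsAlgebraicSet {n : ι → ℕ} (X : Set (PStack n)) : Prop :=
  ∃ F : Set (MvPolynomial ((i : ι) × Fin (n i + 1)) ℂ),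
    X = {x | ∀ f ∈ F, PolyVanish f x}

/-- Irreducible multiprojective varieties: nonempty algebraic sets that are not
contained in the union of two algebraic sets without being contained in one. -/
def IsIrredVariety {n : ι → ℕ} (X : Set (PStack n)) : Prop :=
  IsAlgebraicSet X ∧ X.Nonempty ∧
    ∀ A B : Set (PStack n), IsAlgebraicSet A → IsAlgebraicSet B →
      X ⊆ A ∪ B → (X ⊆ A ∨ X ⊆ B)

/-- An irreducible component of a multiprojective variety. -/
def IsComponentOf {n : ι → ℕ} (Y X : Set (PStack n)) : Prop :=
  IsIrredVariety Y ∧ Y ⊆ X ∧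
    ∀ Y' : Set (PStack n), IsIrredVariety Y' → Y ⊆ Y' → Y' ⊆ X → Y' = Y

/-- Parameter space for a multilinear slice of type `e`: `e i` linear forms in
the variables of the `i`-th factor. -/
abbrev SliceParams (n : ι → ℕ) (e : ι → ℕ) :=
  (i : ι) → Fin (e i) → (Fin (n i + 1) → ℂ)

/-- The common zero set in multiprojective space of a multilinear slice. -/
def SliceZeros {n : ι → ℕ} {e : ι → ℕ} (L : SliceParams n e) : Set (PStack n) :=
  {x | ∀ (i : ι) (j : Fin (e i)), PLinVanish (L i j) (x i)}

/-- A property holds generically (on a dense open set) of a parameter. -/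
def Generic {α : Type*} [TopologicalSpace α] (P : α → Prop) : Prop :=
  ∃ U : Set α, IsOpen U ∧ Dense U ∧ ∀ a ∈ U, P a

/-- The multidimension `Dim(X)`: the set of vectors `e` such that a general
multilinear slice of type `e` meets `X` in finitely many, and at least one, points. -/
def MDim {n : ι → ℕ} (X : Set (PStack n)) : Set (ι → ℕ) :=
  {e | (∀ i, e i ≤ n i) ∧
    Generic (fun L : SliceParams n e =>
      (X ∩ SliceZeros L).Finite ∧ (X ∩ SliceZeros L).Nonempty)}

/-- `Deg_X(e) = d`: a general multilinear slice of type `e` meets `X` in exactly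
`d` points. -/
def DegIs {n : ι → ℕ} (X : Set (PStack n)) (e : ι → ℕ) (d : ℕ) : Prop :=
  Generic (fun L : SliceParams n e =>
    (X ∩ SliceZeros L).Finite ∧ (X ∩ SliceZeros L).ncard = d)

/-- The intrinsic dimension of a multiprojective variety, read off as the common
total degree of the vectors in its multidimension. -/
noncomputable def dimOf {n : ι → ℕ} (X : Set (PStack n)) : ℕ :=
  sSup {m | ∃ e ∈ MDim X, ∑ i, e i = m}

/-- Projection of the multiprojective space onto the factors indexed by `I`. -/
def resMap {n : ι → ℕ} (I : Finset ι) (x : PStack n) :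
    PStack (fun i : {j // j ∈ I} => n i.1) :=
  fun i => x i.1

/-- `dim π_I(X)`: the dimension of the projection of `X` onto the factors
indexed by `I`. -/
noncomputable def dimProj {n : ι → ℕ} (I : Finset ι) (X : Set (PStack n)) : ℕ :=
  dimOf (resMap I '' X)

/-- An equidimensional multiprojective variety: all irreducible components have
the same multidimension. -/
def Equidimensional {n : ι → ℕ} (X : Set (PStack n)) : Prop :=
  IsAlgebraicSet X ∧ X.Nonempty ∧
    ∀ Y Y' : Set (PStack n), IsComponentOf Y X → IsComponentOf Y' X →
      MDim Y = MDim Y'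

/-- The set of lattice points of a polymatroid polytope inside the box `[n]`,
cut out by a submodular, monotone rank function. -/
def IsPolymatroidSet (n : ι → ℕ) (P : Set (ι → ℕ)) : Prop :=
  ∃ r : Finset ι → ℕ,
    (∀ A B : Finset ι, r (A ∪ B) + r (A ∩ B) ≤ r A + r B) ∧
    (∀ A B : Finset ι, A ⊆ B → r A ≤ r B) ∧
    P = {e | (∀ i, e i ≤ n i) ∧ (∑ i, e i = r Finset.univ) ∧
          ∀ S : Finset ι, ∑ i ∈ S, e i ≤ r S}

section Product

variable {ι₁ ι₂ : Type*} [Fintype ι₁] [DecidableEq ι₁] [Fintype ι₂] [DecidableEq ι₂]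

/-- Combine points of two multiprojective spaces into a point of the product
multiprojective space, indexed by the disjoint union of the index sets. -/
def combine {n₁ : ι₁ → ℕ} {n₂ : ι₂ → ℕ} (y : PStack n₁) (z : PStack n₂) :
    PStack (Sum.elim n₁ n₂) := fun i =>
  match i with
  | Sum.inl a => y a
  | Sum.inr b => z b

/-- The Cartesian product of multiprojective varieties in disjoint factors. -/
def prodSet {n₁ : ι₁ → ℕ} {n₂ : ι₂ → ℕ} (Y : Set (PStack n₁)) (Z : Set (PStack n₂)) :
    Set (PStack (Sum.elim n₁ n₂)) :=
  {x | ∃ y ∈ Y, ∃ z ∈ Z, x = combine y z}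

/-- Projection of the product multiprojective space onto the first group of factors. -/
def projL {n₁ : ι₁ → ℕ} {n₂ : ι₂ → ℕ} (x : PStack (Sum.elim n₁ n₂)) : PStack n₁ :=
  fun a => x (Sum.inl a)

/-- Projection of the product multiprojective space onto the second group of factors. -/
def projR {n₁ : ι₁ → ℕ} {n₂ : ι₂ → ℕ} (x : PStack (Sum.elim n₁ n₂)) : PStack n₂ :=
  fun b => x (Sum.inr b)

end Product

section Segre

/-- Degree `δ` of a subset `S` of the projective space `ℙ(ℂ^κ)` of dimension `d`:
a general collection of `d` hyperplanes meets `S` in exactly `δ` points. -/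
def ProjDegIs {κ : Type*} [Fintype κ] (S : Set (Projectivization ℂ (κ → ℂ)))
    (d : ℕ) (δ : ℕ) : Prop :=
  Generic (fun c : Fin d → κ → ℂ =>
    (S ∩ {p | ∀ j, PLinVanish (c j) p}).Finite ∧
    (S ∩ {p | ∀ j, PLinVanish (c j) p}).ncard = δ)

/-- `σ` is a Segre embedding: on homogeneous representatives it is given by the
tensor (outer) product of the coordinate vectors of the factors. -/
def IsSegreMap (n : ι → ℕ)
    (σ : PStack n → Projectivization ℂ (((i : ι) → Fin (n i + 1)) → ℂ)) : Prop :=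
  ∀ (x : PStack n) (v : (i : ι) → Fin (n i + 1) → ℂ),
    (∀ i, ∃ hv : v i ≠ 0, Projectivization.mk ℂ (v i) hv = x i) →
    ∃ h : (fun a : (i : ι) → Fin (n i + 1) => ∏ i, v i (a i)) ≠ 0,
      Projectivization.mk ℂ (fun a : (i : ι) → Fin (n i + 1) => ∏ i, v i (a i)) h = σ x

end Segre

end MultiProj

open MultiProj

/-! ### Generic fibres of a dominant map -/

/-- Finitely many algebraic elements are polynomials in a single integral element, which is itself a
polynomial in them. -/
theorem exists_primitive_combination {k L m : Type*} [Field k] [CharZero k] [Field L] [Algebra k L]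
    [Finite m] (x : m → L) (hx : ∀ i, IsAlgebraic k (x i)) :
    ∃ (Θ : MvPolynomial m k) (a : m → Polynomial k),
      IsIntegral k (MvPolynomial.aeval x Θ) ∧
      ∀ i, Polynomial.aeval (MvPolynomial.aeval x Θ) (a i) = x i := by
  have hxS : ∀ z ∈ Set.range x, IsAlgebraic k z := by rintro _ ⟨i, rfl⟩; exact hx i
  have hfd : FiniteDimensional k (IntermediateField.adjoin k (Set.range x)) :=
    IntermediateField.finiteDimensional_adjoin (fun z hz => (hxS z hz).isIntegral)
  obtain ⟨α, hα⟩ := Field.exists_primitive_element k (IntermediateField.adjoin k (Set.range x))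
  have hmem : (α : L) ∈ Algebra.adjoin k (Set.range x) := by
    rw [← IntermediateField.adjoin_toSubalgebra_of_isAlgebraic hxS]
    exact α.2
  rw [Algebra.adjoin_range_eq_range_aeval] at hmem
  obtain ⟨Θ, hΘ⟩ := hmem
  have hΘ' : MvPolynomial.aeval x Θ = (α : L) := hΘ
  have hint : IsIntegral k α := Algebra.IsIntegral.isIntegral α
  have key : ∀ i, ∃ a : Polynomial k, Polynomial.aeval (α : L) a = x i := by
    intro i
    have h1 : (⟨x i, IntermediateField.subset_adjoin _ _ ⟨i, rfl⟩⟩ :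
        IntermediateField.adjoin k (Set.range x)) ∈ (IntermediateField.adjoin k {α}).toSubalgebra := by
      rw [hα]; trivial
    rw [IntermediateField.adjoin_simple_toSubalgebra_of_isAlgebraic hint.isAlgebraic,
      Algebra.adjoin_singleton_eq_range_aeval] at h1
    obtain ⟨a, ha⟩ := h1
    refine ⟨a, ?_⟩
    have := congrArg (algebraMap (IntermediateField.adjoin k (Set.range x)) L) ha
    rw [← show algebraMap (IntermediateField.adjoin k (Set.range x)) L α = (α : L) from rfl,
      Polynomial.aeval_algebraMap_apply]
    exact this
  choose a ha using key
  refine ⟨Θ, a, ?_, ?_⟩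
  · rw [hΘ']
    exact hint.map (IntermediateField.val _)
  · rw [hΘ']; exact ha

theorem exists_clear_denominators {R k : Type*} [CommRing R] [IsDomain R] [Field k] [Algebra R k]
    [IsFractionRing R k] (q : Polynomial k) :
    ∃ (d : R) (q' : Polynomial R), d ≠ 0 ∧
      q'.map (algebraMap R k) = Polynomial.C (algebraMap R k d) * q := by
  obtain ⟨b, hb, h⟩ := IsLocalization.integerNormalization_spec (nonZeroDivisors R) q
  refine ⟨b, _, nonZeroDivisors.ne_zero hb, h.trans ?_⟩
  ext n
  simp [Algebra.smul_def]

theorem exists_clear_denominators_mv {R k m : Type*} [CommRing R] [IsDomain R] [Field k]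
    [Algebra R k] [IsFractionRing R k] (q : MvPolynomial m k) :
    ∃ (d : R) (q' : MvPolynomial m R), d ≠ 0 ∧
      q'.map (algebraMap R k) = MvPolynomial.C (algebraMap R k d) * q := by
  letI : Algebra (MvPolynomial m R) (MvPolynomial m k) := MvPolynomial.algebraMvPolynomial
  have := MvPolynomial.isLocalization (σ := m) (nonZeroDivisors R) k
  obtain ⟨⟨q', ⟨_, d, hd, rfl⟩⟩, h⟩ :=
    IsLocalization.surj (Submonoid.map (MvPolynomial.C : R →+* MvPolynomial m R)
      (nonZeroDivisors R)) q
  refine ⟨d, q', nonZeroDivisors.ne_zero hd, ?_⟩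
  simp only [MvPolynomial.algebraMap_def, MvPolynomial.map_C] at h
  rw [mul_comm]; exact h.symm

theorem exists_clear_denominators_family {R k m : Type*} [CommRing R] [IsDomain R] [Field k]
    [Algebra R k] [IsFractionRing R k] [Fintype m] (q : m → Polynomial k) :
    ∃ (d : R) (q' : m → Polynomial R), d ≠ 0 ∧
      ∀ i, (q' i).map (algebraMap R k) = Polynomial.C (algebraMap R k d) * q i := by
  classical
  choose d q' hd hq using fun i => exists_clear_denominators (R := R) (q i)
  refine ⟨∏ i, d i, fun i => Polynomial.C (∏ j ∈ Finset.univ.erase i, d j) * q' i,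
    Finset.prod_ne_zero_iff.mpr fun i _ => hd i, fun i => ?_⟩
  rw [Polynomial.map_mul, hq, ← Finset.mul_prod_erase Finset.univ d (Finset.mem_univ i)]
  simp only [Polynomial.map_C, map_mul]
  ring

/-- A model of the general fibre of a dominant generically finite map. Here `R` is the coordinate
ring of the base and `x` a tuple of algebraic elements of an extension field `L`. For each point `ε`
of the base with `ε f ≠ 0`, the maps `v ↦ Θ(v)` and `θ ↦ (A i)(θ) / f` are mutually inverse
bijections between the fibre, that is, the common zeros of the specialised algebraic relations of
`x`, and the zero set of the specialisation of `p`. That specialisation keeps its degree and has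
simple roots only. The polynomial `p` is a multiple of the minimal polynomial of a primitive element
`Θ(x)`, with denominators cleared. -/
theorem exists_generic_fibre_model {R L m : Type*} [CommRing R] [IsDomain R] [CharZero R] [Field L]
    [Algebra R L] (hinj : Function.Injective (algebraMap R L)) [Fintype m] (x : m → L)
    (hx : ∀ i, IsAlgebraic R (x i)) :
    ∃ (f : R) (p : Polynomial R) (Θ : MvPolynomial m R) (A : m → Polynomial R),
      f ≠ 0 ∧ 0 < p.natDegree ∧ ∀ ε : R →+* ℂ, ε f ≠ 0 →
        (p.map ε).natDegree = p.natDegree ∧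
        (∀ θ, p.eval₂ ε θ = 0 → (Polynomial.derivative p).eval₂ ε θ ≠ 0) ∧
        (∀ v : m → ℂ, (∀ q : MvPolynomial m R, q.eval₂ (algebraMap R L) x = 0 → q.eval₂ ε v = 0) →
          p.eval₂ ε (Θ.eval₂ ε v) = 0 ∧ ∀ i, ε f * v i = (A i).eval₂ ε (Θ.eval₂ ε v)) ∧
        (∀ θ, p.eval₂ ε θ = 0 →
          (∀ q : MvPolynomial m R, q.eval₂ (algebraMap R L) x = 0 →
            q.eval₂ ε (fun i => (A i).eval₂ ε θ / ε f) = 0) ∧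
          Θ.eval₂ ε (fun i => (A i).eval₂ ε θ / ε f) = θ) := by
  have : FaithfulSMul R L := (faithfulSMul_iff_algebraMap_injective R L).mpr hinj
  let k := FractionRing R
  let _ : Algebra k L := FractionRing.liftAlgebra R L
  have : IsScalarTower R k L := inferInstance
  have : CharZero k := charZero_of_injective_algebraMap (IsFractionRing.injective R k)
  obtain ⟨Θ₀, a₀, hint, ha₀⟩ := exists_primitive_combination (k := k) x
    (fun i => (hx i).extendScalars (IsFractionRing.injective R k))
  obtain ⟨d₀, Θ, hd₀, hΘ⟩ := exists_clear_denominators_mv (R := R) Θ₀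
  have hd₀k : algebraMap R k d₀ ≠ 0 := by
    simpa using hd₀
  set θ : L := Θ.eval₂ (algebraMap R L) x with hθdef
  have hθ : θ = algebraMap R L d₀ * MvPolynomial.aeval x Θ₀ := by
    have := congrArg (MvPolynomial.aeval x) hΘ
    rw [map_mul, MvPolynomial.aeval_C, ← IsScalarTower.algebraMap_apply,
      MvPolynomial.aeval_map_algebraMap] at this
    exact this
  have hθint : IsIntegral k θ := by
    rw [hθ, IsScalarTower.algebraMap_apply R k L]
    exact (isIntegral_algebraMap).mul hint
  -- the coordinates as polynomials in `θ`
  have hxk : ∀ i, Polynomial.aeval θ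
      ((a₀ i).comp (Polynomial.C (algebraMap R k d₀)⁻¹ * Polynomial.X)) = x i := by
    intro i
    rw [Polynomial.aeval_comp]
    have : Polynomial.aeval θ (Polynomial.C (algebraMap R k d₀)⁻¹ * Polynomial.X) =
        MvPolynomial.aeval x Θ₀ := by
      rw [map_mul, Polynomial.aeval_C, Polynomial.aeval_X, hθ, ← mul_assoc,
        IsScalarTower.algebraMap_apply R k L, ← map_mul, inv_mul_cancel₀ hd₀k, map_one, one_mul]
    rw [this, ha₀]
  obtain ⟨d₁, A, hd₁, hA⟩ := exists_clear_denominators_family (R := R) (k := k)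
    (fun i => (a₀ i).comp (Polynomial.C (algebraMap R k d₀)⁻¹ * Polynomial.X))
  have hAx : ∀ i, (A i).eval₂ (algebraMap R L) θ = algebraMap R L d₁ * x i := by
    intro i
    have := congrArg (Polynomial.aeval θ) (hA i)
    rw [map_mul, Polynomial.aeval_C, ← IsScalarTower.algebraMap_apply,
      Polynomial.aeval_map_algebraMap, hxk] at this
    exact this
  -- the minimal polynomial
  obtain ⟨a, p, ha, hp⟩ := exists_clear_denominators (R := R) (minpoly k θ)
  have hak : algebraMap R k a ≠ 0 := by simpa using ha
  have hpθ : p.eval₂ (algebraMap R L) θ = 0 := by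
    have := congrArg (Polynomial.aeval θ) hp
    rw [map_mul, minpoly.aeval, mul_zero, Polynomial.aeval_map_algebraMap] at this
    exact this
  have hmon : (minpoly k θ).Monic := minpoly.monic hθint
  have hpdeg : p.natDegree = (minpoly k θ).natDegree := by
    rw [← Polynomial.natDegree_map_eq_of_injective (IsFractionRing.injective R k) p, hp,
      Polynomial.natDegree_C_mul hak]
  have hplead : p.leadingCoeff = a := by
    apply IsFractionRing.injective R k
    have := congrArg (fun q => Polynomial.coeff q p.natDegree) hp
    simp only [Polynomial.coeff_map, Polynomial.coeff_C_mul] at this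
    rw [Polynomial.leadingCoeff, this, hpdeg, hmon.coeff_natDegree, mul_one]
  -- Bezout relation witnessing separability
  have hsep : (minpoly k θ).Separable := (minpoly.irreducible hθint).separable
  obtain ⟨U, V, hUV⟩ := hsep
  obtain ⟨d₂, UV, hd₂, hUV'⟩ := exists_clear_denominators_family (R := R) (k := k)
    (fun b : Bool => if b then U else V)
  have hbez : UV true * p + UV false * Polynomial.derivative p = Polynomial.C (d₂ * a) := by
    apply Polynomial.map_injective _ (IsFractionRing.injective R k)
    rw [Polynomial.map_add, Polynomial.map_mul, Polynomial.map_mul, hUV', hUV',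
      ← Polynomial.derivative_map, hp, Polynomial.derivative_C_mul, Polynomial.map_C, map_mul,
      map_mul]
    simp only [if_true, Bool.false_eq_true, if_false]
    linear_combination (Polynomial.C (algebraMap R k d₂) * Polynomial.C (algebraMap R k a)) * hUV
  set f := d₁ * a * d₂ with hf
  have hf0 : f ≠ 0 := by simp [hf, hd₁, ha, hd₂]
  refine ⟨f, p, Θ, fun i => Polynomial.C (a * d₂) * A i, hf0, ?_, ?_⟩
  · rw [hpdeg]; exact minpoly.natDegree_pos hθint
  intro ε hε
  have hεd₁ : ε d₁ ≠ 0 := fun h => hε (by simp [hf, h])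
  have hεa : ε a ≠ 0 := fun h => hε (by simp [hf, h])
  have hεd₂ : ε d₂ ≠ 0 := fun h => hε (by simp [hf, h])
  refine ⟨?_, ?_, ?_, ?_⟩
  · exact Polynomial.natDegree_map_of_leadingCoeff_ne_zero _ (by rwa [hplead])
  · intro t ht h
    have := congrArg (Polynomial.eval₂ ε t) hbez
    rw [Polynomial.eval₂_add, Polynomial.eval₂_mul, Polynomial.eval₂_mul, ht, h,
      Polynomial.eval₂_C, map_mul] at this
    simp [hεa, hεd₂] at this
  · intro v hv
    constructor
    · have := hv (p.eval₂ MvPolynomial.C Θ) (by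
        rw [← MvPolynomial.coe_eval₂Hom, Polynomial.hom_eval₂]
        simp only [MvPolynomial.coe_eval₂Hom, ← hθdef]
        convert hpθ using 2
        ext r; simp)
      rw [← MvPolynomial.coe_eval₂Hom, Polynomial.hom_eval₂] at this
      simp only [MvPolynomial.coe_eval₂Hom] at this
      convert this using 2
      ext r; simp
    · intro i
      have := hv (MvPolynomial.C d₁ * MvPolynomial.X i - (A i).eval₂ MvPolynomial.C Θ) (by
        rw [← MvPolynomial.coe_eval₂Hom, map_sub, Polynomial.hom_eval₂, map_mul]
        simp only [MvPolynomial.coe_eval₂Hom, ← hθdef, MvPolynomial.eval₂_C, MvPolynomial.eval₂_X]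
        rw [sub_eq_zero, ← hAx]
        congr 1
        ext r; simp)
      rw [← MvPolynomial.coe_eval₂Hom, map_sub, Polynomial.hom_eval₂, map_mul] at this
      simp only [MvPolynomial.coe_eval₂Hom, MvPolynomial.eval₂_C, MvPolynomial.eval₂_X] at this
      rw [sub_eq_zero] at this
      rw [Polynomial.eval₂_mul, Polynomial.eval₂_C, hf, map_mul, map_mul, map_mul]
      have h2 : ((MvPolynomial.eval₂Hom ε v).comp MvPolynomial.C) = ε := by ext r; simp
      rw [h2] at this
      rw [← this]; ring
  · intro t ht
    have hEq : (fun i => Polynomial.eval₂ ε t (Polynomial.C (a * d₂) * A i) / ε f) =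
        fun i => (A i).eval₂ ε t / ε d₁ := by
      funext i
      rw [Polynomial.eval₂_mul, Polynomial.eval₂_C, hf, map_mul, map_mul, map_mul]
      field_simp
    rw [hEq]
    -- work over `R` with `f` inverted
    let S := Localization.Away f
    have hfk : IsUnit (algebraMap R k f) := by
      rw [isUnit_iff_ne_zero]; simpa using hf0
    have hfε : IsUnit (ε f) := isUnit_iff_ne_zero.mpr hε
    let j : S →+* k := IsLocalization.Away.lift f hfk
    let e : S →+* ℂ := IsLocalization.Away.lift f hfε
    have hj : ∀ r, j (algebraMap R S r) = algebraMap R k r := fun r => IsLocalization.Away.lift_eq f hfk r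
    have he : ∀ r, e (algebraMap R S r) = ε r := fun r => IsLocalization.Away.lift_eq f hfε r
    have hjinj : Function.Injective j := by
      have hfreg : Submonoid.powers f ≤ nonZeroDivisors R := by
        rintro _ ⟨n, rfl⟩
        exact pow_mem (mem_nonZeroDivisors_of_ne_zero hf0) n
      refine (IsLocalization.lift_injective_iff _).mpr fun y z => ?_
      constructor
      · intro h; exact congrArg _ (IsLocalization.injective S hfreg h)
      · intro h; exact congrArg _ (IsFractionRing.injective R k h)
    have hunit : ∀ r s : R, r * s = f → IsUnit (algebraMap R S r) := by
      intro r s hrs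
      have : IsUnit (algebraMap R S f) := IsLocalization.Away.algebraMap_isUnit f
      refine isUnit_of_mul_isUnit_left (y := algebraMap R S s) ?_
      rwa [← map_mul, hrs]
    obtain ⟨ua, hua⟩ := hunit a (d₁ * d₂) (by rw [hf]; ring)
    obtain ⟨ud, hud⟩ := hunit d₁ (a * d₂) (by rw [hf]; ring)
    let pf : Polynomial S := Polynomial.C (↑ua⁻¹ : S) * p.map (algebraMap R S)
    have hjS : j.comp (algebraMap R S) = algebraMap R k := RingHom.ext hj
    have heS : e.comp (algebraMap R S) = ε := RingHom.ext he
    have hjua : j (↑ua⁻¹ : S) * algebraMap R k a = 1 := by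
      rw [← hj, ← hua, ← map_mul, Units.inv_mul, map_one]
    have hpfj : pf.map j = minpoly k θ := by
      simp only [pf, Polynomial.map_mul, Polynomial.map_C, Polynomial.map_map, hjS, hp]
      rw [← mul_assoc, ← Polynomial.C_mul, hjua, Polynomial.C_1, one_mul]
    have hpfmon : pf.Monic := Polynomial.monic_of_injective hjinj (by rw [hpfj]; exact hmon)
    have hpfe : pf.eval₂ e t = 0 := by
      simp only [pf, Polynomial.eval₂_mul, Polynomial.eval₂_map, heS, ht, mul_zero]
    let jL : S →+* L := (algebraMap k L).comp j
    have hjL : jL.comp (algebraMap R S) = algebraMap R L := by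
      rw [RingHom.comp_assoc, hjS]; exact (IsScalarTower.algebraMap_eq R k L).symm
    -- polynomials over `S` that vanish at `θ` vanish at every specialised root
    have main : ∀ h : Polynomial S, h.eval₂ jL θ = 0 → h.eval₂ e t = 0 := by
      intro h hh
      have h1 : minpoly k θ ∣ h.map j := by
        apply minpoly.dvd
        rw [Polynomial.aeval_def, Polynomial.eval₂_map]; exact hh
      rw [← hpfj, Polynomial.map_dvd_map j hjinj hpfmon] at h1
      obtain ⟨r, rfl⟩ := h1
      rw [Polynomial.eval₂_mul, hpfe, zero_mul]
    let sub : MvPolynomial m R →+* Polynomial S :=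
      MvPolynomial.eval₂Hom (Polynomial.C.comp (algebraMap R S))
        (fun i => Polynomial.C (↑ud⁻¹ : S) * (A i).map (algebraMap R S))
    have hsubL : ∀ q, (sub q).eval₂ jL θ = q.eval₂ (algebraMap R L) x := by
      intro q
      have : (Polynomial.eval₂RingHom jL θ).comp sub = MvPolynomial.eval₂Hom (algebraMap R L) x := by
        apply MvPolynomial.ringHom_ext
        · intro r
          simp [sub, ← hjL]
        · intro i
          simp only [sub, RingHom.comp_apply, MvPolynomial.eval₂Hom_X', map_mul,
            Polynomial.coe_eval₂RingHom, Polynomial.eval₂_C, Polynomial.eval₂_map, hjL, hAx]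
          rw [← mul_assoc, ← hjL, RingHom.comp_apply jL, ← hud, ← map_mul, Units.inv_mul, map_one,
            one_mul]
      exact congrArg (fun g => g q) this
    have hsube : ∀ q, (sub q).eval₂ e t = q.eval₂ ε (fun i => (A i).eval₂ ε t / ε d₁) := by
      intro q
      have : (Polynomial.eval₂RingHom e t).comp sub =
          MvPolynomial.eval₂Hom ε (fun i => (A i).eval₂ ε t / ε d₁) := by
        apply MvPolynomial.ringHom_ext
        · intro r
          simp [sub, he]
        · intro i
          simp only [sub, RingHom.comp_apply, MvPolynomial.eval₂Hom_X', map_mul,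
            Polynomial.coe_eval₂RingHom, Polynomial.eval₂_C, Polynomial.eval₂_map, heS]
          rw [eq_div_iff hεd₁, ← he d₁, ← hud, mul_right_comm, ← map_mul, Units.inv_mul, map_one,
            one_mul]
      exact congrArg (fun g => g q) this
    constructor
    · intro q hq
      rw [← hsube]; exact main _ (by rw [hsubL]; exact hq)
    · have := main (sub Θ - Polynomial.X) (by
        rw [Polynomial.eval₂_sub, hsubL, Polynomial.eval₂_X, ← hθdef, sub_self])
      rw [Polynomial.eval₂_sub, hsube, Polynomial.eval₂_X, sub_eq_zero] at this
      exact this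

/-! ### The incidence relation of a system with free coefficients -/

section Incidence

variable {m J K : Type*} {S : J → Type*} [Fintype J] [∀ j, Fintype (S j)]
  [Field K] [Algebra ℂ K]

/-- The slots of the free coefficients: all coefficients except the pivots `(j, χ j)`, for which the
equations are solved. -/
abbrev FreeSlot (χ : ∀ j, S j) := {p : (j : J) × S j // p.2 ≠ χ p.1}

open Classical in
/-- The coefficients as free variables over `K`, with zero at the pivots. -/
noncomputable def freeCoord (K : Type*) [Field K] (χ : ∀ j, S j) (p : (j : J) × S j) :
    MvPolynomial (FreeSlot χ) K :=
  if h : p.2 ≠ χ p.1 then MvPolynomial.X ⟨p, h⟩ else 0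

open Classical in
/-- The universal solution: the coefficients off the pivots are free, and the pivot coefficient of
each equation `∑ a, c (j, a) * γ j a = b j` is determined by the others. -/
noncomputable def univCoeff (γ : ∀ j, S j → K) (b : J → ℂ) (χ : ∀ j, S j) (p : (j : J) × S j) :
    MvPolynomial (FreeSlot χ) K :=
  if p.2 ≠ χ p.1 then freeCoord K χ p else
    MvPolynomial.C (γ p.1 (χ p.1))⁻¹ * (MvPolynomial.C (algebraMap ℂ K (b p.1)) -
      ∑ a, freeCoord K χ ⟨p.1, a⟩ * MvPolynomial.C (γ p.1 a))

theorem univCoeff_free (γ : ∀ j, S j → K) (b : J → ℂ) (χ : ∀ j, S j) (p : FreeSlot χ) :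
    univCoeff γ b χ p.1 = MvPolynomial.X p := by
  simp [univCoeff, freeCoord, p.2]

theorem univCoeff_pivot (γ : ∀ j, S j → K) (b : J → ℂ) (χ : ∀ j, S j) (j : J) :
    univCoeff γ b χ ⟨j, χ j⟩ = MvPolynomial.C (γ j (χ j))⁻¹ *
      (MvPolynomial.C (algebraMap ℂ K (b j)) -
      ∑ a, freeCoord K χ ⟨j, a⟩ * MvPolynomial.C (γ j a)) := by
  simp [univCoeff]

theorem univCoeff_eq (γ : ∀ j, S j → K) (b : J → ℂ) (χ : ∀ j, S j) (hχ : ∀ j, γ j (χ j) ≠ 0)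
    (j : J) : ∑ a, univCoeff γ b χ ⟨j, a⟩ * MvPolynomial.C (γ j a) =
      MvPolynomial.C (algebraMap ℂ K (b j)) := by
  classical
  have h1 : ∀ a, univCoeff γ b χ ⟨j, a⟩ * MvPolynomial.C (γ j a) =
      freeCoord K χ ⟨j, a⟩ * MvPolynomial.C (γ j a) + (if a = χ j then
      MvPolynomial.C (algebraMap ℂ K (b j)) -
        ∑ a, freeCoord K χ ⟨j, a⟩ * MvPolynomial.C (γ j a) else 0) := by
    intro a
    by_cases h : a = χ j
    · subst h
      have h2 : (freeCoord K χ ⟨j, χ j⟩) = 0 := by simp [freeCoord]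
      rw [if_pos rfl, univCoeff_pivot, mul_right_comm, ← map_mul, inv_mul_cancel₀ (hχ j), map_one,
        one_mul, h2, zero_mul, zero_add]
    · rw [if_neg h, add_zero]
      simp [univCoeff, h]
  rw [Finset.sum_congr rfl fun a _ => h1 a, Finset.sum_add_distrib]
  simp

/-- any solution over `K` is a specialisation of the universal one -/
theorem univCoeff_spec (γ : ∀ j, S j → K) (b : J → ℂ) (χ : ∀ j, S j) (hχ : ∀ j, γ j (χ j) ≠ 0)
    {T : Type*} [CommRing T] [IsDomain T] (φ : K →+* T)
    (h : (j : J) × S j → T) (hh : ∀ j, ∑ a, h ⟨j, a⟩ * φ (γ j a) = φ (algebraMap ℂ K (b j)))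
    (p : (j : J) × S j) :
    (univCoeff γ b χ p).eval₂ φ (fun p => h p.1) = h p := by
  classical
  by_cases hp : p.2 ≠ χ p.1
  · rw [univCoeff_free γ b χ ⟨p, hp⟩, MvPolynomial.eval₂_X]
  · push Not at hp
    obtain ⟨j, a⟩ := p
    simp only at hp
    subst hp
    have hne : φ (γ j (χ j)) ≠ 0 := (map_ne_zero_iff φ φ.injective).mpr (hχ j)
    have h3 := congrArg (MvPolynomial.eval₂Hom φ (fun p : FreeSlot χ => h p.1))
      (univCoeff_eq γ b χ hχ j)
    simp only [map_sum, map_mul, MvPolynomial.eval₂Hom_C] at h3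
    rw [← hh, ← sub_eq_zero, ← Finset.sum_sub_distrib, Finset.sum_eq_single (χ j)] at h3
    · rw [← sub_mul] at h3
      exact sub_eq_zero.mp ((mul_eq_zero.mp h3).resolve_right hne)
    · intro a _ ha
      rw [univCoeff_free γ b χ ⟨⟨j, a⟩, ha⟩]
      simp
    · simp


/-- The pullback of functions along the projection of the incidence variety to the space of
coefficients. -/
noncomputable def univMap (γ : ∀ j, S j → K) (b : J → ℂ) (χ : ∀ j, S j) :
    MvPolynomial ((j : J) × S j) ℂ →+* MvPolynomial (FreeSlot χ) K :=
  MvPolynomial.eval₂Hom (MvPolynomial.C.comp (algebraMap ℂ K)) (univCoeff γ b χ)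

/-- `(c, v)` is a zero of all polynomial relations between the universal coefficients and the
coordinates of the generic point of the cone. -/
def IncZero (γ : ∀ j, S j → K) (b : J → ℂ) (χ : ∀ j, S j) (π : MvPolynomial m ℂ →ₐ[ℂ] K)
    (c : (j : J) × S j → ℂ) (v : m → ℂ) : Prop :=
  ∀ q : MvPolynomial m (MvPolynomial ((j : J) × S j) ℂ),
    q.eval₂ (univMap γ b χ) (fun i => MvPolynomial.C (π (MvPolynomial.X i))) = 0 →
    q.eval₂ (MvPolynomial.eval c) v = 0

theorem eval₂_map_C (γ : ∀ j, S j → K) (b : J → ℂ) (χ : ∀ j, S j) (π : MvPolynomial m ℂ →ₐ[ℂ] K)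
    (f : MvPolynomial m ℂ) :
    (MvPolynomial.map (MvPolynomial.C : ℂ →+* MvPolynomial ((j : J) × S j) ℂ) f).eval₂
      (univMap γ b χ) (fun i => MvPolynomial.C (π (MvPolynomial.X i))) = MvPolynomial.C (π f) := by
  have : (MvPolynomial.eval₂Hom (univMap γ b χ) (fun i => MvPolynomial.C (π (MvPolynomial.X i)))).comp
      (MvPolynomial.map (MvPolynomial.C : ℂ →+* MvPolynomial ((j : J) × S j) ℂ)) =
      (MvPolynomial.C : K →+* MvPolynomial (FreeSlot χ) K).comp (π : MvPolynomial m ℂ →+* K) := by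
    apply MvPolynomial.ringHom_ext
    · intro r
      have := π.commutes r
      rw [MvPolynomial.algebraMap_eq] at this
      simp [univMap, this]
    · intro i; simp
  exact congrArg (fun h => h f) this

omit [Fintype J] [∀ j, Fintype (S j)] in
theorem eval₂_map_C_eval (c : (j : J) × S j → ℂ) (v : m → ℂ)
    (f : MvPolynomial m ℂ) :
    (MvPolynomial.map (MvPolynomial.C : ℂ →+* MvPolynomial ((j : J) × S j) ℂ) f).eval₂
      (MvPolynomial.eval c) v = MvPolynomial.eval v f := by
  rw [MvPolynomial.eval₂_map]
  have : (MvPolynomial.eval c).comp MvPolynomial.C = RingHom.id ℂ := by ext; simp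
  rw [this, MvPolynomial.eval₂_id]

/-- The zeros of all relations lie on the cone and satisfy the equations. -/
theorem IncZero.sound {γ : ∀ j, S j → K} {b : J → ℂ} {χ : ∀ j, S j} (hχ : ∀ j, γ j (χ j) ≠ 0)
    {π : MvPolynomial m ℂ →ₐ[ℂ] K} {g : ∀ j, S j → MvPolynomial m ℂ}
    (hg : ∀ j a, γ j a = π (g j a))
    {c : (j : J) × S j → ℂ} {v : m → ℂ} (h : IncZero γ b χ π c v) :
    (∀ f, π f = 0 → MvPolynomial.eval v f = 0) ∧
    ∀ j, ∑ a, c ⟨j, a⟩ * MvPolynomial.eval v (g j a) = b j := by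
  constructor
  · intro f hf
    rw [← eval₂_map_C_eval c]
    exact h _ (by rw [eval₂_map_C, hf, map_zero])
  · intro j
    have := h (∑ a, MvPolynomial.C (MvPolynomial.X ⟨j, a⟩) * MvPolynomial.map MvPolynomial.C (g j a)
      - MvPolynomial.C (MvPolynomial.C (b j))) (by
        rw [MvPolynomial.eval₂_sub, MvPolynomial.eval₂_sum]
        simp only [MvPolynomial.eval₂_mul, eval₂_map_C, MvPolynomial.eval₂_C]
        rw [sub_eq_zero]
        have := univCoeff_eq γ b χ hχ j
        simp only [hg] at this
        simpa [univMap, hg] using this)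
    rw [MvPolynomial.eval₂_sub, MvPolynomial.eval₂_sum, sub_eq_zero] at this
    simpa only [MvPolynomial.eval₂_mul, eval₂_map_C_eval, MvPolynomial.eval₂_C,
      MvPolynomial.eval_X, MvPolynomial.eval_C] using this

/-- A point of the cone satisfying the equations is a zero of all relations, provided that in each
equation some coefficient has a nonzero multiplier at that point. A solution of the equations over
`K` whose coefficients are rational functions regular at `v` and specialise to `c` at `v` is a
specialisation of the universal solution, so every relation holds for it, and hence for `c` and `v`.
-/
theorem IncZero.complete {γ : ∀ j, S j → K} {b : J → ℂ} {χ : ∀ j, S j} (hχ : ∀ j, γ j (χ j) ≠ 0)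
    {π : MvPolynomial m ℂ →ₐ[ℂ] K} {g : ∀ j, S j → MvPolynomial m ℂ}
    (hg : ∀ j a, γ j a = π (g j a))
    {c : (j : J) × S j → ℂ} {v : m → ℂ} (hv : ∀ f, π f = 0 → MvPolynomial.eval v f = 0)
    (hc : ∀ j, ∑ a, c ⟨j, a⟩ * MvPolynomial.eval v (g j a) = b j)
    (hne : ∀ j, ∃ a, MvPolynomial.eval v (g j a) ≠ 0) : IncZero γ b χ π c v := by
  classical
  choose χ' hχ' using hne
  have hγ' : ∀ j, γ j (χ' j) ≠ 0 := fun j h => hχ' j (hv _ (by rw [← hg, h]))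
  -- a solution over `K` specialising to `c` at `v`
  let h : (j : J) × S j → K := fun p => algebraMap ℂ K (c p) + if p.2 = χ' p.1 then
    (algebraMap ℂ K (b p.1) - ∑ a, algebraMap ℂ K (c ⟨p.1, a⟩) * γ p.1 a) / γ p.1 (χ' p.1) else 0
  have hh : ∀ j, ∑ a, h ⟨j, a⟩ * RingHom.id K (γ j a) = RingHom.id K (algebraMap ℂ K (b j)) := by
    intro j
    simp only [h, add_mul, Finset.sum_add_distrib, RingHom.id_apply, ite_mul, zero_mul,
      Finset.sum_ite_eq', Finset.mem_univ, if_true]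
    rw [div_mul_cancel₀ _ (hγ' j)]
    ring
  -- pairs (rational function regular at `v`, its value at `v`)
  let P : Subring (K × ℂ) :=
    { carrier := {z | ∃ f s : MvPolynomial m ℂ, MvPolynomial.eval v s ≠ 0 ∧ z.1 * π s = π f ∧
        z.2 * MvPolynomial.eval v s = MvPolynomial.eval v f}
      mul_mem' := by
        rintro z w ⟨f, s, h1, h2, h3⟩ ⟨f', s', h1', h2', h3'⟩
        refine ⟨f * f', s * s', by simp [h1, h1'], ?_, ?_⟩
        · rw [map_mul, map_mul, ← h2, ← h2', Prod.fst_mul]; ring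
        · rw [map_mul, map_mul, ← h3, ← h3', Prod.snd_mul]; ring
      one_mem' := ⟨1, 1, by simp, by simp, by simp⟩
      add_mem' := by
        rintro z w ⟨f, s, h1, h2, h3⟩ ⟨f', s', h1', h2', h3'⟩
        refine ⟨f * s' + f' * s, s * s', by simp [h1, h1'], ?_, ?_⟩
        · simp only [map_mul, map_add, ← h2, ← h2', Prod.fst_add]; ring
        · simp only [map_mul, map_add, ← h3, ← h3', Prod.snd_add]; ring
      zero_mem' := ⟨0, 1, by simp, by simp, by simp⟩
      neg_mem' := by
        rintro z ⟨f, s, h1, h2, h3⟩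
        refine ⟨-f, s, h1, ?_, ?_⟩
        · simp only [map_neg, ← h2, Prod.fst_neg]; ring
        · simp only [map_neg, ← h3, Prod.snd_neg]; ring }
  have hP0 : ∀ w, ((0 : K), w) ∈ P → w = 0 := by
    rintro w ⟨f, s, h1, h2, h3⟩
    have : MvPolynomial.eval v f = 0 := hv f (by rw [← h2]; simp)
    rw [this] at h3
    exact (mul_eq_zero.mp h3).resolve_right h1
  have hPC : ∀ r : ℂ, (algebraMap ℂ K r, r) ∈ P := fun r =>
    ⟨MvPolynomial.C r, 1, by simp, by
      have := π.commutes r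
      rw [MvPolynomial.algebraMap_eq] at this
      simp [this], by simp⟩
  have hPg : ∀ f, (π f, MvPolynomial.eval v f) ∈ P := fun f => ⟨f, 1, by simp, by simp, by simp⟩
  have hPh : ∀ p, (h p, c p) ∈ P := by
    rintro ⟨j, a⟩
    have hK : ∀ r : ℂ, π (MvPolynomial.C r) = algebraMap ℂ K r := fun r => by
      have := π.commutes r
      rwa [MvPolynomial.algebraMap_eq] at this
    by_cases ha : a = χ' j
    · refine ⟨MvPolynomial.C (c ⟨j, a⟩) * g j (χ' j) + (MvPolynomial.C (b j) -
        ∑ a, MvPolynomial.C (c ⟨j, a⟩) * g j a), g j (χ' j), hχ' j, ?_, ?_⟩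
      · simp only [h, ha, if_true, map_add, map_mul, map_sub, map_sum, hK, ← hg]
        field_simp [hγ' j]
      · simp [hc]
    · simpa [h, ha] using hPC (c ⟨j, a⟩)
  intro q hq
  apply hP0
  -- the specialisation hom to `K × ℂ`
  let Ψ₁ : MvPolynomial ((j : J) × S j) ℂ →+* K × ℂ :=
    MvPolynomial.eval₂Hom ((algebraMap ℂ K).prod (RingHom.id ℂ)) (fun p => (h p, c p))
  let Ψ : MvPolynomial m (MvPolynomial ((j : J) × S j) ℂ) →+* K × ℂ :=
    MvPolynomial.eval₂Hom Ψ₁ (fun i => (π (MvPolynomial.X i), v i))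
  have hΨ₁ : ∀ r, Ψ₁ r ∈ P := by
    intro r
    induction r using MvPolynomial.induction_on with
    | C r => simpa [Ψ₁] using hPC r
    | add p q hp hq => rw [map_add]; exact P.add_mem hp hq
    | mul_X p i hp => rw [map_mul]; refine P.mul_mem hp ?_; simpa [Ψ₁] using hPh i
  have hΨ : ∀ r, Ψ r ∈ P := by
    intro r
    induction r using MvPolynomial.induction_on with
    | C r => simpa [Ψ] using hΨ₁ r
    | add p q hp hq => rw [map_add]; exact P.add_mem hp hq
    | mul_X p i hp =>
      rw [map_mul]; refine P.mul_mem hp ?_; simpa [Ψ] using hPg (MvPolynomial.X i)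
  have e2 : (RingHom.snd K ℂ).comp Ψ = MvPolynomial.eval₂Hom (MvPolynomial.eval c) v := by
    apply MvPolynomial.ringHom_ext
    · intro r
      have : (RingHom.snd K ℂ).comp Ψ₁ = MvPolynomial.eval c := by
        apply MvPolynomial.ringHom_ext <;> intro r <;> simp [Ψ₁]
      simpa [Ψ] using congrArg (fun h => h r) this
    · intro i; simp [Ψ]
  have e1 : (RingHom.fst K ℂ).comp Ψ = (MvPolynomial.eval₂Hom (RingHom.id K)
      (fun p : FreeSlot χ => h p.1)).comp (MvPolynomial.eval₂Hom (univMap γ b χ)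
        (fun i => MvPolynomial.C (π (MvPolynomial.X i)))) := by
    apply MvPolynomial.ringHom_ext
    · intro r
      have : (RingHom.fst K ℂ).comp Ψ₁ = (MvPolynomial.eval₂Hom (RingHom.id K)
          (fun p : FreeSlot χ => h p.1)).comp (univMap γ b χ) := by
        apply MvPolynomial.ringHom_ext
        · intro r; simp [Ψ₁, univMap]
        · intro p
          have := univCoeff_spec γ b χ hχ (RingHom.id K) h hh p
          rw [MvPolynomial.eval₂_id] at this
          simp [Ψ₁, univMap, this]
      simpa [Ψ] using congrArg (fun h => h r) this
    · intro i; simp [Ψ]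
  have h1 : (Ψ q).1 = 0 := by
    have := congrArg (fun h => h q) e1
    simp only [RingHom.comp_apply, RingHom.coe_fst, MvPolynomial.coe_eval₂Hom] at this
    rw [this, hq]; simp
  have h2 : (Ψ q).2 = q.eval₂ (MvPolynomial.eval c) v := congrArg (fun h => h q) e2
  have := hΨ q
  rw [← h2, ← h1]
  exact this

end Incidence

/-! ### The function field of the incidence variety -/

section IncField

variable {m J K : Type*} {S : J → Type*} [Fintype J] [∀ j, Fintype (S j)]
  [Field K] [Algebra ℂ K]

/-- The function field of the incidence variety: rational functions over `K` in the free
coefficients. The unused arguments fix the map from the polynomials in all coefficients. -/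
def IncField (_γ : ∀ j, S j → K) (_b : J → ℂ) (χ : ∀ j, S j) :=
  FractionRing (MvPolynomial (FreeSlot χ) K)

noncomputable instance (γ : ∀ j, S j → K) (b : J → ℂ) (χ : ∀ j, S j) : Field (IncField γ b χ) :=
  inferInstanceAs (Field (FractionRing (MvPolynomial (FreeSlot χ) K)))

noncomputable instance (γ : ∀ j, S j → K) (b : J → ℂ) (χ : ∀ j, S j) :
    Algebra (MvPolynomial (FreeSlot χ) K) (IncField γ b χ) :=
  inferInstanceAs (Algebra _ (FractionRing (MvPolynomial (FreeSlot χ) K)))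

instance (γ : ∀ j, S j → K) (b : J → ℂ) (χ : ∀ j, S j) :
    IsFractionRing (MvPolynomial (FreeSlot χ) K) (IncField γ b χ) :=
  inferInstanceAs (IsFractionRing _ (FractionRing (MvPolynomial (FreeSlot χ) K)))

noncomputable instance (γ : ∀ j, S j → K) (b : J → ℂ) (χ : ∀ j, S j) :
    Algebra K (IncField γ b χ) :=
  ((algebraMap (MvPolynomial (FreeSlot χ) K) (IncField γ b χ)).comp MvPolynomial.C).toAlgebra

noncomputable instance (γ : ∀ j, S j → K) (b : J → ℂ) (χ : ∀ j, S j) :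
    Algebra ℂ (IncField γ b χ) :=
  ((algebraMap K (IncField γ b χ)).comp (algebraMap ℂ K)).toAlgebra

noncomputable instance (γ : ∀ j, S j → K) (b : J → ℂ) (χ : ∀ j, S j) :
    Algebra (MvPolynomial ((j : J) × S j) ℂ) (IncField γ b χ) :=
  ((algebraMap (MvPolynomial (FreeSlot χ) K) (IncField γ b χ)).comp (univMap γ b χ)).toAlgebra

instance (γ : ∀ j, S j → K) (b : J → ℂ) (χ : ∀ j, S j) :
    IsScalarTower K (MvPolynomial (FreeSlot χ) K) (IncField γ b χ) :=
  IsScalarTower.of_algebraMap_eq (fun _ => rfl)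

instance (γ : ∀ j, S j → K) (b : J → ℂ) (χ : ∀ j, S j) :
    IsScalarTower ℂ K (IncField γ b χ) :=
  IsScalarTower.of_algebraMap_eq (fun _ => rfl)

instance (γ : ∀ j, S j → K) (b : J → ℂ) (χ : ∀ j, S j) :
    IsScalarTower ℂ (MvPolynomial ((j : J) × S j) ℂ) (IncField γ b χ) :=
  IsScalarTower.of_algebraMap_eq (fun r => by
    change _ = algebraMap (MvPolynomial (FreeSlot χ) K) (IncField γ b χ)
      (univMap γ b χ (MvPolynomial.C r))
    simp only [univMap, MvPolynomial.coe_eval₂Hom, MvPolynomial.eval₂_C]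
    rfl)

variable (γ : ∀ j, S j → K) (b : J → ℂ) (χ : ∀ j, S j)

theorem algebraMap_incField (q : MvPolynomial ((j : J) × S j) ℂ) :
    algebraMap _ (IncField γ b χ) q =
      algebraMap (MvPolynomial (FreeSlot χ) K) (IncField γ b χ) (univMap γ b χ q) := rfl

theorem incField_injective_iff :
    Function.Injective (algebraMap (MvPolynomial ((j : J) × S j) ℂ) (IncField γ b χ)) ↔
      Function.Injective (univMap γ b χ) := by
  have hi := IsFractionRing.injective (MvPolynomial (FreeSlot χ) K) (IncField γ b χ)
  constructor
  · intro h x y hxy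
    exact h (by rw [algebraMap_incField, algebraMap_incField, hxy])
  · intro h
    exact hi.comp h

/-- The coordinates of the generic point of the cone, in the function field of the incidence
variety. -/
noncomputable def incPoint (π : MvPolynomial m ℂ →ₐ[ℂ] K) (i : m) : IncField γ b χ :=
  algebraMap K _ (π (MvPolynomial.X i))

theorem incZero_iff (π : MvPolynomial m ℂ →ₐ[ℂ] K) (c : (j : J) × S j → ℂ) (v : m → ℂ) :
    IncZero γ b χ π c v ↔ ∀ q : MvPolynomial m (MvPolynomial ((j : J) × S j) ℂ),
      q.eval₂ (algebraMap _ (IncField γ b χ)) (incPoint γ b χ π) = 0 →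
      q.eval₂ (MvPolynomial.eval c) v = 0 := by
  have hi := IsFractionRing.injective (MvPolynomial (FreeSlot χ) K) (IncField γ b χ)
  refine forall_congr' fun q => ?_
  have : q.eval₂ (algebraMap _ (IncField γ b χ)) (incPoint γ b χ π) =
      algebraMap (MvPolynomial (FreeSlot χ) K) (IncField γ b χ)
        (q.eval₂ (univMap γ b χ) (fun i => MvPolynomial.C (π (MvPolynomial.X i)))) := by
    rw [MvPolynomial.eval₂_comp_left]
    rfl
  rw [this, map_eq_zero_iff _ hi]

omit [∀ j, Fintype (S j)] [Fintype J] in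
theorem card_freeSlot [Fintype ((j : J) × S j)] [Fintype J] [Fintype (FreeSlot χ)] :
    Fintype.card (FreeSlot χ) + Fintype.card J = Fintype.card ((j : J) × S j) := by
  classical
  have h := Fintype.card_subtype_compl (fun p : (j : J) × S j => p.2 = χ p.1)
  have h2 : Fintype.card {p : (j : J) × S j // p.2 = χ p.1} = Fintype.card J :=
    Fintype.card_congr
      { toFun := fun p => p.1.1
        invFun := fun j => ⟨⟨j, χ j⟩, rfl⟩
        left_inv := by rintro ⟨⟨j, a⟩, h⟩; simp only at h; subst h; rfl
        right_inv := fun j => rfl }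
  have h3 := Fintype.card_subtype_le (fun p : (j : J) × S j => p.2 = χ p.1)
  have h4 : Fintype.card (FreeSlot χ) = Fintype.card {p : (j : J) × S j // ¬ p.2 = χ p.1} :=
    Fintype.card_congr (Equiv.refl _)
  omega

variable {κ : Type*} [Fintype κ] {y : κ → K} (hy : IsTranscendenceBasis ℂ y)
include hy

/-- The free coefficients together with a transcendence basis of `K` form a transcendence basis of
the function field of the incidence variety. -/
theorem incField_basis : IsTranscendenceBasis ℂ (Sum.elim
    (fun p : FreeSlot χ => algebraMap (MvPolynomial (FreeSlot χ) K) (IncField γ b χ)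
      (MvPolynomial.X p)) (algebraMap K (IncField γ b χ) ∘ y)) := by
  have : Algebra.IsAlgebraic (MvPolynomial (FreeSlot χ) K) (IncField γ b χ) :=
    IsLocalization.isAlgebraic _ (nonZeroDivisors _)
  have h1 := (IsTranscendenceBasis.mvPolynomial (FreeSlot χ) K).algebraMap_comp
    (A := IncField γ b χ)
  exact hy.sumElim_comp h1

theorem incField_trdeg [Fintype (FreeSlot χ)] :
    Algebra.trdeg ℂ (IncField γ b χ) = (Fintype.card (FreeSlot χ) + Fintype.card κ : ℕ) := by
  have := (incField_basis γ b χ hy).lift_cardinalMk_eq_trdeg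
  rw [Cardinal.mk_fintype, Fintype.card_sum, Cardinal.lift_natCast] at this
  have h2 := Cardinal.lift_eq_nat_iff.mp this.symm
  exact h2

theorem algebraicIndependent_params
    (hinj : Function.Injective (algebraMap (MvPolynomial ((j : J) × S j) ℂ) (IncField γ b χ))) :
    AlgebraicIndependent ℂ (fun p => algebraMap (MvPolynomial ((j : J) × S j) ℂ)
      (IncField γ b χ) (MvPolynomial.X p)) :=
  (MvPolynomial.algebraicIndependent_X ((j : J) × S j) ℂ).map'
    (f := IsScalarTower.toAlgHom ℂ (MvPolynomial ((j : J) × S j) ℂ) (IncField γ b χ)) hinj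

theorem card_le_of_incField_injective
    (hinj : Function.Injective (algebraMap (MvPolynomial ((j : J) × S j) ℂ) (IncField γ b χ))) :
    Fintype.card J ≤ Fintype.card κ := by
  classical
  have h := (algebraicIndependent_params γ b χ hy hinj).lift_cardinalMk_le_trdeg
  rw [incField_trdeg γ b χ hy, Cardinal.mk_fintype, Cardinal.lift_natCast, Cardinal.lift_natCast,
    Nat.cast_le] at h
  have := card_freeSlot χ
  omega

/-- If the projection to the space of coefficients is dominant and the number of equations equals
the transcendence degree of `K`, then the projection is generically finite. -/
theorem incField_isAlgebraic
    (hinj : Function.Injective (algebraMap (MvPolynomial ((j : J) × S j) ℂ) (IncField γ b χ)))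
    (hcard : Fintype.card J = Fintype.card κ) (z : IncField γ b χ) :
    IsAlgebraic (MvPolynomial ((j : J) × S j) ℂ) z := by
  classical
  have : FaithfulSMul (MvPolynomial ((j : J) × S j) ℂ) (IncField γ b χ) :=
    (faithfulSMul_iff_algebraMap_injective _ _).mpr hinj
  obtain ⟨s, hs⟩ := exists_isTranscendenceBasis (MvPolynomial ((j : J) × S j) ℂ) (IncField γ b χ)
  -- adding a basis of `L` over the parameters to the parameters gives a basis over `ℂ`
  have h1 := (IsTranscendenceBasis.mvPolynomial ((j : J) × S j) ℂ).sumElim_comp hs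
  have h2 := h1.lift_cardinalMk_eq_trdeg
  rw [incField_trdeg γ b χ hy, Cardinal.lift_natCast] at h2
  have h3 : Cardinal.mk (s ⊕ (j : J) × S j) = ((Fintype.card (FreeSlot χ) + Fintype.card κ : ℕ) :
      Cardinal) := Cardinal.lift_eq_nat_iff.mp h2
  have : Finite (s ⊕ (j : J) × S j) := Cardinal.mk_lt_aleph0_iff.mp (by
    rw [h3]; exact Cardinal.natCast_lt_aleph0)
  have : Finite s := Finite.of_injective (Sum.inl : s → s ⊕ (j : J) × S j) Sum.inl_injective
  have : Fintype s := Fintype.ofFinite s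
  rw [Cardinal.mk_fintype, Fintype.card_sum, Nat.cast_inj] at h3
  have h4 := card_freeSlot χ
  have : IsEmpty s := Fintype.card_eq_zero_iff.mp (by omega)
  exact (hs.isEmpty_iff_isAlgebraic.mp this).isAlgebraic z

/-- With fewer equations than the transcendence degree of `K`, some coordinate of the generic point
is transcendental over the field of coefficients. -/
theorem exists_transcendental_incPoint (π : MvPolynomial m ℂ →ₐ[ℂ] K)
    (hπ : ∀ z, ∃ f s, π s ≠ 0 ∧ z = π f / π s)
    (hinj : Function.Injective (algebraMap (MvPolynomial ((j : J) × S j) ℂ) (IncField γ b χ)))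
    (hcard : Fintype.card J < Fintype.card κ) :
    ∃ i, ¬ IsAlgebraic (MvPolynomial ((j : J) × S j) ℂ) (incPoint γ b χ π i) := by
  classical
  by_contra! hall
  have : FaithfulSMul (MvPolynomial ((j : J) × S j) ℂ) (IncField γ b χ) :=
    (faithfulSMul_iff_algebraMap_injective _ _).mpr hinj
  let B := Subalgebra.algebraicClosure (MvPolynomial ((j : J) × S j) ℂ) (IncField γ b χ)
  have hinv : ∀ z ∈ B, z⁻¹ ∈ B := fun z hz => IsAlgebraic.inv (R := MvPolynomial _ ℂ) hz
  have hC : ∀ r : ℂ, algebraMap ℂ (IncField γ b χ) r ∈ B := fun r => by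
    rw [IsScalarTower.algebraMap_apply ℂ (MvPolynomial ((j : J) × S j) ℂ)]
    exact B.algebraMap_mem _
  have h1 : ∀ f, algebraMap K (IncField γ b χ) (π f) ∈ B := by
    intro f
    induction f using MvPolynomial.induction_on with
    | C r =>
      have := π.commutes r
      rw [MvPolynomial.algebraMap_eq] at this
      rw [this, ← IsScalarTower.algebraMap_apply]
      exact hC r
    | add p q hp hq => rw [map_add, map_add]; exact B.add_mem hp hq
    | mul_X p i hp => rw [map_mul, map_mul]; exact B.mul_mem hp (hall i)
  have h2 : ∀ z, algebraMap K (IncField γ b χ) z ∈ B := by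
    intro z
    obtain ⟨f, s, _, rfl⟩ := hπ z
    rw [map_div₀, div_eq_mul_inv]
    exact B.mul_mem (h1 f) (hinv _ (h1 s))
  have h3 : ∀ f, algebraMap (MvPolynomial (FreeSlot χ) K) (IncField γ b χ) f ∈ B := by
    intro f
    induction f using MvPolynomial.induction_on with
    | C r => exact h2 r
    | add p q hp hq => rw [map_add]; exact B.add_mem hp hq
    | mul_X p i hp =>
      rw [map_mul]; refine B.mul_mem hp ?_
      have : univMap γ b χ (MvPolynomial.X i.1) = MvPolynomial.X i := by
        simp [univMap, univCoeff_free]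
      rw [← this, ← algebraMap_incField]
      exact B.algebraMap_mem _
  have h4 : Algebra.IsAlgebraic (MvPolynomial ((j : J) × S j) ℂ) (IncField γ b χ) := by
    constructor
    intro z
    obtain ⟨f, s, _, rfl⟩ := IsFractionRing.div_surjective (A := MvPolynomial (FreeSlot χ) K) z
    rw [div_eq_mul_inv]
    exact B.mul_mem (h3 f) (hinv _ (h3 s))
  have h5 := (IsTranscendenceBasis.mvPolynomial ((j : J) × S j) ℂ).algebraMap_comp
    (A := IncField γ b χ)
  have h6 := h5.lift_cardinalMk_eq_trdeg
  rw [incField_trdeg γ b χ hy, Cardinal.mk_fintype, Cardinal.lift_natCast, Cardinal.lift_natCast,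
    Nat.cast_inj] at h6
  have := card_freeSlot χ
  omega

end IncField

/-! ### A criterion for dominance -/

section Indep

variable {m J K : Type*} {S : J → Type*} [Fintype J] [∀ j, Fintype (S j)]
  [Field K] [Algebra ℂ K]

/-- A criterion for dominance of the projection to the space of coefficients: it suffices that, for
one choice of constants for the free coefficients, the pivot coefficients become algebraically
independent. A relation `P` is restricted to a line through the chosen constants, and its term of
lowest order along the line would be a relation between the specialised pivots. -/
theorem univMap_injective_of_specialization (γ : ∀ j, S j → K) (b : J → ℂ) (χ : ∀ j, S j)
    (l : FreeSlot χ → ℂ)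
    (hind : AlgebraicIndependent ℂ (fun j => (univCoeff γ b χ ⟨j, χ j⟩).eval
      (fun p => algebraMap ℂ K (l p)))) : Function.Injective (univMap γ b χ) := by
  classical
  rw [injective_iff_map_eq_zero]
  intro P hP
  by_contra hP0
  obtain ⟨z, hz⟩ : ∃ z : (j : J) × S j → ℂ, MvPolynomial.eval z P ≠ 0 := by
    by_contra! h
    exact hP0 (MvPolynomial.funext (fun z => by simpa using h z))
  -- restrict to the line through `l` (at time `0`) and `z` (at time `1`)
  let ev : MvPolynomial (FreeSlot χ) K →+* Polynomial K := MvPolynomial.eval₂Hom Polynomial.C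
    (fun p => Polynomial.C (algebraMap ℂ K (l p)) +
      Polynomial.X * Polynomial.C (algebraMap ℂ K (z p.1 - l p)))
  let Qh : MvPolynomial ((j : J) × S j) ℂ →+* Polynomial (MvPolynomial J ℂ) :=
    MvPolynomial.eval₂Hom (Polynomial.C.comp MvPolynomial.C) (fun p =>
      if h : p.2 ≠ χ p.1 then Polynomial.C (MvPolynomial.C (l ⟨p, h⟩)) +
        Polynomial.X * Polynomial.C (MvPolynomial.C (z p - l ⟨p, h⟩))
      else Polynomial.C (MvPolynomial.X p.1))
  let θ₀ : MvPolynomial J ℂ →+* Polynomial K :=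
    MvPolynomial.eval₂Hom (Polynomial.C.comp (algebraMap ℂ K))
      (fun j => ev (univCoeff γ b χ ⟨j, χ j⟩))
  let θ : Polynomial (MvPolynomial J ℂ) →+* Polynomial K := Polynomial.eval₂RingHom θ₀ Polynomial.X
  have hcomp : θ.comp Qh = ev.comp (univMap γ b χ) := by
    apply MvPolynomial.ringHom_ext
    · intro r
      simp [θ, θ₀, Qh, univMap, ev]
    · intro p
      by_cases h : p.2 ≠ χ p.1
      · have h1 := univCoeff_free γ b χ ⟨p, h⟩
        simp only at h1
        simp [θ, θ₀, Qh, univMap, ev, h, h1]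
      · obtain ⟨j, a⟩ := p
        simp only [ne_eq, not_not] at h
        subst h
        simp [θ, θ₀, Qh, univMap]
  -- With pivots from `z` and parameter one, this is evaluation at `z`, where `P` does not vanish.
  have hone : (Polynomial.eval₂RingHom (MvPolynomial.eval (fun j => z ⟨j, χ j⟩)) 1).comp Qh =
      MvPolynomial.eval z := by
    apply MvPolynomial.ringHom_ext
    · intro r
      simp [Qh]
    · intro p
      by_cases h : p.2 ≠ χ p.1
      · simp [Qh, h]
      · obtain ⟨j, a⟩ := p
        simp only [ne_eq, not_not] at h
        subst h
        simp [Qh]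
  have hQ0 : Qh P ≠ 0 := by
    intro h
    apply hz
    rw [← hone, RingHom.comp_apply, h, map_zero]
  -- Divide by the largest power of the line parameter and then set the parameter to zero.
  obtain ⟨Q', hQ', hnd⟩ := Polynomial.exists_eq_pow_rootMultiplicity_mul_and_not_dvd (Qh P) hQ0 0
  rw [Polynomial.C_0, sub_zero] at hQ' hnd
  rw [Polynomial.X_dvd_iff] at hnd
  have h1 : θ (Qh P) = 0 := by
    rw [← RingHom.comp_apply, hcomp, RingHom.comp_apply, hP, map_zero]
  rw [hQ', map_mul, map_pow] at h1
  have h2 : θ Q' = 0 := by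
    refine (mul_eq_zero.mp h1).resolve_left (pow_ne_zero _ ?_)
    simp [θ]
  have h3 : (Polynomial.evalRingHom (0 : K)).comp θ =
      (MvPolynomial.aeval (fun j => (univCoeff γ b χ ⟨j, χ j⟩).eval
        (fun p => algebraMap ℂ K (l p))) : MvPolynomial J ℂ →ₐ[ℂ] K).toRingHom.comp
        Polynomial.constantCoeff := by
    apply Polynomial.ringHom_ext'
    · apply MvPolynomial.ringHom_ext
      · intro r
        simp [θ, θ₀]
      · intro j
        have h4 : (Polynomial.evalRingHom (0 : K)).comp ev =
            MvPolynomial.eval (fun p => algebraMap ℂ K (l p)) := by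
          apply MvPolynomial.ringHom_ext <;> intro r <;> simp [ev]
        have := congrArg (fun h => h (univCoeff γ b χ ⟨j, χ j⟩)) h4
        simpa [θ, θ₀] using this
    · simp [θ]
  apply hnd
  refine (injective_iff_map_eq_zero _).mp hind _ ?_
  have := congrArg (fun h => h Q') h3
  simp only [RingHom.comp_apply, h2, map_zero] at this
  exact this.symm

end Indep

/-! ### General fibres in complementary dimension -/

section Calculus
open Filter Topology

section Smooth

theorem contDiff_mvPolynomial_eval {α : Type*} [Fintype α] {n : WithTop ℕ∞} (q : MvPolynomial α ℂ) :
    ContDiff ℂ n (fun c : α → ℂ => MvPolynomial.eval c q) := by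
  induction q using MvPolynomial.induction_on with
  | C r => simpa using contDiff_const
  | add p q hp hq => simpa using hp.add hq
  | mul_X p i hp => simpa using hp.mul (contDiff_apply ℂ ℂ i)

theorem contDiff_polynomial_eval₂ {α : Type*} [Fintype α] {n : WithTop ℕ∞}
    (p : Polynomial (MvPolynomial α ℂ)) :
    ContDiff ℂ n (fun z : (α → ℂ) × ℂ => p.eval₂ (MvPolynomial.eval z.1) z.2) := by
  induction p using Polynomial.induction_on' with
  | add p q hp hq => simpa [Polynomial.eval₂_add] using hp.add hq
  | monomial n a =>
    simpa [Polynomial.eval₂_monomial] using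
      ((contDiff_mvPolynomial_eval a).comp contDiff_fst).mul (contDiff_snd.pow n)

theorem continuous_mvPolynomial_eval₂ {α m : Type*} [Fintype α] [Fintype m]
    (p : MvPolynomial m (MvPolynomial α ℂ)) :
    Continuous (fun z : (α → ℂ) × (m → ℂ) => p.eval₂ (MvPolynomial.eval z.1) z.2) := by
  induction p using MvPolynomial.induction_on with
  | C r =>
    simp only [MvPolynomial.eval₂_C]
    exact (contDiff_mvPolynomial_eval (n := 0) r).continuous.comp continuous_fst
  | add p q hp hq => simp only [MvPolynomial.eval₂_add]; exact hp.add hq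
  | mul_X p i hp =>
    simp only [MvPolynomial.eval₂_mul, MvPolynomial.eval₂_X]
    exact hp.mul ((continuous_apply i).comp continuous_snd)

theorem isInvertible_of_ne_zero (f : ℂ →L[ℂ] ℂ) (h : f 1 ≠ 0) : f.IsInvertible := by
  refine ⟨ContinuousLinearEquiv.unitsEquivAut ℂ (Units.mk0 _ h), ?_⟩
  ext
  simp

end Smooth

section Fibre

variable {m J K : Type*} {S : J → Type*} [Fintype J] [∀ j, Fintype (S j)]
  [Field K] [Algebra ℂ K]

/-- The points of the cone, the zero set of the kernel of `π`, that satisfy the equations with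
coefficients `c` and right-hand sides `b`; this is the fibre of the incidence variety over `c`. -/
def incFibre (π : MvPolynomial m ℂ →ₐ[ℂ] K) (g : ∀ j, S j → MvPolynomial m ℂ) (b : J → ℂ)
    (c : (j : J) × S j → ℂ) : Set (m → ℂ) :=
  {v | (∀ f, π f = 0 → MvPolynomial.eval v f = 0) ∧
    ∀ j, ∑ a, c ⟨j, a⟩ * MvPolynomial.eval v (g j a) = b j}

/-- Nondegeneracy of the incidence data: `K` is the field of fractions of the image of `π`, the
pivot polynomials are nonzero on the cone, and at no point of a fibre do all polynomials of an
equation vanish. -/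
structure IncGood (π : MvPolynomial m ℂ →ₐ[ℂ] K) (g : ∀ j, S j → MvPolynomial m ℂ) (b : J → ℂ)
    (χ : ∀ j, S j) : Prop where
  surj : ∀ z, ∃ f s, π s ≠ 0 ∧ z = π f / π s
  pivot : ∀ j, π (g j (χ j)) ≠ 0
  ne : ∀ c, ∀ v ∈ incFibre π g b c, ∀ j, ∃ a, MvPolynomial.eval v (g j a) ≠ 0

variable {π : MvPolynomial m ℂ →ₐ[ℂ] K} {g : ∀ j, S j → MvPolynomial m ℂ} {b : J → ℂ}
  {χ : ∀ j, S j}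

theorem IncGood.mem_iff (H : IncGood π g b χ) (c : (j : J) × S j → ℂ) (v : m → ℂ) :
    v ∈ incFibre π g b c ↔ IncZero (fun j a => π (g j a)) b χ π c v :=
  ⟨fun h => IncZero.complete (γ := fun j a => π (g j a)) (g := g) H.pivot (fun _ _ => rfl) h.1 h.2
      (H.ne c v h),
    fun h => IncZero.sound (γ := fun j a => π (g j a)) (g := g) H.pivot (fun _ _ => rfl) h⟩

theorem IncGood.mem_iff' (H : IncGood π g b χ) (c : (j : J) × S j → ℂ) (v : m → ℂ) :
    v ∈ incFibre π g b c ↔ ∀ q : MvPolynomial m (MvPolynomial ((j : J) × S j) ℂ),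
      q.eval₂ (algebraMap _ (IncField (fun j a => π (g j a)) b χ))
        (incPoint (fun j a => π (g j a)) b χ π) = 0 →
      q.eval₂ (MvPolynomial.eval c) v = 0 := by
  rw [H.mem_iff, incZero_iff]

/-- If the projection to the space of coefficients is not dominant, its general fibre is empty. -/
theorem IncGood.empty_of_not_injective (H : IncGood π g b χ)
    (hinj : ¬ Function.Injective (univMap (fun j a => π (g j a)) b χ)) :
    ∃ f : MvPolynomial ((j : J) × S j) ℂ, f ≠ 0 ∧ ∀ c, MvPolynomial.eval c f ≠ 0 →
      incFibre π g b c = ∅ := by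
  rw [injective_iff_map_eq_zero] at hinj
  push Not at hinj
  obtain ⟨f, hf, hf0⟩ := hinj
  refine ⟨f, hf0, fun c hc => Set.eq_empty_iff_forall_notMem.mpr fun v hv => hc ?_⟩
  rw [H.mem_iff] at hv
  simpa using hv (MvPolynomial.C f) (by simpa using congrArg id hf)

/-- The members of the family of sets `Φ` near `c₀` are, locally around each point of `Φ c₀`, single
points depending differentiably on the parameter. -/
def SmoothAt {E m : Type*} [NormedAddCommGroup E] [NormedSpace ℂ E] [Fintype m]
    (Φ : E → Set (m → ℂ)) (c₀ : E) : Prop :=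
  ∀ v₀ ∈ Φ c₀, ∃ X : E → (m → ℂ), (∃ X', HasStrictFDerivAt (𝕜 := ℂ) X X' c₀) ∧ X c₀ = v₀ ∧
    ∀ᶠ z in 𝓝 (c₀, v₀), z.2 ∈ Φ z.1 ↔ z.2 = X z.1

variable {κ : Type*} [Fintype κ] {y : κ → K} [Fintype m]

/-- With as many equations as the transcendence degree of `K`, the general fibre is finite, of
constant cardinality, and depends differentiably on the coefficients. It is nonempty if the
projection is dominant. -/
theorem IncGood.finite (H : IncGood π g b χ) (hy : IsTranscendenceBasis ℂ y)
    (hcard : Fintype.card J = Fintype.card κ) :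
    ∃ (N : ℕ) (f : MvPolynomial ((j : J) × S j) ℂ), f ≠ 0 ∧
      (Function.Injective (univMap (fun j a => π (g j a)) b χ) → 0 < N) ∧
      ∀ c, MvPolynomial.eval c f ≠ 0 → (incFibre π g b c).Finite ∧
        (incFibre π g b c).ncard = N ∧ SmoothAt (incFibre π g b) c := by
  by_cases hinj : Function.Injective (univMap (fun j a => π (g j a)) b χ)
  swap
  · obtain ⟨f, hf, h⟩ := H.empty_of_not_injective hinj
    refine ⟨0, f, hf, fun h => absurd h hinj, fun c hc => ?_⟩
    rw [h c hc]
    exact ⟨Set.finite_empty, Set.ncard_empty _, fun v₀ hv₀ => by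
      rw [h c hc] at hv₀; exact hv₀.elim⟩
  have hinj' := (incField_injective_iff _ b χ).mpr hinj
  obtain ⟨f, p, Θ, A, hf, hdeg, hmodel⟩ := exists_generic_fibre_model hinj'
    (incPoint (fun j a => π (g j a)) b χ π) (fun i => incField_isAlgebraic _ b χ hy hinj' hcard _)
  refine ⟨p.natDegree, f, hf, fun _ => hdeg, fun c hc => ?_⟩
  obtain ⟨h1, h2, h3, h4⟩ := hmodel (MvPolynomial.eval c) hc
  -- the fibre is the image of the roots of a separable polynomial
  have hbij : Set.BijOn (fun v => Θ.eval₂ (MvPolynomial.eval c) v) (incFibre π g b c)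
      {θ | p.eval₂ (MvPolynomial.eval c) θ = 0} := by
    refine ⟨fun v hv => (h3 v ((H.mem_iff' c v).mp hv)).1, fun v hv w hw hvw => ?_, fun θ hθ => ?_⟩
    · funext i
      have e1 := (h3 v ((H.mem_iff' c v).mp hv)).2 i
      have e2 := (h3 w ((H.mem_iff' c w).mp hw)).2 i
      simp only at hvw
      rw [hvw, ← e2] at e1
      exact mul_left_cancel₀ hc e1
    · exact ⟨_, (H.mem_iff' c _).mpr (h4 θ hθ).1, (h4 θ hθ).2⟩
  have hp0 : p.map (MvPolynomial.eval c) ≠ 0 := by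
    intro h
    rw [h, Polynomial.natDegree_zero] at h1
    omega
  have hroots : {θ | p.eval₂ (MvPolynomial.eval c) θ = 0} =
      ((p.map (MvPolynomial.eval c)).roots.toFinset : Set ℂ) := by
    ext θ
    simp [hp0, Polynomial.IsRoot, Polynomial.eval_map]
  have hfin : (incFibre π g b c).Finite := by
    rw [hbij.finite_iff_finite, hroots]
    exact Finset.finite_toSet _
  refine ⟨hfin, ?_, ?_⟩
  · rw [← h1, ← hbij.injOn.ncard_image, hbij.image_eq, hroots, Set.ncard_coe_finset]
    rw [Multiset.toFinset_card_of_nodup]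
    · exact (IsAlgClosed.splits _).natDegree_eq_card_roots.symm
    · rw [Multiset.nodup_iff_count_le_one]
      intro θ
      rw [Polynomial.count_roots]
      by_contra! hlt
      obtain ⟨r1, r2⟩ := (Polynomial.one_lt_rootMultiplicity_iff_isRoot hp0).mp hlt
      rw [Polynomial.IsRoot, Polynomial.eval_map] at r1
      rw [Polynomial.derivative_map, Polynomial.IsRoot, Polynomial.eval_map] at r2
      exact h2 θ r1 r2
  · intro v₀ hv₀
    set F : ((j : J) × S j → ℂ) × ℂ → ℂ := fun z => p.eval₂ (MvPolynomial.eval z.1) z.2 with hF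
    set θ₀ := Θ.eval₂ (MvPolynomial.eval c) v₀ with hθ₀
    have hF0 : F (c, θ₀) = 0 := hbij.mapsTo hv₀
    have hFd : HasStrictFDerivAt F (fderiv ℂ F (c, θ₀)) (c, θ₀) :=
      ((contDiff_polynomial_eval₂ (n := 1) p).contDiffAt).hasStrictFDerivAt (by simp)
    have hinv : (fderiv ℂ F (c, θ₀) ∘L .inr ℂ ((j : J) × S j → ℂ) ℂ).IsInvertible := by
      apply isInvertible_of_ne_zero
      have e1 : HasFDerivAt (fun θ => F (c, θ)) (fderiv ℂ F (c, θ₀) ∘L .inr ℂ _ ℂ) θ₀ :=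
        hFd.hasFDerivAt.comp θ₀ (hasFDerivAt_prodMk_right c θ₀)
      have e2 : HasDerivAt (fun θ => F (c, θ)) ((Polynomial.derivative p).eval₂
          (MvPolynomial.eval c) θ₀) θ₀ := by
        have := (p.map (MvPolynomial.eval c)).hasDerivAt θ₀
        simpa only [Polynomial.derivative_map, Polynomial.eval_map] using this
      rw [e1.hasDerivAt.unique e2]
      exact h2 _ hF0
    set ϑ := hFd.implicitFunctionOfProdDomain hinv with hϑ
    have hϑd : HasStrictFDerivAt ϑ _ c :=
      hFd.hasStrictFDerivAt_implicitFunctionOfProdDomain hinv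
    have hiff := hFd.eventually_apply_eq_iff_implicitFunctionOfProdDomain hinv
    rw [hF0] at hiff
    have hϑ0 : ϑ c = θ₀ := hiff.self_of_nhds.mp hF0
    have hXd : ∀ i, ∃ X', HasStrictFDerivAt (𝕜 := ℂ)
        (fun c => (A i).eval₂ (MvPolynomial.eval c) (ϑ c) / MvPolynomial.eval c f) X' c := by
      intro i
      have e1 := ((contDiff_polynomial_eval₂ (n := 1) (A i)).contDiffAt
        (x := (c, ϑ c))).hasStrictFDerivAt (by simp)
      have e2 := ((contDiff_mvPolynomial_eval (n := 1) f).contDiffAt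
        (x := c)).hasStrictFDerivAt (by simp)
      have e3 := e1.comp c ((hasStrictFDerivAt_id c).prodMk hϑd)
      have e4 := e3.mul ((hasStrictFDerivAt_inv hc).comp c e2)
      exact ⟨_, e4⟩
    choose X' hX' using hXd
    refine ⟨fun c i => (A i).eval₂ (MvPolynomial.eval c) (ϑ c) / MvPolynomial.eval c f,
      ⟨_, hasStrictFDerivAt_pi.mpr hX'⟩, ?_, ?_⟩
    · funext i
      have := (h3 v₀ ((H.mem_iff' c v₀).mp hv₀)).2 i
      simp only [hϑ0]
      rw [← this, mul_div_cancel_left₀ _ hc]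
    · have t1 : Tendsto (fun z : ((j : J) × S j → ℂ) × (m → ℂ) =>
          (z.1, Θ.eval₂ (MvPolynomial.eval z.1) z.2)) (𝓝 (c, v₀)) (𝓝 (c, θ₀)) :=
        (continuous_fst.prodMk (continuous_mvPolynomial_eval₂ Θ)).tendsto (c, v₀)
      have t2 : Tendsto (fun z : ((j : J) × S j → ℂ) × (m → ℂ) => (z.1, ϑ z.1))
          (𝓝 (c, v₀)) (𝓝 (c, θ₀)) := by
        rw [← hϑ0]
        exact (continuous_fst.continuousAt (x := (c, v₀))).prodMk
          (hϑd.continuousAt.comp_of_eq (continuous_fst.continuousAt (x := (c, v₀))) rfl)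
      have t3 : ∀ᶠ z : ((j : J) × S j → ℂ) × (m → ℂ) in 𝓝 (c, v₀), MvPolynomial.eval z.1 f ≠ 0 :=
        (((contDiff_mvPolynomial_eval (n := 0) f).continuous.comp
          continuous_fst).tendsto (c, v₀)).eventually_ne hc
      filter_upwards [t1.eventually hiff, t2.eventually hiff, t3] with z z1 z2 z3
      obtain ⟨-, -, m3, m4⟩ := hmodel (MvPolynomial.eval z.1) z3
      constructor
      · intro hz
        obtain ⟨n1, n2⟩ := m3 _ ((H.mem_iff' _ _).mp hz)
        funext i
        have : ϑ z.1 = _ := z1.mp n1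
        rw [this]
        exact eq_div_of_mul_eq z3 (by rw [mul_comm]; exact n2 i)
      · intro hz
        rw [hz, H.mem_iff']
        exact (m4 _ (z2.mpr rfl)).1

end Fibre

end Calculus

/-! ### General fibres in the other dimensions -/

section Positive

/-- If some coordinate of the generic point is transcendental over the field of coefficients, then
the general fibre is infinite. A transcendence basis `u` made of coordinates and containing the
given one is adjoined to the coefficients, which reduces to the generically finite case; a finite
fibre is contradicted by choosing values of the basis coordinates different from those at its
points. -/
theorem infinite_fibre_of_transcendental {α m L : Type*} [Field L] [Fintype m]
    [Algebra (MvPolynomial α ℂ) L]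
    (hinj : Function.Injective (algebraMap (MvPolynomial α ℂ) L)) (x : m → L) (i₀ : m)
    (hi₀ : ¬ IsAlgebraic (MvPolynomial α ℂ) (x i₀)) :
    ∃ f : MvPolynomial α ℂ, f ≠ 0 ∧ ∀ c, MvPolynomial.eval c f ≠ 0 →
      {v : m → ℂ | ∀ q : MvPolynomial m (MvPolynomial α ℂ), q.eval₂ (algebraMap _ L) x = 0 →
        q.eval₂ (MvPolynomial.eval c) v = 0}.Infinite := by
  classical
  have : FaithfulSMul (MvPolynomial α ℂ) L := (faithfulSMul_iff_algebraMap_injective _ _).mpr hinj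
  obtain ⟨u, hu0, ⟨hu, hux⟩, humax⟩ := exists_maximal_algebraicIndependent
    (R := MvPolynomial α ℂ) {x i₀} (Set.range x) (by simp)
    (by
      rw [AlgebraicIndepOn, algebraicIndependent_unique_type_iff]
      simpa [Transcendental, default] using hi₀)
  choose τ hτ using fun z : u => hux z.2
  let z₀ : u := ⟨x i₀, hu0 rfl⟩
  let algR' : Algebra (MvPolynomial u (MvPolynomial α ℂ)) L := (MvPolynomial.aeval (fun z : u => z.1)).toRingHom.toAlgebra
  have halg' : ∀ q : (MvPolynomial u (MvPolynomial α ℂ)), algebraMap (MvPolynomial u (MvPolynomial α ℂ)) L q = MvPolynomial.aeval (fun z : u => z.1) q := fun _ => rfl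
  have hR' : Function.Injective (algebraMap (MvPolynomial u (MvPolynomial α ℂ)) L) := hu
  -- By maximality of `u` the other coordinates are algebraic over it.
  have hxalg : ∀ i, IsAlgebraic (MvPolynomial u (MvPolynomial α ℂ)) (x i) := by
    intro i
    by_cases hi : x i ∈ u
    · have : x i = algebraMap (MvPolynomial u (MvPolynomial α ℂ)) L (MvPolynomial.X ⟨x i, hi⟩) := by simp [halg']
      rw [this]; exact isAlgebraic_algebraMap _
    · have h1 : ¬ AlgebraicIndepOn (MvPolynomial α ℂ) id (insert (x i) u) := fun h =>
        hi (humax ⟨h, Set.insert_subset ⟨i, rfl⟩ hux⟩ (Set.subset_insert _ _) (Set.mem_insert _ _))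
      rw [AlgebraicIndepOn.insert_iff hi] at h1
      have h2 : IsAlgebraic (Algebra.adjoin (MvPolynomial α ℂ) (id '' u)) (x i) := by
        by_contra h3
        exact h1 ⟨hu, h3⟩
      rw [Set.image_id] at h2
      let F : (MvPolynomial u (MvPolynomial α ℂ)) →ₐ[MvPolynomial α ℂ] Algebra.adjoin (MvPolynomial α ℂ) u :=
        MvPolynomial.aeval (fun z : u => ⟨z.1, Algebra.subset_adjoin z.2⟩)
      have hF : ∀ q, (F q : L) = algebraMap (MvPolynomial u (MvPolynomial α ℂ)) L q := by
        intro q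
        rw [halg']
        have := MvPolynomial.comp_aeval_apply (fun z : u => (⟨z.1, Algebra.subset_adjoin z.2⟩ :
          Algebra.adjoin (MvPolynomial α ℂ) u)) (Algebra.adjoin (MvPolynomial α ℂ) u).val q
        exact this
      refine IsAlgebraic.of_ringHom_of_comp_eq (f := F.toRingHom) (g := RingHom.id L)
        (S := Algebra.adjoin (MvPolynomial α ℂ) u) (a := x i) h2 ?_ Function.injective_id ?_
      · rintro ⟨z, hz⟩
        have hz' := hz
        rw [← Subtype.range_val (s := u), Algebra.adjoin_range_eq_range_aeval] at hz'
        obtain ⟨q, hq⟩ := hz'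
        exact ⟨q, Subtype.ext ((hF q).trans hq)⟩
      · exact RingHom.ext fun q => hF q
  have : CharZero (MvPolynomial u (MvPolynomial α ℂ)) := inferInstance
  obtain ⟨f', p, Θ, A, hf', hdeg, hmodel⟩ := exists_generic_fibre_model hR' x hxalg
  obtain ⟨s, hs⟩ := MvPolynomial.ne_zero_iff.mp hf'
  refine ⟨MvPolynomial.coeff s f', hs, fun c hc hfin => ?_⟩
  have hfc : MvPolynomial.map (MvPolynomial.eval c) f' ≠ 0 :=
    MvPolynomial.ne_zero_iff.mpr ⟨s, by rwa [MvPolynomial.coeff_map]⟩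
  have hG : MvPolynomial.map (MvPolynomial.eval c) f' *
      ∏ v ∈ hfin.toFinset, (MvPolynomial.X z₀ - MvPolynomial.C (v (τ z₀))) ≠ 0 := by
    refine mul_ne_zero hfc (Finset.prod_ne_zero_iff.mpr fun v _ h => ?_)
    have := congrArg (MvPolynomial.eval (fun _ => v (τ z₀) + 1)) h
    simp at this
  -- Values of the basis coordinates at which `f'` does not vanish, different from those at the
  -- points of the supposedly finite fibre.
  obtain ⟨y, hy⟩ : ∃ y : u → ℂ, MvPolynomial.eval y (MvPolynomial.map (MvPolynomial.eval c) f' *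
      ∏ v ∈ hfin.toFinset, (MvPolynomial.X z₀ - MvPolynomial.C (v (τ z₀)))) ≠ 0 := by
    have hufin : Finite u := Set.Finite.subset (Set.finite_range x) hux
    by_contra! h
    exact hG (MvPolynomial.funext fun y => by simpa using h y)
  rw [map_mul, map_prod] at hy
  obtain ⟨hy1, hy2⟩ := mul_ne_zero_iff.mp hy
  rw [Finset.prod_ne_zero_iff] at hy2
  set ε : (MvPolynomial u (MvPolynomial α ℂ)) →+* ℂ := (MvPolynomial.eval y).comp (MvPolynomial.map (MvPolynomial.eval c)) with hε
  have hεC : ∀ r, ε (MvPolynomial.C r) = MvPolynomial.eval c r := fun r => by simp [hε]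
  have hεX : ∀ z, ε (MvPolynomial.X z) = y z := fun r => by simp [hε]
  obtain ⟨h1, -, -, h4⟩ := hmodel ε hy1
  obtain ⟨θ, hθ⟩ := IsAlgClosed.exists_root (p.map ε) (by
    have := Polynomial.natDegree_pos_iff_degree_pos.mp (h1 ▸ hdeg)
    exact this.ne')
  rw [Polynomial.IsRoot, Polynomial.eval_map] at hθ
  obtain ⟨hv, -⟩ := h4 θ hθ
  set v : m → ℂ := fun i => (A i).eval₂ ε θ / ε f' with hvdef
  have hvΦ : v ∈ hfin.toFinset := by
    rw [Set.Finite.mem_toFinset]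
    intro q hq
    have := hv (MvPolynomial.map MvPolynomial.C q) (by
      rw [MvPolynomial.eval₂_map]
      convert hq using 2
      refine RingHom.ext fun r => by simp [halg'])
    rw [MvPolynomial.eval₂_map] at this
    convert this using 2
    exact RingHom.ext fun r => by simp [hεC]
  refine hy2 v hvΦ ?_
  have := hv (MvPolynomial.C (MvPolynomial.X z₀) - MvPolynomial.X (τ z₀)) (by
    simp [halg', hτ])
  rw [MvPolynomial.eval₂_sub, MvPolynomial.eval₂_C, MvPolynomial.eval₂_X, hεX] at this
  simpa using this

variable {m J K : Type*} {S : J → Type*} [Fintype J] [∀ j, Fintype (S j)]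
  [Field K] [Algebra ℂ K]
  {π : MvPolynomial m ℂ →ₐ[ℂ] K} {g : ∀ j, S j → MvPolynomial m ℂ} {b : J → ℂ}
  {χ : ∀ j, S j} {κ : Type*} [Fintype κ] {y : κ → K} [Fintype m]

theorem IncGood.empty_of_lt (H : IncGood π g b χ) (hy : IsTranscendenceBasis ℂ y)
    (hcard : Fintype.card κ < Fintype.card J) :
    ∃ f : MvPolynomial ((j : J) × S j) ℂ, f ≠ 0 ∧ ∀ c, MvPolynomial.eval c f ≠ 0 →
      incFibre π g b c = ∅ :=
  H.empty_of_not_injective fun h => absurd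
    (card_le_of_incField_injective _ b χ hy ((incField_injective_iff _ b χ).mpr h)) (by omega)

theorem IncGood.empty_or_infinite (H : IncGood π g b χ) (hy : IsTranscendenceBasis ℂ y)
    (hcard : Fintype.card J < Fintype.card κ) :
    ∃ f : MvPolynomial ((j : J) × S j) ℂ, f ≠ 0 ∧
      ((∀ c, MvPolynomial.eval c f ≠ 0 → incFibre π g b c = ∅) ∨
        ∀ c, MvPolynomial.eval c f ≠ 0 → (incFibre π g b c).Infinite) := by
  by_cases hinj : Function.Injective (univMap (fun j a => π (g j a)) b χ)
  swap
  · obtain ⟨f, hf, h⟩ := H.empty_of_not_injective hinj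
    exact ⟨f, hf, .inl h⟩
  have hinj' := (incField_injective_iff _ b χ).mpr hinj
  obtain ⟨i, hi⟩ := exists_transcendental_incPoint _ b χ hy π H.surj hinj' hcard
  obtain ⟨f, hf, h⟩ := infinite_fibre_of_transcendental hinj' _ i hi
  refine ⟨f, hf, .inr fun c hc => ?_⟩
  have : incFibre π g b c = _ := Set.ext fun v => H.mem_iff' c v
  rw [this]
  exact h c hc

end Positive

/-! ### Properties holding off a hypersurface -/

section ZariskiGeneric
open Filter Topology

/-- `P` holds off the zero set of a nonzero polynomial. -/
def ZGen {α : Type*} (P : (α → ℂ) → Prop) : Prop :=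
  ∃ f : MvPolynomial α ℂ, f ≠ 0 ∧ ∀ c, MvPolynomial.eval c f ≠ 0 → P c

variable {α β : Type*}

theorem ZGen.mono {P Q : (α → ℂ) → Prop} (h : ZGen P) (hPQ : ∀ c, P c → Q c) : ZGen Q := by
  obtain ⟨f, hf, h⟩ := h
  exact ⟨f, hf, fun c hc => hPQ c (h c hc)⟩

theorem ZGen.of_forall {P : (α → ℂ) → Prop} (h : ∀ c, P c) : ZGen P :=
  ⟨1, one_ne_zero, fun c _ => h c⟩

theorem ZGen.and {P Q : (α → ℂ) → Prop} (h : ZGen P) (h' : ZGen Q) :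
    ZGen (fun c => P c ∧ Q c) := by
  obtain ⟨f, hf, h⟩ := h
  obtain ⟨f', hf', h'⟩ := h'
  refine ⟨f * f', mul_ne_zero hf hf', fun c hc => ?_⟩
  rw [map_mul] at hc
  exact ⟨h c (left_ne_zero_of_mul hc), h' c (right_ne_zero_of_mul hc)⟩

theorem ZGen.finset_forall {T : Type*} {P : T → (α → ℂ) → Prop} (s : Finset T)
    (h : ∀ t ∈ s, ZGen (P t)) : ZGen (fun c => ∀ t ∈ s, P t c) := by
  classical
  induction s using Finset.induction_on with
  | empty => exact .of_forall (by simp)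
  | insert a s ha ih =>
    refine ((h a (by simp)).and (ih fun t ht => h t (by simp [ht]))).mono fun c hc t ht => ?_
    rcases Finset.mem_insert.mp ht with rfl | ht
    exacts [hc.1, hc.2 t ht]

theorem ZGen.forall {T : Type*} [Finite T] {P : T → (α → ℂ) → Prop} 
    (h : ∀ t, ZGen (P t)) : ZGen (fun c => ∀ t, P t c) := by
  have := Fintype.ofFinite T
  exact (ZGen.finset_forall Finset.univ fun t _ => h t).mono fun c hc t => hc t (Finset.mem_univ t)

theorem ZGen.exists [Finite α] {P : (α → ℂ) → Prop} (h : ZGen P) : ∃ c, P c := by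
  obtain ⟨f, hf, h⟩ := h
  by_contra! hP
  exact hf (MvPolynomial.funext fun c => by
    by_contra hc
    exact hP c (h c (by simpa using hc)))

theorem ZGen.comp_equiv {P : (α → ℂ) → Prop} (h : ZGen P) (e : α ≃ β) :
    ZGen (fun c : β → ℂ => P (c ∘ e)) := by
  obtain ⟨f, hf, h⟩ := h
  refine ⟨MvPolynomial.rename e f, fun h0 => hf ?_, fun c hc => h _ ?_⟩
  · exact MvPolynomial.rename_injective e e.injective (by simpa using h0)
  · rwa [MvPolynomial.eval_rename] at hc

theorem ZGen.comp_injective {P : (α → ℂ) → Prop} (h : ZGen P) (e : α → β)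
    (he : Function.Injective e) : ZGen (fun c : β → ℂ => P (c ∘ e)) := by
  obtain ⟨f, hf, h⟩ := h
  refine ⟨MvPolynomial.rename e f, fun h0 => hf ?_, fun c hc => h _ ?_⟩
  · exact MvPolynomial.rename_injective e he (by simpa using h0)
  · rwa [MvPolynomial.eval_rename] at hc

/-- If `P` holds for a general pair `(c, u)`, then for a general `c` it holds for a general `u`. -/
theorem ZGen.curry [Finite α] [Finite β] {P : (α ⊕ β → ℂ) → Prop} (h : ZGen P) :
    ZGen (fun c : α → ℂ => ZGen (fun u : β → ℂ => P (Sum.elim c u))) := by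
  have hex := ZGen.exists (P := fun c => ∃ f : MvPolynomial (α ⊕ β) ℂ, MvPolynomial.eval c f ≠ 0 ∧
    ∀ c, MvPolynomial.eval c f ≠ 0 → P c) (by
      obtain ⟨f, hf, h⟩ := h
      exact ⟨f, hf, fun c hc => ⟨f, hc, h⟩⟩)
  obtain ⟨c₀, f, hf, h⟩ := hex
  refine ⟨MvPolynomial.aeval (Sum.elim MvPolynomial.X fun b => MvPolynomial.C (c₀ (.inr b))) f,
    fun h0 => ?_, fun c hc => ⟨MvPolynomial.aeval (Sum.elim (fun a => MvPolynomial.C (c a))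
      MvPolynomial.X) f, fun h0 => ?_, fun u hu => h _ ?_⟩⟩
  · apply hf
    have := congrArg (MvPolynomial.eval (fun a => c₀ (.inl a))) h0
    rw [MvPolynomial.aeval_def, MvPolynomial.eval₂_comp_left, map_zero] at this
    convert this using 1
    rw [MvPolynomial.eval, MvPolynomial.coe_eval₂Hom]
    congr 1
    · ext; simp
    · funext p; cases p <;> simp
  · apply hc
    have := congrArg (MvPolynomial.eval (fun a => c₀ (.inr a))) h0
    rw [MvPolynomial.aeval_def, MvPolynomial.eval₂_comp_left, map_zero] at this
    rw [MvPolynomial.aeval_def, MvPolynomial.eval₂_comp_left]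
    convert this using 1
    congr 1
    · ext; simp
    · funext p; cases p <;> simp
  · convert hu using 1
    rw [MvPolynomial.aeval_def, MvPolynomial.eval₂_comp_left]
    rw [MvPolynomial.eval, MvPolynomial.coe_eval₂Hom]
    congr 1
    · ext; simp
    · funext p; cases p <;> simp

theorem continuous_mvPolynomial_eval (f : MvPolynomial α ℂ) :
    Continuous fun c : α → ℂ => MvPolynomial.eval c f :=
  MvPolynomial.continuous_eval f

/-- The complement of a hypersurface is open and dense. -/
theorem ZGen.generic [Finite α] {P : (α → ℂ) → Prop} (h : ZGen P) : Generic P := by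
  obtain ⟨f, hf, h⟩ := h
  refine ⟨{c | MvPolynomial.eval c f ≠ 0},
    isOpen_ne_fun (continuous_mvPolynomial_eval f) continuous_const, fun c₁ => ?_, h⟩
  -- move along a line towards a point where `f` does not vanish
  obtain ⟨c₀, hc₀⟩ : ∃ c₀, MvPolynomial.eval c₀ f ≠ 0 :=
    ZGen.exists ⟨f, hf, fun _ h => h⟩
  let p : Polynomial ℂ := MvPolynomial.aeval
    (fun a => Polynomial.C (c₁ a) + Polynomial.X * Polynomial.C (c₀ a - c₁ a)) f
  have hp : ∀ t, p.eval t = MvPolynomial.eval (fun a => c₁ a + t * (c₀ a - c₁ a)) f := by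
    intro t
    simp only [p, MvPolynomial.aeval_def]
    rw [← Polynomial.coe_evalRingHom, MvPolynomial.eval₂_comp_left, MvPolynomial.eval,
      MvPolynomial.coe_eval₂Hom]
    congr 1
    · ext; simp
    · funext a; simp
  have hp0 : p ≠ 0 := by
    intro h0
    have := hp 1
    rw [h0] at this
    simp at this
    exact hc₀ this.symm
  have hfin : {t | p.eval t = 0}.Finite := by
    have := Polynomial.finite_setOfPred_isRoot hp0
    exact this
  have hdense : Dense ({t | p.eval t = 0}ᶜ) := hfin.countable.dense_compl ℂ
  have hcont : Continuous fun t : ℂ => (fun a => c₁ a + t * (c₀ a - c₁ a)) := by fun_prop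
  rw [mem_closure_iff_nhds]
  intro U hU
  have hU' : (fun t : ℂ => (fun a => c₁ a + t * (c₀ a - c₁ a))) ⁻¹' U ∈ 𝓝 (0 : ℂ) :=
    hcont.continuousAt.preimage_mem_nhds (by simpa using hU)
  obtain ⟨t, ht, ht'⟩ := mem_closure_iff_nhds.mp (hdense 0) _ hU'
  exact ⟨_, ht, by rw [Set.mem_ofPred_eq, ← hp]; exact ht'⟩

theorem generic_and {α : Type*} [TopologicalSpace α] {P Q : α → Prop} (hP : Generic P)
    (hQ : Generic Q) : Generic (fun a => P a ∧ Q a) := by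
  obtain ⟨U, hU, hUd, h⟩ := hP
  obtain ⟨V, hV, hVd, h'⟩ := hQ
  exact ⟨U ∩ V, hU.inter hV, hUd.inter_of_isOpen_left hVd hU, fun a ha => ⟨h a ha.1, h' a ha.2⟩⟩

theorem generic_exists {α : Type*} [TopologicalSpace α] [Nonempty α] {P : α → Prop}
    (hP : Generic P) : ∃ a, P a := by
  obtain ⟨U, -, hUd, h⟩ := hP
  obtain ⟨a, ha⟩ := hUd.nonempty
  exact ⟨a, h a ha⟩

theorem generic_mono {α : Type*} [TopologicalSpace α] {P Q : α → Prop} (hP : Generic P)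
    (h : ∀ a, P a → Q a) : Generic Q := by
  obtain ⟨U, hU, hUd, h'⟩ := hP
  exact ⟨U, hU, hUd, fun a ha => h a (h' a ha)⟩

theorem generic_comp_homeomorph {α β : Type*} [TopologicalSpace α] [TopologicalSpace β]
    (e : β ≃ₜ α) {P : α → Prop} (hP : Generic P) : Generic (fun b => P (e b)) := by
  obtain ⟨U, hU, hUd, h⟩ := hP
  exact ⟨e ⁻¹' U, hU.preimage e.continuous, hUd.preimage e.isOpenMap, fun b hb => h _ hb⟩

end ZariskiGeneric

/-! ### The multicone over a multiprojective variety -/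

section Cone

variable {ι : Type*} [Fintype ι] [DecidableEq ι] {n : ι → ℕ}

/-- multihomogeneous coordinates, uncurried -/
abbrev Coord (n : ι → ℕ) := (i : ι) × Fin (n i + 1)

/-- No block of coordinates of `v` is zero, so that `v` represents a point of the product of
projective spaces. -/
def BlockNZ (v : Coord n → ℂ) : Prop := ∀ i, (fun a => v ⟨i, a⟩) ≠ 0

/-- the point with homogeneous coordinates `v` -/
noncomputable def ptOf (v : Coord n → ℂ) (hv : BlockNZ v) : PStack n :=
  fun i => Projectivization.mk ℂ (fun a => v ⟨i, a⟩) (hv i)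

/-- chosen homogeneous coordinates of a point -/
noncomputable def repOf (x : PStack n) : Coord n → ℂ := fun p => (x p.1).rep p.2

/-- rescaling the blocks -/
def scale (t : ι → ℂ) (v : Coord n → ℂ) : Coord n → ℂ := fun p => t p.1 * v p

omit [Fintype ι] [DecidableEq ι] in
theorem repOf_nz (x : PStack n) : BlockNZ (repOf x) := fun i => (x i).rep_nonzero

omit [Fintype ι] [DecidableEq ι] in
@[simp] theorem ptOf_repOf (x : PStack n) : ptOf (repOf x) (repOf_nz x) = x :=
  funext fun i => (x i).mk_rep

omit [Fintype ι] [DecidableEq ι] in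
theorem scale_nz {t : ι → ℂ} (ht : ∀ i, t i ≠ 0) {v : Coord n → ℂ} (hv : BlockNZ v) :
    BlockNZ (scale t v) := by
  intro i h
  refine hv i (funext fun a => ?_)
  have := congrFun h a
  simpa [scale, ht i] using this

omit [Fintype ι] [DecidableEq ι] in
theorem ptOf_scale {t : ι → ℂ} (ht : ∀ i, t i ≠ 0) {v : Coord n → ℂ} (hv : BlockNZ v) :
    ptOf (scale t v) (scale_nz ht hv) = ptOf v hv := by
  funext i
  rw [ptOf, ptOf, Projectivization.mk_eq_mk_iff']
  exact ⟨t i, rfl⟩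

omit [Fintype ι] [DecidableEq ι] in
theorem ptOf_eq_iff {v w : Coord n → ℂ} (hv : BlockNZ v) (hw : BlockNZ w) :
    ptOf v hv = ptOf w hw ↔ ∃ t : ι → ℂ, (∀ i, t i ≠ 0) ∧ w = scale t v := by
  constructor
  · intro h
    have : ∀ i, ∃ t : ℂˣ, t • (fun a => v ⟨i, a⟩) = (fun a => w ⟨i, a⟩) := fun i =>
      (Projectivization.mk_eq_mk_iff ℂ _ _ (hw i) (hv i)).mp (congrFun h i).symm
    choose t ht using this
    refine ⟨fun i => t i, fun i => (t i).ne_zero, ?_⟩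
    funext p
    exact (congrFun (ht p.1) p.2).symm
  · rintro ⟨t, ht, rfl⟩
    exact (ptOf_scale ht hv).symm

omit [Fintype ι] [DecidableEq ι] in
theorem polyVanish_ptOf {f : MvPolynomial (Coord n) ℂ} {v : Coord n → ℂ} (hv : BlockNZ v) :
    PolyVanish f (ptOf v hv) ↔ ∀ t : ι → ℂ, (∀ i, t i ≠ 0) →
      MvPolynomial.eval (scale t v) f = 0 := by
  constructor
  · intro h t ht
    refine h (fun i a => scale t v ⟨i, a⟩) fun i => ⟨scale_nz ht hv i, ?_⟩
    exact congrFun (ptOf_scale ht hv) i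
  · intro h w hw
    choose hw0 hw1 using hw
    obtain ⟨t, ht, hwt⟩ := (ptOf_eq_iff hv (w := fun p => w p.1 p.2) hw0).mp (funext hw1).symm
    rw [hwt]
    exact h t ht

/-- The function `t ↦ f (t • v)` on the torus acting on the blocks of `v`. -/
noncomputable def orbitPoly (v : Coord n → ℂ) (f : MvPolynomial (Coord n) ℂ) : MvPolynomial ι ℂ :=
  MvPolynomial.aeval (fun p : Coord n => MvPolynomial.X p.1 * MvPolynomial.C (v p)) f

omit [Fintype ι] [DecidableEq ι] in
theorem eval_orbitPoly (v : Coord n → ℂ) (f : MvPolynomial (Coord n) ℂ) (t : ι → ℂ) :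
    MvPolynomial.eval t (orbitPoly v f) = MvPolynomial.eval (scale t v) f := by
  rw [orbitPoly, MvPolynomial.aeval_def, MvPolynomial.eval₂_comp_left, MvPolynomial.eval,
    MvPolynomial.coe_eval₂Hom]
  congr 1
  · ext; simp
  · funext p; simp [scale]

/-- The substitution `v ↦ scale t v`. -/
noncomputable def scalePoly (t : ι → ℂ) (f : MvPolynomial (Coord n) ℂ) :
    MvPolynomial (Coord n) ℂ :=
  MvPolynomial.aeval (fun p : Coord n => MvPolynomial.C (t p.1) * MvPolynomial.X p) f

omit [Fintype ι] [DecidableEq ι] in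
theorem eval_scalePoly (t : ι → ℂ) (f : MvPolynomial (Coord n) ℂ) (v : Coord n → ℂ) :
    MvPolynomial.eval v (scalePoly t f) = MvPolynomial.eval (scale t v) f := by
  rw [scalePoly, MvPolynomial.aeval_def, MvPolynomial.eval₂_comp_left, MvPolynomial.eval,
    MvPolynomial.coe_eval₂Hom]
  congr 1
  · ext; simp
  · funext p; simp [scale]

omit [DecidableEq ι] in
theorem eq_zero_of_eval_torus {f : MvPolynomial ι ℂ}
    (h : ∀ t : ι → ℂ, (∀ i, t i ≠ 0) → MvPolynomial.eval t f = 0) : f = 0 := by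
  have : f * ∏ i, MvPolynomial.X i = 0 := by
    refine MvPolynomial.funext fun t => ?_
    rw [map_mul, map_prod, map_zero]
    by_cases ht : ∀ i, t i ≠ 0
    · rw [h t ht, zero_mul]
    · push Not at ht
      obtain ⟨i, hi⟩ := ht
      rw [Finset.prod_eq_zero (Finset.mem_univ i) (by simpa using hi), mul_zero]
  exact (mul_eq_zero.mp this).resolve_right
    (Finset.prod_ne_zero_iff.mpr fun i _ => MvPolynomial.X_ne_zero i)

omit [DecidableEq ι] in
/-- Vanishing at a point, for all choices of representatives, is the vanishing of a polynomial.
Since polynomials form a domain, this turns irreducibility of `X` into primality of its ideal even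
though the ideal is not described by homogeneous generators. -/
theorem polyVanish_iff_orbitPoly {f : MvPolynomial (Coord n) ℂ} {v : Coord n → ℂ}
    (hv : BlockNZ v) : PolyVanish f (ptOf v hv) ↔ orbitPoly v f = 0 := by
  rw [polyVanish_ptOf]
  constructor
  · intro h
    exact eq_zero_of_eval_torus fun t ht => by rw [eval_orbitPoly]; exact h t ht
  · intro h t _
    rw [← eval_orbitPoly, h, map_zero]

/-- The ideal of the multicone over `X`: all polynomials that vanish on every representative of
every point of `X`. -/
noncomputable def coneIdeal (X : Set (PStack n)) : Ideal (MvPolynomial (Coord n) ℂ) where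
  carrier := {f | ∀ x ∈ X, PolyVanish f x}
  add_mem' := fun ha hb x hx v hv => by rw [map_add, ha x hx v hv, hb x hx v hv, add_zero]
  zero_mem' := fun x _ v _ => map_zero _
  smul_mem' := fun c f hf x hx v hv => by rw [smul_eq_mul, map_mul, hf x hx v hv, mul_zero]

omit [Fintype ι] [DecidableEq ι] in
theorem mem_coneIdeal {X : Set (PStack n)} {f : MvPolynomial (Coord n) ℂ} :
    f ∈ coneIdeal X ↔ ∀ x ∈ X, PolyVanish f x := Iff.rfl

omit [DecidableEq ι] in
theorem coneIdeal_isPrime {X : Set (PStack n)} (hX : IsIrredVariety X) : (coneIdeal X).IsPrime := by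
  obtain ⟨-, ⟨x₀, hx₀⟩, hirr⟩ := hX
  refine ⟨fun h => ?_, fun {f g} hfg => ?_⟩
  · have h1 : (1 : MvPolynomial (Coord n) ℂ) ∈ coneIdeal X := h ▸ Submodule.mem_top
    have := h1 x₀ hx₀
    rw [← ptOf_repOf x₀, polyVanish_ptOf] at this
    simpa using this 1 (fun _ => one_ne_zero)
  · have := hirr {x | ∀ h ∈ ({f} : Set (MvPolynomial (Coord n) ℂ)), PolyVanish h x}
      {x | ∀ h ∈ ({g} : Set (MvPolynomial (Coord n) ℂ)), PolyVanish h x} ⟨_, rfl⟩ ⟨_, rfl⟩ (by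
        intro x hx
        have h := hfg x hx
        simp only [Set.mem_union, Set.mem_ofPred_eq, Set.mem_singleton_iff, forall_eq]
        rw [← ptOf_repOf x, polyVanish_iff_orbitPoly] at h ⊢
        rw [polyVanish_iff_orbitPoly]
        have h2 : orbitPoly (repOf x) f * orbitPoly (repOf x) g = 0 := by
          rw [← h]; simp [orbitPoly]
        exact mul_eq_zero.mp h2)
    refine this.imp (fun h x hx => ?_) (fun h x hx => ?_)
    · exact h hx f rfl
    · exact h hx g rfl

/-- `K` is the field of fractions of the coordinate ring of the multicone over the algebraic set
`X`, and `π` is the map from the polynomial ring to `K`. -/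
structure IsCone {K : Type*} [Field K] [Algebra ℂ K] (X : Set (PStack n))
    (π : MvPolynomial (Coord n) ℂ →ₐ[ℂ] K) : Prop where
  surj : ∀ z, ∃ f s, π s ≠ 0 ∧ z = π f / π s
  ker : ∀ f, π f = 0 ↔ ∀ x ∈ X, PolyVanish f x
  alg : IsAlgebraicSet X

omit [DecidableEq ι] in
theorem exists_isCone.{u} {ι : Type u} [Fintype ι] {n : ι → ℕ} {X : Set (PStack n)}
    (hX : IsIrredVariety X) :
    ∃ (K : Type u) (_ : Field K) (_ : Algebra ℂ K) (π : MvPolynomial (Coord n) ℂ →ₐ[ℂ] K),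
      IsCone X π := by
  have := coneIdeal_isPrime hX
  let A := MvPolynomial (Coord n) ℂ ⧸ coneIdeal X
  have hdom : IsDomain A := inferInstance
  let φ : A →ₐ[ℂ] FractionRing A := IsScalarTower.toAlgHom ℂ A (FractionRing A)
  have hφ : Function.Injective φ := IsFractionRing.injective A (FractionRing A)
  refine ⟨FractionRing A, inferInstance, inferInstance,
    φ.comp (Ideal.Quotient.mkₐ ℂ (coneIdeal X)), ?_, ?_, hX.1⟩
  · intro z
    obtain ⟨a, s, hs, rfl⟩ := IsFractionRing.div_surjective (A := A) z
    obtain ⟨f, rfl⟩ := Ideal.Quotient.mk_surjective a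
    obtain ⟨t, rfl⟩ := Ideal.Quotient.mk_surjective s
    refine ⟨f, t, ?_, rfl⟩
    exact fun h => nonZeroDivisors.ne_zero hs (hφ (h.trans (map_zero φ).symm))
  · intro f
    rw [← mem_coneIdeal, ← Ideal.Quotient.eq_zero_iff_mem]
    exact ⟨fun h => hφ (h.trans (map_zero φ).symm), fun h => by
      show φ (Ideal.Quotient.mk _ f) = 0
      rw [h, map_zero]⟩

variable {K : Type*} [Field K] [Algebra ℂ K] {X : Set (PStack n)}
  {π : MvPolynomial (Coord n) ℂ →ₐ[ℂ] K}

omit [DecidableEq ι] in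
theorem IsCone.mem_iff (H : IsCone X π) {v : Coord n → ℂ} (hv : BlockNZ v) :
    ptOf v hv ∈ X ↔ ∀ f, π f = 0 → MvPolynomial.eval v f = 0 := by
  constructor
  · intro h f hf
    have := (H.ker f).mp hf _ h
    rw [polyVanish_ptOf] at this
    have h1 := this 1 (fun _ => one_ne_zero)
    have h2 : scale 1 v = v := by funext p; simp [scale]
    rwa [h2] at h1
  · intro h
    obtain ⟨F, hF⟩ := H.alg
    have key : ∀ f ∈ F, PolyVanish f (ptOf v hv) := by
      intro f hf
      rw [polyVanish_ptOf]
      intro t ht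
      rw [← eval_scalePoly]
      apply h
      rw [H.ker]
      intro x hx
      have h3 : PolyVanish f x := by
        rw [hF] at hx; exact hx f hf
      rw [← ptOf_repOf x, polyVanish_ptOf] at h3 ⊢
      intro s hs
      rw [eval_scalePoly]
      have h4 : scale t (scale s (repOf x)) = scale (fun i => t i * s i) (repOf x) := by
        funext p; simp [scale, mul_assoc]
      rw [h4]
      exact h3 _ fun i => mul_ne_zero (ht i) (hs i)
    rw [hF]
    exact key

end Cone

/-! ### A transcendence basis of the function field of the cone -/

section Basis

/-- the reciprocal polynomial `Q(x) = (∏ x)^N P(x⁻¹)`, with `N` the total degree of `P` -/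
noncomputable def recipPoly {ι : Type*} [Fintype ι] (P : MvPolynomial ι ℂ) : MvPolynomial ι ℂ :=
  ∑ s ∈ P.support, MvPolynomial.C (P.coeff s) * ∏ i, MvPolynomial.X i ^ (P.totalDegree - s i)

theorem aeval_recipPoly {ι : Type*} [Fintype ι] (P : MvPolynomial ι ℂ) {F : Type*} [Field F]
    [Algebra ℂ F] (x : ι → F) (hx : ∀ i, x i ≠ 0) :
    MvPolynomial.aeval x (recipPoly P) =
      (∏ i, x i) ^ P.totalDegree * MvPolynomial.aeval (fun i => (x i)⁻¹) P := by
  classical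
  have hP : MvPolynomial.aeval (fun i => (x i)⁻¹) P =
      ∑ s ∈ P.support, algebraMap ℂ F (P.coeff s) * ∏ i, (x i)⁻¹ ^ s i := by
    rw [MvPolynomial.aeval_def, MvPolynomial.eval₂_eq']
  rw [hP, recipPoly]
  simp only [map_sum, map_mul, map_prod, map_pow, MvPolynomial.aeval_X, MvPolynomial.aeval_C,
    Finset.mul_sum]
  refine Finset.sum_congr rfl fun s hs => ?_
  rw [mul_left_comm, ← Finset.prod_pow, ← Finset.prod_mul_distrib]
  congr 1
  refine Finset.prod_congr rfl fun i _ => ?_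
  have h1 : s i ≤ P.totalDegree := by
    refine le_trans ?_ (MvPolynomial.le_totalDegree hs)
    rw [Finsupp.sum_fintype _ _ (by simp)]
    exact Finset.single_le_sum (f := fun i => s i) (fun _ _ => Nat.zero_le _) (Finset.mem_univ i)
  rw [inv_pow, ← div_eq_mul_inv, eq_div_iff (pow_ne_zero _ (hx i)), ← pow_add,
    Nat.sub_add_cancel h1]

variable {ι : Type*} [Fintype ι] [DecidableEq ι] {n : ι → ℕ}
variable {K : Type*} [Field K] [Algebra ℂ K] {X : Set (PStack n)}
  {π : MvPolynomial (Coord n) ℂ →ₐ[ℂ] K}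

omit [DecidableEq ι] in
/-- In each factor some coordinate does not vanish identically on the cone. -/
theorem IsCone.exists_pivot (H : IsCone X π) (hne : X.Nonempty) :
    ∃ χ : ∀ i, Fin (n i + 1), ∀ i, π (MvPolynomial.X ⟨i, χ i⟩) ≠ 0 := by
  obtain ⟨x, hx⟩ := hne
  have : ∀ i, ∃ a, repOf x ⟨i, a⟩ ≠ 0 := fun i => Function.ne_iff.mp (repOf_nz x i)
  choose χ hχ using this
  refine ⟨χ, fun i h => hχ i ?_⟩
  have := ((H.mem_iff (repOf_nz x)).mp (by rwa [ptOf_repOf])) _ h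
  simpa using this

omit [DecidableEq ι] in
/-- The inverses of the pivot coordinates, one for each factor, are algebraically independent,
because the cone is stable under rescaling of the blocks. -/
theorem IsCone.algebraicIndependent_inv (H : IsCone X π) {χ : ∀ i, Fin (n i + 1)}
    (hχ : ∀ i, π (MvPolynomial.X ⟨i, χ i⟩) ≠ 0) :
    AlgebraicIndependent ℂ (fun i => (π (MvPolynomial.X ⟨i, χ i⟩))⁻¹) := by
  rw [algebraicIndependent_iff]
  intro P hP
  -- a point of `X` at which all pivot coordinates are nonzero
  obtain ⟨v, hv, hvX, hvχ⟩ : ∃ v, ∃ hv : BlockNZ v, ptOf v hv ∈ X ∧ ∀ i, v ⟨i, χ i⟩ ≠ 0 := by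
    have h1 : π (∏ i, MvPolynomial.X (⟨i, χ i⟩ : Coord n)) ≠ 0 := by
      rw [map_prod]; exact Finset.prod_ne_zero_iff.mpr fun i _ => hχ i
    rw [Ne, H.ker] at h1
    push Not at h1
    obtain ⟨x, hx, hx'⟩ := h1
    rw [← ptOf_repOf x, polyVanish_ptOf] at hx'
    push Not at hx'
    obtain ⟨t, ht, h⟩ := hx'
    refine ⟨scale t (repOf x), scale_nz ht (repOf_nz x), by
      rw [ptOf_scale ht (repOf_nz x), ptOf_repOf]; exact hx, ?_⟩
    rw [map_prod, Finset.prod_ne_zero_iff] at h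
    intro i
    simpa using h i (Finset.mem_univ i)
  have hQ : π (MvPolynomial.rename (fun i => (⟨i, χ i⟩ : Coord n)) (recipPoly P)) = 0 := by
    have h1 := aeval_recipPoly P (fun i => π (MvPolynomial.X ⟨i, χ i⟩)) hχ
    rw [hP, mul_zero] at h1
    rw [← h1]
    have h2 : (π.comp (MvPolynomial.rename (fun i => (⟨i, χ i⟩ : Coord n)))) =
      MvPolynomial.aeval (fun i => π (MvPolynomial.X ⟨i, χ i⟩)) := by
      apply MvPolynomial.algHom_ext
      intro i; simp
    exact congrArg (fun g => g (recipPoly P)) h2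
  -- Rescale the point so that its pivot coordinates become `t⁻¹`.
  refine eq_zero_of_eval_torus fun t ht => ?_
  have hs : ∀ i, (t i)⁻¹ * (v ⟨i, χ i⟩)⁻¹ ≠ 0 := fun i =>
    mul_ne_zero (inv_ne_zero (ht i)) (inv_ne_zero (hvχ i))
  have h3 := (H.ker _).mp hQ _ hvX
  rw [polyVanish_ptOf] at h3
  have h4 := h3 _ hs
  rw [MvPolynomial.eval_rename] at h4
  have h5 : (scale (fun i => (t i)⁻¹ * (v ⟨i, χ i⟩)⁻¹) v ∘ fun i => (⟨i, χ i⟩ : Coord n)) =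
      fun i => (t i)⁻¹ := by
    funext i
    simp [scale, hvχ i]
  rw [h5] at h4
  have h6 := aeval_recipPoly P (fun i => (t i)⁻¹) fun i => inv_ne_zero (ht i)
  simp only [MvPolynomial.aeval_eq_eval, inv_inv] at h6
  rw [h4] at h6
  refine (mul_eq_zero.mp h6.symm).resolve_left (pow_ne_zero _ ?_)
  exact Finset.prod_ne_zero_iff.mpr fun i _ => inv_ne_zero (ht i)

omit [DecidableEq ι] in
/-- A transcendence basis of `K` consisting of the inverses of the pivot coordinates and of some of
the dehomogenised coordinates. -/
theorem IsCone.exists_basis (H : IsCone X π) (hne : X.Nonempty) :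
    ∃ (χ : ∀ i, Fin (n i + 1)) (T : Set (Coord n)), (∀ i, π (MvPolynomial.X ⟨i, χ i⟩) ≠ 0) ∧
      (∀ p ∈ T, p.2 ≠ χ p.1) ∧
      IsTranscendenceBasis ℂ (Sum.elim
        (fun p : T => π (MvPolynomial.X p.1) / π (MvPolynomial.X ⟨p.1.1, χ p.1.1⟩))
        (fun i => (π (MvPolynomial.X ⟨i, χ i⟩))⁻¹)) := by
  obtain ⟨χ, hχ⟩ := H.exists_pivot hne
  have hind := H.algebraicIndependent_inv hχ
  set τ : ι → K := fun i => (π (MvPolynomial.X ⟨i, χ i⟩))⁻¹ with hτ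
  set ρ : Coord n → K := fun p => π (MvPolynomial.X p) / π (MvPolynomial.X ⟨p.1, χ p.1⟩) with hρ
  have halg : Algebra.IsAlgebraic (Algebra.adjoin ℂ (Set.range τ ∪ Set.range ρ)) K := by
    constructor
    set A := Algebra.adjoin ℂ (Set.range τ ∪ Set.range ρ) with hA
    have hτA : ∀ i, IsAlgebraic A (τ i) := fun i =>
      isAlgebraic_algebraMap (⟨τ i, Algebra.subset_adjoin (.inl ⟨i, rfl⟩)⟩ : A)
    have hρA : ∀ i, IsAlgebraic A (ρ i) := fun i =>
      isAlgebraic_algebraMap (⟨ρ i, Algebra.subset_adjoin (.inr ⟨i, rfl⟩)⟩ : A)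
    have hX : ∀ p, IsAlgebraic A (π (MvPolynomial.X p)) := by
      intro p
      have : π (MvPolynomial.X p) = ρ p * (τ p.1)⁻¹ := by
        simp only [hρ, hτ, inv_inv]
        rw [div_mul_cancel₀ _ (hχ p.1)]
      rw [this]
      exact (hρA p).mul (hτA p.1).inv
    have hf : ∀ f, IsAlgebraic A (π f) := by
      intro f
      induction f using MvPolynomial.induction_on with
      | C r =>
        have : π (MvPolynomial.C r) = algebraMap A K (algebraMap ℂ A r) := by
          rw [← MvPolynomial.algebraMap_eq, AlgHom.commutes]; rfl
        rw [this]
        exact isAlgebraic_algebraMap _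
      | add p q hp hq => rw [map_add]; exact hp.add hq
      | mul_X p i hp => rw [map_mul]; exact hp.mul (hX i)
    intro z
    obtain ⟨f, s, -, rfl⟩ := H.surj z
    rw [div_eq_mul_inv]
    exact (hf f).mul (hf s).inv
  have hτinj : Function.Injective τ := hind.injective
  classical
  obtain ⟨u, hu1, hu2, hu⟩ := exists_isTranscendenceBasis_between (R := ℂ) (Set.range τ)
    (Set.range τ ∪ Set.range ρ) Set.subset_union_left
    (by
      have h := (algebraicIndependent_subtype_range hτinj).mpr hind
      exact h)
  have hch : ∀ z : ↥(u \ Set.range τ), ∃ p, ρ p = z := fun z => (hu2 z.2.1).resolve_left z.2.2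
  choose idx hidx using hch
  have hidxinj : Function.Injective idx := fun a b h => Subtype.ext (by
    rw [← hidx a, ← hidx b, h])
  refine ⟨χ, Set.range idx, hχ, ?_, ?_⟩
  · rintro _ ⟨z, rfl⟩ h
    -- the ratio `1` is algebraic
    have h1 : (z : K) = 1 := by
      rw [← hidx z, hρ]
      simp only
      rw [← h, Sigma.eta, div_self]
      have := hχ (idx z).1
      rwa [← h] at this
    have h2 := hu.1.transcendental ⟨z.1, z.2.1⟩
    simp only [h1] at h2
    exact h2 (isAlgebraic_one)
  · let e : ↥(Set.range idx) ⊕ ι ≃ u :=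
      ((Equiv.sumCongr (Equiv.ofInjective idx hidxinj).symm (Equiv.ofInjective τ hτinj)).trans
        (Equiv.sumComm _ _)).trans (Equiv.Set.sumDiffSubset hu1)
    refine (isTranscendenceBasis_equiv' e ?_).mpr hu
    funext q
    rcases q with ⟨_, z, rfl⟩ | i
    · have : (Equiv.ofInjective idx hidxinj).symm ⟨idx z, z, rfl⟩ = z :=
        (Equiv.ofInjective idx hidxinj).symm_apply_apply z
      simp [e, this, ← hidx z, hρ]
    · simp [e, hτ]

end Basis

/-! ### Normalised solutions of multihomogeneous systems -/

section Sol

variable {ι : Type*} [Fintype ι] [DecidableEq ι] {n : ι → ℕ} {J : Type*} [Fintype J]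
  {S : J → Type} [∀ j, Fintype (S j)]

/-- coefficient slots for the equations together with one normalising form per factor -/
abbrev ExtS (S : J → Type) (n : ι → ℕ) : J ⊕ ι → Type := Sum.elim S fun i => Fin (n i + 1)

instance : ∀ j, Fintype (ExtS S n j)
  | .inl j => inferInstanceAs (Fintype (S j))
  | .inr i => inferInstanceAs (Fintype (Fin (n i + 1)))

/-- The equations extended by a linear form in the coordinates of each factor. -/
noncomputable def extPoly (g : ∀ j, S j → MvPolynomial (Coord n) ℂ) :
    ∀ j, ExtS S n j → MvPolynomial (Coord n) ℂ
  | .inl j => g j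
  | .inr i => fun a => MvPolynomial.X ⟨i, a⟩

/-- The right-hand sides of the extended system: 0 for the equations, 1 for the normalising forms.
-/
def extB : J ⊕ ι → ℂ := Sum.elim 0 1

/-- The coefficients `c` of the equations and `u` of the normalising forms as one parameter. -/
def extParam (c : (j : J) × S j → ℂ) (u : Coord n → ℂ) : (j : J ⊕ ι) × ExtS S n j → ℂ
  | ⟨.inl j, a⟩ => c ⟨j, a⟩
  | ⟨.inr i, a⟩ => u ⟨i, a⟩

omit [Fintype J] [DecidableEq ι] in
/-- A property of the general extended system holds, for general equations, with general normalising
forms. -/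
theorem ZGen.ext [Finite J] {P : ((j : J ⊕ ι) × ExtS S n j → ℂ) → Prop} (h : ZGen P) :
    ZGen fun c : (j : J) × S j → ℂ => ZGen fun u : Coord n → ℂ => P (extParam c u) := by
  have := (h.comp_equiv (Equiv.sumSigmaDistrib (ExtS S n))).curry
  refine this.mono fun c hc => hc.mono fun u hu => ?_
  convert hu using 1
  funext ⟨j, a⟩
  cases j <;> rfl

/-- Multihomogeneous systems without base points: under rescaling of the blocks the polynomials of
one equation are multiplied by a common nonzero factor, and they have no common zero. For the latter
reason a general member of the system avoids any given point. -/
structure HomSys (g : ∀ j, S j → MvPolynomial (Coord n) ℂ) : Prop where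
  hom : ∀ j (t : ι → ℂ), (∀ i, t i ≠ 0) → ∃ w : ℂ, w ≠ 0 ∧ ∀ a v,
    MvPolynomial.eval (scale t v) (g j a) = w * MvPolynomial.eval v (g j a)
  bpf : ∀ v, BlockNZ v → ∀ j, ∃ a, MvPolynomial.eval v (g j a) ≠ 0

/-- The points of `X` on the section with coefficients `c`. The choice of representatives is
irrelevant for a multihomogeneous system, by `HomSys.sol_iff`. -/
def Sol (X : Set (PStack n)) (g : ∀ j, S j → MvPolynomial (Coord n) ℂ)
    (c : (j : J) × S j → ℂ) : Set (PStack n) :=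
  {x | x ∈ X ∧ ∀ j, ∑ a, c ⟨j, a⟩ * MvPolynomial.eval (repOf x) (g j a) = 0}

/-- The coordinate vectors of the points of the section, normalised by `u i = 1` for each factor
`i`. Points at which one of the forms `u` vanishes have no such vector. -/
def NormSol (X : Set (PStack n)) (g : ∀ j, S j → MvPolynomial (Coord n) ℂ)
    (c : (j : J) × S j → ℂ) (u : Coord n → ℂ) : Set (Coord n → ℂ) :=
  {v | ∃ hv : BlockNZ v, ptOf v hv ∈ Sol X g c ∧ ∀ i, ∑ a, u ⟨i, a⟩ * v ⟨i, a⟩ = 1}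

variable {X : Set (PStack n)} {g : ∀ j, S j → MvPolynomial (Coord n) ℂ}

omit [Fintype ι] [DecidableEq ι] [Fintype J] in
theorem HomSys.sol_iff (hg : HomSys g) (c : (j : J) × S j → ℂ) {v : Coord n → ℂ}
    (hv : BlockNZ v) : ptOf v hv ∈ Sol X g c ↔ ptOf v hv ∈ X ∧
      ∀ j, ∑ a, c ⟨j, a⟩ * MvPolynomial.eval v (g j a) = 0 := by
  refine and_congr_right fun _ => forall_congr' fun j => ?_
  obtain ⟨t, ht, h⟩ := (ptOf_eq_iff hv (repOf_nz (ptOf v hv))).mp (ptOf_repOf _).symm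
  obtain ⟨w, hw, hw'⟩ := hg.hom j t ht
  rw [h]
  simp only [hw', mul_left_comm _ w, ← Finset.mul_sum, mul_eq_zero, hw, false_or]

omit [Fintype ι] [DecidableEq ι] in
theorem blockNZ_of_norm {u v : Coord n → ℂ} (h : ∀ i, ∑ a, u ⟨i, a⟩ * v ⟨i, a⟩ = 1) :
    BlockNZ v := by
  intro i hi
  have h1 := h i
  have h2 : ∀ a, v ⟨i, a⟩ = 0 := fun a => congrFun hi a
  simp [h2] at h1

variable {K : Type*} [Field K] [Algebra ℂ K] {π : MvPolynomial (Coord n) ℂ →ₐ[ℂ] K}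

omit [DecidableEq ι] [Fintype J] in
/-- The fibres of the extended incidence variety are the sets of normalised coordinate vectors. -/
theorem incFibre_ext (H : IsCone X π) (hg : HomSys g) (c : (j : J) × S j → ℂ)
    (u : Coord n → ℂ) :
    incFibre π (extPoly g) extB (extParam c u) = NormSol X g c u := by
  ext v
  have e1 : (∀ j, ∑ a, extParam c u ⟨j, a⟩ * MvPolynomial.eval v (extPoly g j a) = extB j) ↔
      (∀ j, ∑ a, c ⟨j, a⟩ * MvPolynomial.eval v (g j a) = 0) ∧
        ∀ i, ∑ a, u ⟨i, a⟩ * v ⟨i, a⟩ = 1 := by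
    constructor
    · intro h
      refine ⟨fun j => h (.inl j), fun i => ?_⟩
      have := h (.inr i)
      simp only [extPoly, MvPolynomial.eval_X] at this
      exact this
    · rintro ⟨h1, h2⟩ (j | i)
      · exact h1 j
      · simp only [extPoly, MvPolynomial.eval_X]
        exact h2 i
  constructor
  · rintro ⟨h1, h2⟩
    rw [e1] at h2
    have hv := blockNZ_of_norm h2.2
    exact ⟨hv, (hg.sol_iff c hv).mpr ⟨(H.mem_iff hv).mpr h1, h2.1⟩, h2.2⟩
  · rintro ⟨hv, h1, h2⟩
    rw [hg.sol_iff c hv, H.mem_iff hv] at h1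
    exact ⟨h1.1, e1.mpr ⟨h1.2, h2⟩⟩

/-- pivots of the extended system -/
def extPivot (χJ : ∀ j, S j) (χ : ∀ i, Fin (n i + 1)) : ∀ j, ExtS S n j
  | .inl j => χJ j
  | .inr i => χ i

omit [DecidableEq ι] [Fintype J] in
theorem IsCone.incGood (H : IsCone X π) (hg : HomSys g) {χJ : ∀ j, S j}
    {χ : ∀ i, Fin (n i + 1)} (hχJ : ∀ j, π (g j (χJ j)) ≠ 0)
    (hχ : ∀ i, π (MvPolynomial.X ⟨i, χ i⟩) ≠ 0) :
    IncGood π (extPoly g) extB (extPivot χJ χ) where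
  surj := H.surj
  pivot := by
    rintro (j | i)
    · exact hχJ j
    · exact hχ i
  ne := by
    intro c v hv j
    have hv2 : ∀ i, ∑ a, c ⟨.inr i, a⟩ * v ⟨i, a⟩ = 1 := by
      intro i
      have := hv.2 (.inr i)
      simp only [extPoly, MvPolynomial.eval_X] at this
      exact this
    have hnz := blockNZ_of_norm (u := fun p => c ⟨.inr p.1, p.2⟩) hv2
    rcases j with j | i
    · exact hg.bpf v hnz j
    · obtain ⟨a, ha⟩ := Function.ne_iff.mp (hnz i)
      exact ⟨a, by simpa [extPoly] using ha⟩

omit [DecidableEq ι] [Fintype J] in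
theorem IsCone.exists_sysPivot (H : IsCone X π) (hne : X.Nonempty) (hg : HomSys g) :
    ∃ χJ : ∀ j, S j, ∀ j, π (g j (χJ j)) ≠ 0 := by
  obtain ⟨x, hx⟩ := hne
  choose χ hχ using hg.bpf (repOf x) (repOf_nz x)
  refine ⟨χ, fun j h => hχ j ?_⟩
  exact ((H.mem_iff (repOf_nz x)).mp (by rwa [ptOf_repOf])) _ h

/-- the representative of `x` normalised by `u` -/
noncomputable def normRep (u : Coord n → ℂ) (x : PStack n) : Coord n → ℂ :=
  scale (fun i => (∑ a, u ⟨i, a⟩ * repOf x ⟨i, a⟩)⁻¹) (repOf x)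

/-- the forms `u` do not vanish at `x` -/
def NormOK (u : Coord n → ℂ) (x : PStack n) : Prop :=
  ∀ i, ∑ a, u ⟨i, a⟩ * repOf x ⟨i, a⟩ ≠ 0

omit [Fintype ι] [DecidableEq ι] in
theorem NormOK.nz {u : Coord n → ℂ} {x : PStack n} (h : NormOK u x) : BlockNZ (normRep u x) :=
  scale_nz (fun i => inv_ne_zero (h i)) (repOf_nz x)

omit [Fintype ι] [DecidableEq ι] in
theorem NormOK.ptOf_normRep {u : Coord n → ℂ} {x : PStack n} (h : NormOK u x) :
    ptOf (normRep u x) h.nz = x := by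
  have := ptOf_scale (fun i => inv_ne_zero (h i)) (repOf_nz x)
  rw [ptOf_repOf] at this
  exact this

omit [Fintype ι] [DecidableEq ι] in
theorem NormOK.norm {u : Coord n → ℂ} {x : PStack n} (h : NormOK u x) (i : ι) :
    ∑ a, u ⟨i, a⟩ * normRep u x ⟨i, a⟩ = 1 := by
  have : ∀ a, u ⟨i, a⟩ * normRep u x ⟨i, a⟩ = (∑ a, u ⟨i, a⟩ * repOf x ⟨i, a⟩)⁻¹ *
      (u ⟨i, a⟩ * repOf x ⟨i, a⟩) := fun a => mul_left_comm _ _ _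
  simp only [this]
  rw [← Finset.mul_sum]
  exact inv_mul_cancel₀ (h i)

omit [Fintype ι] [DecidableEq ι] in
theorem normRep_unique {u v : Coord n → ℂ} (hv : BlockNZ v)
    (h : ∀ i, ∑ a, u ⟨i, a⟩ * v ⟨i, a⟩ = 1) :
    NormOK u (ptOf v hv) ∧ normRep u (ptOf v hv) = v := by
  obtain ⟨t, ht, hr⟩ := (ptOf_eq_iff hv (repOf_nz (ptOf v hv))).mp (ptOf_repOf _).symm
  have h1 : ∀ i, ∑ a, u ⟨i, a⟩ * repOf (ptOf v hv) ⟨i, a⟩ = t i := by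
    intro i
    rw [hr]
    simp only [scale, mul_left_comm (u _), ← Finset.mul_sum, h, mul_one]
  refine ⟨fun i => by rw [h1]; exact ht i, ?_⟩
  funext p
  simp only [normRep, scale, h1]
  rw [hr]
  simp [scale, ht p.1]

omit [Fintype ι] [DecidableEq ι] [Fintype J] in
theorem normSol_eq (c : (j : J) × S j → ℂ) (u : Coord n → ℂ) :
    NormSol X g c u = normRep u '' (Sol X g c ∩ {x | NormOK u x}) := by
  ext v
  constructor
  · rintro ⟨hv, h1, h2⟩
    obtain ⟨h3, h4⟩ := normRep_unique hv h2
    exact ⟨_, ⟨h1, h3⟩, h4⟩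
  · rintro ⟨x, ⟨h1, h2 : NormOK u x⟩, rfl⟩
    exact ⟨h2.nz, by rw [h2.ptOf_normRep]; exact h1, h2.norm⟩

omit [Fintype ι] [DecidableEq ι] in
theorem normRep_injOn (u : Coord n → ℂ) : Set.InjOn (normRep u) {x : PStack n | NormOK u x} := by
  intro x hx y hy h
  rw [← NormOK.ptOf_normRep hx, ← NormOK.ptOf_normRep hy]
  congr 1

omit [DecidableEq ι] in
theorem zgen_normOK (F : Set (PStack n)) (hF : F.Finite) :
    ZGen fun u : Coord n → ℂ => ∀ x ∈ F, NormOK u x := by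
  have := ZGen.finset_forall (P := fun x u => NormOK u x) hF.toFinset fun x _ => by
    refine ZGen.forall fun i => ?_
    refine ⟨∑ a, MvPolynomial.X ⟨i, a⟩ * MvPolynomial.C (repOf x ⟨i, a⟩), fun h => ?_,
      fun u hu => by simpa using hu⟩
    refine repOf_nz x i (funext fun b => ?_)
    classical
    have := congrArg (MvPolynomial.eval (Function.update 0 (⟨i, b⟩ : Coord n) 1)) h
    simpa [Function.update_apply, Finset.sum_ite_eq'] using this
  exact this.mono fun u hu x hx => hu x (by simpa using hx)

omit [DecidableEq ι] [Fintype J] in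
/-- General normalising forms do not vanish at finitely many given points, so that the number of
points of a section can be read off from the normalised vectors. -/
theorem sol_ncard_of_normSol {c : (j : J) × S j → ℂ} {N : ℕ}
    (h : ZGen fun u => (NormSol X g c u).Finite ∧ (NormSol X g c u).ncard = N) :
    (Sol X g c).Finite ∧ (Sol X g c).ncard = N := by
  have hsub : ∀ F ⊆ Sol X g c, F.Finite → F.ncard ≤ N := by
    intro F hF hfin
    obtain ⟨u, ⟨h1, h2⟩, h3⟩ := (h.and (zgen_normOK F hfin)).exists
    rw [← h2, normSol_eq, ← ((normRep_injOn u).mono fun x hx => h3 x hx).ncard_image]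
    refine Set.ncard_le_ncard (Set.image_mono fun x hx => ⟨hF hx, h3 x hx⟩) ?_
    rw [← normSol_eq]; exact h1
  have hfin : (Sol X g c).Finite := by
    by_contra hinf
    obtain ⟨F, hF, hFfin, hc⟩ := Set.Infinite.exists_subset_ncard_eq hinf (N + 1)
    have := hsub F hF hFfin
    omega
  refine ⟨hfin, ?_⟩
  obtain ⟨u, ⟨h1, h2⟩, h3⟩ := (h.and (zgen_normOK _ hfin)).exists
  rw [← h2, normSol_eq, (Set.inter_eq_left.mpr fun x hx => h3 x hx :
      Sol X g c ∩ {x | NormOK u x} = Sol X g c), ((normRep_injOn u).mono fun x hx => h3 x hx).ncard_image]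

omit [Fintype ι] [DecidableEq ι] [Fintype J] in
theorem sol_infinite_of_normSol {c : (j : J) × S j → ℂ} {u : Coord n → ℂ}
    (h : (NormSol X g c u).Infinite) : (Sol X g c).Infinite := by
  rw [normSol_eq] at h
  exact (h.of_image _).mono Set.inter_subset_left

end Sol

/-! ### General sections and multilinear slices -/

section Sections

variable {ι : Type*} [Fintype ι] [DecidableEq ι] {n : ι → ℕ} {J : Type*} [Fintype J]
  {S : J → Type} [∀ j, Fintype (S j)] {X : Set (PStack n)}
  {g : ∀ j, S j → MvPolynomial (Coord n) ℂ}
  {K : Type*} [Field K] [Algebra ℂ K] {π : MvPolynomial (Coord n) ℂ →ₐ[ℂ] K}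
  {κ : Type*} [Fintype κ] {y : κ → K} {D : ℕ}

omit [DecidableEq ι] in
/-- The general extended system with `dim X` equations has finitely many solutions, in constant
number, depending differentiably on the coefficients. -/
theorem IsCone.section_finite (H : IsCone X π) (hg : HomSys g)
    (hy : IsTranscendenceBasis ℂ y) (hD : Fintype.card κ = D + Fintype.card ι)
    (hJ : Fintype.card J = D) {χJ : ∀ j, S j}
    {χ : ∀ i, Fin (n i + 1)} (hχJ : ∀ j, π (g j (χJ j)) ≠ 0)
    (hχ : ∀ i, π (MvPolynomial.X ⟨i, χ i⟩) ≠ 0) :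
    ∃ N : ℕ, ZGen (fun C => (incFibre π (extPoly g) extB C).Finite ∧
        (incFibre π (extPoly g) extB C).ncard = N ∧ SmoothAt (incFibre π (extPoly g) extB) C) ∧
      (Function.Injective (univMap (fun j a => π (extPoly g j a)) extB (extPivot χJ χ)) →
        0 < N) := by
  obtain ⟨N, f, hf, hN, h⟩ := (H.incGood hg hχJ hχ).finite hy (by simp [hD, hJ])
  exact ⟨N, ⟨f, hf, h⟩, hN⟩

omit [DecidableEq ι] in
theorem IsCone.sol_of_fibre (H : IsCone X π) (hg : HomSys g) {N : ℕ}
    (h : ZGen (fun C => (incFibre π (extPoly g) extB C).Finite ∧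
        (incFibre π (extPoly g) extB C).ncard = N)) :
    ZGen fun c => (Sol X g c).Finite ∧ (Sol X g c).ncard = N := by
  refine h.ext.mono fun c hc => sol_ncard_of_normSol ?_
  simpa only [incFibre_ext H hg] using hc

/-- A general section by more than `dim X` equations is empty. Here and below `dim X` enters as the
number `D`, the transcendence degree of `K` minus the number of factors. -/
theorem IsCone.sol_empty (H : IsCone X π) (hne : X.Nonempty) (hg : HomSys g)
    (hy : IsTranscendenceBasis ℂ y) (hD : Fintype.card κ = D + Fintype.card ι)
    (hJ : D < Fintype.card J) : ZGen fun c => Sol X g c = ∅ := by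
  obtain ⟨χ, T, hχ, -⟩ := H.exists_basis hne
  obtain ⟨χJ, hχJ⟩ := H.exists_sysPivot hne hg
  obtain ⟨f, hf, h⟩ := (H.incGood hg hχJ hχ).empty_of_lt hy (by simp [hD]; omega)
  have : ZGen (fun C => (incFibre π (extPoly g) extB C).Finite ∧
        (incFibre π (extPoly g) extB C).ncard = 0) :=
    ⟨f, hf, fun C hC => by simp [h C hC]⟩
  refine (H.sol_of_fibre hg this).mono fun c hc => ?_
  exact (Set.ncard_eq_zero hc.1).mp hc.2

/-- A general section by fewer than `dim X` equations is empty or infinite. -/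
theorem IsCone.sol_empty_or_infinite (H : IsCone X π) (hne : X.Nonempty) (hg : HomSys g)
    (hy : IsTranscendenceBasis ℂ y) (hD : Fintype.card κ = D + Fintype.card ι)
    (hJ : Fintype.card J < D) :
    (ZGen fun c => Sol X g c = ∅) ∨ ZGen fun c => (Sol X g c).Infinite := by
  obtain ⟨χ, T, hχ, -⟩ := H.exists_basis hne
  obtain ⟨χJ, hχJ⟩ := H.exists_sysPivot hne hg
  obtain ⟨f, hf, h | h⟩ := (H.incGood hg hχJ hχ).empty_or_infinite hy (by simp [hD]; omega)
  · left
    have : ZGen (fun C => (incFibre π (extPoly g) extB C).Finite ∧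
          (incFibre π (extPoly g) extB C).ncard = 0) :=
      ⟨f, hf, fun C hC => by simp [h C hC]⟩
    refine (H.sol_of_fibre hg this).mono fun c hc => ?_
    exact (Set.ncard_eq_zero hc.1).mp hc.2
  · right
    have : ZGen (fun C => (incFibre π (extPoly g) extB C).Infinite) := ⟨f, hf, h⟩
    refine this.ext.mono fun c hc => ?_
    obtain ⟨u, hu⟩ := hc.exists
    rw [incFibre_ext H hg] at hu
    exact sol_infinite_of_normSol hu

end Sections

section Linear

variable {ι : Type*} [Fintype ι] [DecidableEq ι] {n : ι → ℕ} {J : Type*} [Fintype J]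
  {X : Set (PStack n)}

/-- one linear form in the coordinates of the factor `φ j` for each `j` -/
noncomputable def linSys (n : ι → ℕ) (φ : J → ι) :
    ∀ j, Fin (n (φ j) + 1) → MvPolynomial (Coord n) ℂ :=
  fun j a => MvPolynomial.X ⟨φ j, a⟩

omit [Fintype ι] [DecidableEq ι] [Fintype J] in
theorem linSys_hom (φ : J → ι) : HomSys (linSys n φ) where
  hom j t ht := ⟨t (φ j), ht _, fun a v => by simp [linSys, scale]⟩
  bpf v hv j := by
    obtain ⟨a, ha⟩ := Function.ne_iff.mp (hv (φ j))
    exact ⟨a, by simpa [linSys] using ha⟩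

theorem pLinVanish_mk {κ : Type*} [Fintype κ] (c v : κ → ℂ) (hv : v ≠ 0) :
    PLinVanish c (Projectivization.mk ℂ v hv) ↔ ∑ a, c a * v a = 0 := by
  refine ⟨fun h => h v hv rfl, fun h w hw e => ?_⟩
  obtain ⟨a, rfl⟩ := (Projectivization.mk_eq_mk_iff' ℂ _ _ hw hv).mp e
  simp only [Pi.smul_apply, smul_eq_mul, mul_left_comm _ a, ← Finset.mul_sum, h, mul_zero]

/-- number of linear forms in each factor -/
def cnt (φ : J → ι) : ι → ℕ := fun i => Fintype.card {j // φ j = i}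

/-- a numbering of the linear forms in the factor `i` -/
noncomputable def fibEquiv (φ : J → ι) (i : ι) : {j // φ j = i} ≃ Fin (cnt φ i) :=
  Fintype.equivFin _

/-- The parameters of multilinear slices of type `cnt φ` as coefficient vectors of the linear system
of `φ`. -/
noncomputable def sliceHomeo (n : ι → ℕ) (φ : J → ι) :
    SliceParams n (cnt φ) ≃ₜ ((j : J) × Fin (n (φ j) + 1) → ℂ) where
  toFun L p := L (φ p.1) (fibEquiv φ (φ p.1) ⟨p.1, rfl⟩) p.2
  invFun c i k a := c ⟨((fibEquiv φ i).symm k).1,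
    Fin.cast (by rw [((fibEquiv φ i).symm k).2]) a⟩
  left_inv L := by
    have aux : ∀ (i : ι) (q : {j // φ j = i}) (a : Fin (n i + 1)) (h : n i + 1 = n (φ q.1) + 1),
        L (φ q.1) (fibEquiv φ (φ q.1) ⟨q.1, rfl⟩) (Fin.cast h a) =
          L i (fibEquiv φ i q) a := by
      rintro _ ⟨j, rfl⟩ a _
      rfl
    funext i k a
    have := aux i ((fibEquiv φ i).symm k) a
      (by rw [((fibEquiv φ i).symm k).2])
    rwa [Equiv.apply_symm_apply] at this
  right_inv c := by
    funext ⟨j, a⟩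
    have aux : ∀ (q : {j' // φ j' = φ j}) (h : n (φ j) + 1 = n (φ q.1) + 1), q = ⟨j, rfl⟩ →
        c ⟨q.1, Fin.cast h a⟩ = c ⟨j, a⟩ := by
      rintro _ _ rfl
      rfl
    exact aux _ _ (Equiv.symm_apply_apply _ _)
  continuous_toFun := continuous_pi fun p => by fun_prop
  continuous_invFun := continuous_pi fun i => continuous_pi fun k => continuous_pi fun a =>
    continuous_apply _

omit [Fintype ι] in
theorem sol_linSys (φ : J → ι) (L : SliceParams n (cnt φ)) :
    Sol X (linSys n φ) (sliceHomeo n φ L) = X ∩ SliceZeros L := by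
  ext x
  refine and_congr_right fun _ => ?_
  have hx : ∀ i, x i = Projectivization.mk ℂ (fun a => repOf x ⟨i, a⟩) (repOf_nz x i) := fun i =>
    (congrFun (ptOf_repOf x) i).symm
  have key : ∀ i k, PLinVanish (L i k) (x i) ↔ ∑ a, L i k a * repOf x ⟨i, a⟩ = 0 := by
    intro i k
    rw [hx i, pLinVanish_mk]
  constructor
  · intro h i k
    rw [key]
    obtain ⟨⟨j, rfl⟩, rfl⟩ := (fibEquiv φ i).surjective k
    have := h j
    simp only [linSys, MvPolynomial.eval_X] at this
    exact this
  · intro h j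
    have := (key _ _).mp (h (φ j) (fibEquiv φ (φ j) ⟨j, rfl⟩))
    simp only [linSys, MvPolynomial.eval_X]
    exact this

theorem lin_generic (φ : J → ι) {P : Set (PStack n) → Prop}
    (h : ZGen fun c => P (Sol X (linSys n φ) c)) :
    Generic fun L : SliceParams n (cnt φ) => P (X ∩ SliceZeros L) := by
  have := generic_comp_homeomorph (sliceHomeo n φ) h.generic
  simpa only [sol_linSys] using this

theorem exists_cnt (e : ι → ℕ) : (cnt (Sigma.fst : ((i : ι) × Fin (e i)) → ι)) = e := by
  funext i
  rw [cnt, Fintype.card_congr (Equiv.sigmaSubtype i), Fintype.card_fin]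

theorem sum_cnt (φ : J → ι) : ∑ i, cnt φ i = Fintype.card J := by
  simp only [cnt, Fintype.card_subtype]
  exact (Finset.card_eq_sum_card_fiberwise (fun _ _ => Finset.mem_univ _)).symm

end Linear

/-! ### The dimension of a variety -/

section Dim

universe u

variable {ι : Type u} [Fintype ι] [DecidableEq ι] {n : ι → ℕ} {X : Set (PStack n)}
  {K : Type*} [Field K] [Algebra ℂ K] {π : MvPolynomial (Coord n) ℂ →ₐ[ℂ] K}
  {κ : Type*} [Fintype κ] {y : κ → K} {D : ℕ}

/-- The extended system with coefficients `C` has exactly `N` solutions, and they depend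
differentiably on the coefficients near `C`. -/
def FibreOK {J : Type*} [Fintype J] {S : J → Type} [∀ j, Fintype (S j)]
    (π : MvPolynomial (Coord n) ℂ →ₐ[ℂ] K) (g : ∀ j, S j → MvPolynomial (Coord n) ℂ) (N : ℕ)
    (C : (j : J ⊕ ι) × ExtS S n j → ℂ) : Prop :=
  (incFibre π (extPoly g) extB C).Finite ∧
        (incFibre π (extPoly g) extB C).ncard = N ∧ SmoothAt (incFibre π (extPoly g) extB) C

theorem IsCone.exists_fibreOK {J : Type*} [Fintype J] {S : J → Type} [∀ j, Fintype (S j)]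
    {g : ∀ j, S j → MvPolynomial (Coord n) ℂ} (H : IsCone X π) (hne : X.Nonempty)
    (hg : HomSys g) (hy : IsTranscendenceBasis ℂ y)
    (hD : Fintype.card κ = D + Fintype.card ι) (hJ : Fintype.card J = D) :
    ∃ N, ZGen (FibreOK π g N) := by
  obtain ⟨χ, T, hχ, -⟩ := H.exists_basis hne
  obtain ⟨χJ, hχJ⟩ := H.exists_sysPivot hne hg
  obtain ⟨N, h, -⟩ := H.section_finite hg hy hD hJ hχJ hχ
  exact ⟨N, h⟩

theorem IsCone.sol_of_fibreOK {J : Type*} [Fintype J] {S : J → Type} [∀ j, Fintype (S j)]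
    {g : ∀ j, S j → MvPolynomial (Coord n) ℂ} (H : IsCone X π) (hg : HomSys g) {N : ℕ}
    (h : ZGen (FibreOK π g N)) : ZGen fun c => (Sol X g c).Finite ∧ (Sol X g c).ncard = N :=
  H.sol_of_fibre hg (h.mono fun _ hC => ⟨hC.1, hC.2.1⟩)

/-- Every type `e` in the multidimension has `|e|` equal to the transcendence degree of `K` minus
the number of factors: otherwise general slices of type `e` are empty or infinite. -/
theorem IsCone.sum_eq_of_mem_mdim (H : IsCone X π) (hne : X.Nonempty)
    (hy : IsTranscendenceBasis ℂ y) (hD : Fintype.card κ = D + Fintype.card ι) {e : ι → ℕ}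
    (he : e ∈ MDim X) : ∑ i, e i = D := by
  obtain ⟨J, _, φ, rfl⟩ : ∃ (J : Type u) (_ : Fintype J) (φ : J → ι), cnt φ = e :=
    ⟨_, inferInstance, _, exists_cnt e⟩
  rw [sum_cnt]
  rcases lt_trichotomy (Fintype.card J) D with h | h | h
  · rcases H.sol_empty_or_infinite hne (linSys_hom φ) hy hD h with h | h
    · obtain ⟨L, h1, -, h2⟩ := generic_exists (generic_and (lin_generic φ (P := (· = ∅)) h) he.2)
      rw [h1] at h2
      exact absurd h2 (by simp)
    · obtain ⟨L, h1, h2, -⟩ := generic_exists (generic_and (lin_generic φ (P := Set.Infinite) h) he.2)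
      exact absurd h2 h1
  · exact h
  · obtain ⟨L, h1, -, h2⟩ := generic_exists (generic_and (lin_generic φ (P := (· = ∅))
      (H.sol_empty hne (linSys_hom φ) hy hD h)) he.2)
    rw [h1] at h2
    exact absurd h2 (by simp)

/-- The multidimension is nonempty. For a transcendence basis of dehomogenised coordinates `T`,
slices by one linear form in the factor of each `p ∈ T` are nonempty; dominance is checked by
`univMap_injective_of_specialization` with constants for which the pivot coefficients become the
elements of the transcendence basis: the equation of `p` is then the proportionality of the
coordinate `p` to the coordinate that normalises its factor. -/
theorem IsCone.exists_mem_mdim (H : IsCone X π) (hne : X.Nonempty) :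
    ∃ (T : Set (Coord n)) (_ : Fintype T) (y : T ⊕ ι → K), IsTranscendenceBasis ℂ y ∧
      ∃ e, e ∈ MDim X := by
  classical
  obtain ⟨χ, T, hχ, hT, hy⟩ := H.exists_basis hne
  refine ⟨T, inferInstance, _, hy, ?_⟩
  let φ : T → ι := fun p => p.1.1
  obtain ⟨N, hN, hpos⟩ := H.section_finite (D := Fintype.card T) (linSys_hom φ) hy (by simp) rfl
    (χJ := fun p => χ p.1.1) (fun p => hχ _) hχ
  have hN0 : 0 < N := by
    apply hpos
    -- The equation of `p` is `c * x χ - x p = 0` and the normalising equations are `c * x χ = 1`.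
    let l : FreeSlot (extPivot (n := n) (S := fun p : T => Fin (n (φ p) + 1))
        (fun p => χ p.1.1) χ) → ℂ := fun q =>
      match q with
      | ⟨⟨.inl p, a⟩, _⟩ => if (show Fin (n p.1.1 + 1) from a) = p.1.2 then -1 else 0
      | ⟨⟨.inr _, _⟩, _⟩ => 0
    refine univMap_injective_of_specialization _ _ _ l ?_
    convert hy.1 using 1
    funext j
    rw [univCoeff_pivot]
    have hl : ∀ a, (freeCoord K (extPivot (n := n) (S := fun p : T => Fin (n (φ p) + 1))
        (fun p => χ p.1.1) χ) ⟨j, a⟩).eval (fun p => algebraMap ℂ K (l p)) =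
        algebraMap ℂ K (match j, a with
          | .inl p, a => if (show Fin (n p.1.1 + 1) from a) = p.1.2 then -1 else 0
          | .inr _, _ => 0) := by
      intro a
      rw [freeCoord]
      split_ifs with h
      · rw [MvPolynomial.eval_X]
        cases j <;> rfl
      · rcases j with p | i
        · simp only [ne_eq, not_not] at h
          have : (show Fin (n p.1.1 + 1) from a) ≠ p.1.2 := fun h' => hT p.1 p.2 (by
            rw [← h']; exact h)
          simp only [map_zero]
          rw [if_neg this, map_zero]
        · simp
    simp only [map_mul, map_sub, map_sum, MvPolynomial.eval_C, hl]
    rcases j with p | i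
    · simp only [extB, Sum.elim_inl]
      have : ∀ a : Fin (n p.1.1 + 1), algebraMap ℂ K (if a = p.1.2 then -1 else 0) *
          π (MvPolynomial.X ⟨p.1.1, a⟩) = if a = p.1.2 then -π (MvPolynomial.X p.1) else 0 := by
        intro a
        split_ifs with h
        · subst h; simp
        · simp
      have h2 := Finset.sum_congr (rfl : Finset.univ = Finset.univ) fun a _ => this a
      rw [Finset.sum_ite_eq' Finset.univ p.1.2, if_pos (Finset.mem_univ _)] at h2
      rw [div_eq_inv_mul]
      refine congrArg₂ _ rfl ?_
      refine (congrArg₂ _ rfl h2).trans ?_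
      simp
    · simp [extB, extPoly, extPivot]
  refine ⟨cnt φ, fun i => ?_, ?_⟩
  · have : cnt φ i = Fintype.card {p : T // φ p = i} := rfl
    rw [this]
    have hinj : Function.Injective (fun p : {p : T // φ p = i} =>
        (⟨Fin.cast (congrArg (fun i => n i + 1) p.2) p.1.1.2, fun h => hT p.1.1 p.1.2 (by
          obtain ⟨⟨⟨j, a⟩, hp⟩, rfl⟩ := p
          simpa [φ] using h)⟩ : {a : Fin (n i + 1) // a ≠ χ i})) := by
      rintro ⟨⟨⟨j, a⟩, hp⟩, rfl⟩ ⟨⟨⟨j', a'⟩, hp'⟩, h'⟩ h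
      have : j' = j := h'
      subst this
      simpa using h
    have := Fintype.card_le_of_injective _ hinj
    simpa using this
  · refine lin_generic φ (P := fun A => A.Finite ∧ A.Nonempty) ?_
    refine (H.sol_of_fibre (linSys_hom φ) (hN.mono fun _ h => ⟨h.1, h.2.1⟩)).mono fun c hc => ?_
    exact ⟨hc.1, Set.nonempty_of_ncard_ne_zero (by omega)⟩

/-- The dimension of `X` is the transcendence degree of `K` minus the number of factors. -/
theorem IsCone.dimOf_eq (H : IsCone X π) (hne : X.Nonempty) :
    ∃ (T : Set (Coord n)) (_ : Fintype T) (y : T ⊕ ι → K), IsTranscendenceBasis ℂ y ∧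
      Fintype.card (T ⊕ ι) = dimOf X + Fintype.card ι := by
  obtain ⟨T, _, y, hy, e, he⟩ := H.exists_mem_mdim hne
  refine ⟨T, inferInstance, y, hy, ?_⟩
  have h1 : {m | ∃ e ∈ MDim X, ∑ i, e i = m} = {Fintype.card T} := by
    ext m
    constructor
    · rintro ⟨e, he, rfl⟩
      exact H.sum_eq_of_mem_mdim hne hy (by simp) he
    · rintro rfl
      exact ⟨e, he, H.sum_eq_of_mem_mdim hne hy (by simp) he⟩
  rw [dimOf, h1, csSup_singleton, Fintype.card_sum]

end Dim

/-! ### Multidegrees and multinomial coefficients -/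

section Count

variable {ι : Type*} [Fintype ι] [DecidableEq ι] {n : ι → ℕ} {X : Set (PStack n)}
  {J : Type*} [Fintype J]

/-- The number of points of a general section by the linear forms selected by `φ` is the multidegree
of type `cnt φ`. -/
theorem deg_eq_of_le (φ : J → ι) {N : ℕ}
    (hN : ZGen fun c => (Sol X (linSys n φ) c).Finite ∧ (Sol X (linSys n φ) c).ncard = N)
    (Deg : (ι → ℕ) → ℕ) (hDeg : ∀ e ∈ MDim X, DegIs X e (Deg e))
    (hDeg0 : ∀ e : ι → ℕ, (∀ i, e i ≤ n i) → e ∉ MDim X → Deg e = 0)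
    (hle : ∀ i, cnt φ i ≤ n i) : N = Deg (cnt φ) := by
  have hG := lin_generic φ (P := fun A => A.Finite ∧ A.ncard = N) hN
  by_cases he : cnt φ ∈ MDim X
  · obtain ⟨L, h1, h2⟩ := generic_exists (generic_and hG (hDeg _ he))
    rw [← h1.2, h2.2]
  · rw [hDeg0 _ hle he]
    by_contra h
    exact he ⟨hle, generic_mono hG fun L hL =>
      ⟨hL.1, Set.nonempty_of_ncard_ne_zero (by rw [hL.2]; exact h)⟩⟩

/-- More than `n i` general linear forms in the factor `i` have no common zero, since the
determinant of `n i + 1` of them is nonzero. -/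
theorem count_eq_zero_of_lt (φ : J → ι) {N : ℕ}
    (hN : ZGen fun c => (Sol X (linSys n φ) c).Finite ∧ (Sol X (linSys n φ) c).ncard = N)
    {i : ι} (hi : n i < cnt φ i) : N = 0 := by
  have hcard : Fintype.card (Fin (n i + 1)) ≤ Fintype.card {j // φ j = i} := by
    rw [Fintype.card_fin]
    exact hi
  obtain ⟨ε⟩ := Function.Embedding.nonempty_of_card_le hcard
  -- coefficient matrix of `n i + 1` of the forms in the factor `i`
  let pos : Fin (n i + 1) → Fin (n i + 1) → (j : J) × Fin (n (φ j) + 1) := fun b a =>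
    ⟨(ε b).1, Fin.cast (congrArg (fun i => n i + 1) (ε b).2.symm) a⟩
  have hpos : ∀ b a b' a', pos b a = pos b' a' → b = b' ∧ a = a' := by
    intro b a b' a' h
    have h1 : b = b' := ε.injective (Subtype.ext (congrArg Sigma.fst h))
    subst h1
    refine ⟨rfl, ?_⟩
    have := eq_of_heq (Sigma.mk.inj h).2
    simpa using this
  have hdet : ZGen fun c => (Matrix.of fun b a => c (pos b a)).det ≠ 0 := by
    refine ⟨(Matrix.of fun b a => (MvPolynomial.X (pos b a) : MvPolynomial _ ℂ)).det, ?_, ?_⟩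
    · intro h
      classical
      have h2 := congrArg (MvPolynomial.eval fun p => if ∃ b, p = pos b b then (1:ℂ) else 0) h
      rw [RingHom.map_det, map_zero] at h2
      refine one_ne_zero (α := ℂ) ?_
      rw [← h2]
      refine (Matrix.det_one (n := Fin (n i + 1))).symm.trans (congrArg Matrix.det ?_)
      ext b a
      simp only [RingHom.mapMatrix_apply, Matrix.map_apply, Matrix.of_apply, MvPolynomial.eval_X,
        Matrix.one_apply]
      have : (∃ b', pos b a = pos b' b') ↔ b = a := by
        refine ⟨?_, fun h => ⟨b, by rw [h]⟩⟩
        rintro ⟨b', hb'⟩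
        obtain ⟨h1, h2⟩ := hpos _ _ _ _ hb'
        rw [h1, h2]
      simp only [this]
    · intro c hc h
      apply hc
      rw [RingHom.map_det, ← h]
      congr 1
      ext b a
      simp
  obtain ⟨c, hc, hc'⟩ := (hN.and hdet).exists
  rw [← hc.2, Set.ncard_eq_zero hc.1, Set.eq_empty_iff_forall_notMem]
  rintro x ⟨-, hx⟩
  refine repOf_nz x i (Matrix.eq_zero_of_mulVec_eq_zero hc' ?_)
  funext b
  have h1 := hx (ε b).1
  simp only [linSys, MvPolynomial.eval_X] at h1
  obtain ⟨j, hj⟩ : ∃ j, j = ε b := ⟨_, rfl⟩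
  have key : ∀ q : {j // φ j = i}, ∑ a, c ⟨q.1, a⟩ * repOf x ⟨φ q.1, a⟩ = 0 →
      ∑ a, c ⟨q.1, Fin.cast (congrArg (fun i => n i + 1) q.2.symm) a⟩ * repOf x ⟨i, a⟩ = 0 := by
    rintro ⟨j, rfl⟩ h
    exact h
  exact key _ h1

/-- the number of maps with prescribed fibre sizes is a multinomial coefficient -/
theorem card_cnt_eq (d : ℕ) (e : ι → ℕ) (he : ∑ i, e i = d) :
    (Finset.univ.filter fun φ : Fin d → ι => cnt φ = e).card =
      Nat.multinomial Finset.univ e := by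
  have h1 : (∑ i, (MvPolynomial.X i : MvPolynomial ι ℕ)) ^ d =
      ∑ φ : Fin d → ι, MvPolynomial.monomial (Finsupp.equivFunOnFinite.symm (cnt φ)) 1 := by
    rw [Fintype.sum_pow]
    refine Finset.sum_congr rfl fun φ _ => ?_
    rw [MvPolynomial.monomial_eq, map_one, one_mul, Finsupp.prod_fintype _ _ (by simp)]
    rw [← Finset.prod_fiberwise Finset.univ φ]
    refine Finset.prod_congr rfl fun i _ => ?_
    rw [Finset.prod_congr rfl (g := fun _ => (MvPolynomial.X i : MvPolynomial ι ℕ))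
      fun j hj => by rw [(Finset.mem_filter.mp hj).2], Finset.prod_const]
    simp [cnt, Fintype.card_subtype]
  have h2 := Finset.sum_pow_eq_sum_piAntidiag Finset.univ
    (fun i => (MvPolynomial.X i : MvPolynomial ι ℕ)) d
  have h3 := congrArg (MvPolynomial.coeff (Finsupp.equivFunOnFinite.symm e)) (h1.symm.trans h2)
  have h4 : ∀ k : ι → ℕ, (Nat.multinomial Finset.univ k : MvPolynomial ι ℕ) *
      ∏ i, MvPolynomial.X i ^ k i = MvPolynomial.monomial (Finsupp.equivFunOnFinite.symm k)
        (Nat.multinomial Finset.univ k) := by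
    intro k
    rw [MvPolynomial.monomial_eq, Finsupp.prod_fintype _ _ (by simp)]
    simp
  simp only [h4, MvPolynomial.coeff_sum, MvPolynomial.coeff_monomial,
    EmbeddingLike.apply_eq_iff_eq] at h3
  rw [Finset.sum_ite_eq', if_pos (by simp [he])] at h3
  rw [← h3, Finset.card_filter]

/-- Collecting the maps `φ` by type; the types exceeding some `n i` do not contribute. -/
theorem sum_cnt_eq (d : ℕ) (W : (ι → ℕ) → ℕ) (hW : ∀ e i, n i < e i → W e = 0) :
    ∑ φ : Fin d → ι, W (cnt φ) = ∑ e ∈ Finset.univ.filter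
          (fun e : (i : ι) → Fin (n i + 1) => ∑ i, (e i : ℕ) = d),
        Nat.multinomial Finset.univ (fun i => (e i : ℕ)) * W (fun i => (e i : ℕ)) := by
  have h1 : ∑ φ : Fin d → ι, W (cnt φ) = ∑ φ : Fin d → ι with ∀ i, cnt φ i ≤ n i, W (cnt φ) := by
    symm
    refine Finset.sum_filter_of_ne fun φ _ h i => ?_
    by_contra hi
    exact h (hW _ i (not_le.mp hi))
  rw [h1]
  let F : (Fin d → ι) → ((i : ι) → Fin (n i + 1)) := fun φ i => Fin.ofNat (n i + 1) (cnt φ i)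
  have hF : ∀ φ, (∀ i, cnt φ i ≤ n i) → ∀ i, (F φ i : ℕ) = cnt φ i := by
    intro φ h i
    simp only [F, Fin.ofNat]
    exact Nat.mod_eq_of_lt (Nat.lt_succ_of_le (h i))
  rw [← Finset.sum_fiberwise_of_maps_to (g := F) (t := Finset.univ.filter
    (fun e : (i : ι) → Fin (n i + 1) => ∑ i, (e i : ℕ) = d))]
  · refine Finset.sum_congr rfl fun e he => ?_
    rw [Finset.mem_filter] at he
    rw [← card_cnt_eq d _ he.2, ← smul_eq_mul, ← Finset.sum_const]
    have : (Finset.univ.filter fun φ : Fin d → ι => ∀ i, cnt φ i ≤ n i).filter (fun φ => F φ = e) =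
        Finset.univ.filter fun φ : Fin d → ι => cnt φ = fun i => (e i : ℕ) := by
      ext φ
      simp only [Finset.mem_filter, Finset.mem_univ, true_and]
      constructor
      · rintro ⟨h1, rfl⟩
        funext i
        exact (hF φ h1 i).symm
      · intro h
        have h1 : ∀ i, cnt φ i ≤ n i := fun i => by rw [h]; exact Nat.le_of_lt_succ (e i).2
        refine ⟨h1, funext fun i => Fin.ext ?_⟩
        rw [hF φ h1, h]
    rw [this]
    refine Finset.sum_congr rfl fun φ hφ => ?_
    rw [(Finset.mem_filter.mp hφ).2]
  · intro φ hφ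
    rw [Finset.mem_filter] at hφ
    simp only [Finset.mem_filter, Finset.mem_univ, true_and, hF φ hφ.2]
    rw [sum_cnt, Fintype.card_fin]

end Count

/-! ### Constancy of the number of solutions near a special system -/

section Global
open Filter Topology

variable {ι : Type*} [Fintype ι] [DecidableEq ι] {n : ι → ℕ} {J : Type*} [Fintype J]
  {S : J → Type} [∀ j, Fintype (S j)] {X : Set (PStack n)}
  {g : ∀ j, S j → MvPolynomial (Coord n) ℂ}
  {K : Type*} [Field K] [Algebra ℂ K] {π : MvPolynomial (Coord n) ℂ →ₐ[ℂ] K}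

/-- near `(c₀, v₀)` the family `Φ` is the graph of a function continuous at `c₀` -/
def LocAt {E V : Type*} [TopologicalSpace E] [TopologicalSpace V] (Φ : E → Set V) (c₀ : E)
    (v₀ : V) : Prop :=
  ∃ ψ : E → V, ContinuousAt ψ c₀ ∧ ψ c₀ = v₀ ∧ ∀ᶠ z in 𝓝 (c₀, v₀), z.2 ∈ Φ z.1 ↔ z.2 = ψ z.1

/-- normalisation of a coordinate vector by the forms `u` -/
noncomputable def normVec (u v : Coord n → ℂ) : Coord n → ℂ :=
  scale (fun i => (∑ a, u ⟨i, a⟩ * v ⟨i, a⟩)⁻¹) v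

theorem normOK_ptOf {u v : Coord n → ℂ} (hv : BlockNZ v) :
    NormOK u (ptOf v hv) ↔ ∀ i, ∑ a, u ⟨i, a⟩ * v ⟨i, a⟩ ≠ 0 := by
  obtain ⟨t, ht, hr⟩ := (ptOf_eq_iff hv (repOf_nz (ptOf v hv))).mp (ptOf_repOf _).symm
  refine forall_congr' fun i => ?_
  rw [hr]
  simp only [scale, mul_left_comm (u _), ← Finset.mul_sum, ne_eq, mul_eq_zero, ht i, false_or]

theorem normVec_norm {u v : Coord n → ℂ} (h : ∀ i, ∑ a, u ⟨i, a⟩ * v ⟨i, a⟩ ≠ 0) (i : ι) :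
    ∑ a, u ⟨i, a⟩ * normVec u v ⟨i, a⟩ = 1 := by
  have : ∀ a, u ⟨i, a⟩ * normVec u v ⟨i, a⟩ = (∑ a, u ⟨i, a⟩ * v ⟨i, a⟩)⁻¹ *
      (u ⟨i, a⟩ * v ⟨i, a⟩) := fun a => mul_left_comm _ _ _
  simp only [this]
  rw [← Finset.mul_sum]
  exact inv_mul_cancel₀ (h i)

theorem normVec_nz {u v : Coord n → ℂ} (hv : BlockNZ v)
    (h : ∀ i, ∑ a, u ⟨i, a⟩ * v ⟨i, a⟩ ≠ 0) : BlockNZ (normVec u v) :=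
  scale_nz (fun i => inv_ne_zero (h i)) hv

theorem ptOf_normVec {u v : Coord n → ℂ} (hv : BlockNZ v)
    (h : ∀ i, ∑ a, u ⟨i, a⟩ * v ⟨i, a⟩ ≠ 0) :
    ptOf (normVec u v) (normVec_nz hv h) = ptOf v hv :=
  ptOf_scale (fun i => inv_ne_zero (h i)) hv

theorem normRep_ptOf {u v : Coord n → ℂ} (hv : BlockNZ v)
    (h : ∀ i, ∑ a, u ⟨i, a⟩ * v ⟨i, a⟩ ≠ 0) : normRep u (ptOf v hv) = normVec u v := by
  rw [← ptOf_normVec hv h]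
  exact (normRep_unique _ (normVec_norm h)).2

theorem continuous_equation (j : J) : Continuous fun z : ((j : J) × S j → ℂ) × (Coord n → ℂ) =>
    ∑ a, z.1 ⟨j, a⟩ * MvPolynomial.eval z.2 (g j a) := by
  refine continuous_finsetSum _ fun a _ => Continuous.mul ?_ ?_
  · exact (continuous_apply _).comp continuous_fst
  · exact (continuous_mvPolynomial_eval _).comp continuous_snd

theorem continuousAt_normVec {u v : Coord n → ℂ}
    (h : ∀ i, ∑ a, u ⟨i, a⟩ * v ⟨i, a⟩ ≠ 0) : ContinuousAt (normVec u) v := by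
  refine continuousAt_pi.mpr fun p => ?_
  refine ContinuousAt.mul (ContinuousAt.inv₀ ?_ (h p.1)) (continuous_apply _).continuousAt
  exact (continuous_finsetSum _ fun a _ => by fun_prop).continuousAt

/-- vectors of the cone with blocks of norm one -/
def unitCone (π : MvPolynomial (Coord n) ℂ →ₐ[ℂ] K) : Set (Coord n → ℂ) :=
  {v | (∀ f, π f = 0 → MvPolynomial.eval v f = 0) ∧ ∀ i, ‖fun a => v ⟨i, a⟩‖ = 1}

theorem isCompact_unitCone (π : MvPolynomial (Coord n) ℂ →ₐ[ℂ] K) : IsCompact (unitCone π) := by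
  refine Metric.isCompact_of_isClosed_isBounded ?_ ?_
  · have : unitCone π = (⋂ f, ⋂ (_ : π f = 0), {v | MvPolynomial.eval v f = 0}) ∩
        ⋂ i, {v | ‖fun a => v ⟨i, a⟩‖ = 1} := by
      ext; simp [unitCone]
    rw [this]
    refine IsClosed.inter (isClosed_iInter fun f => isClosed_iInter fun _ =>
      isClosed_eq (continuous_mvPolynomial_eval f) continuous_const)
      (isClosed_iInter fun i => isClosed_eq ?_ continuous_const)
    exact (continuous_pi fun a => continuous_apply _).norm
  · refine (Metric.isBounded_closedBall (x := 0) (r := 1)).subset fun v hv => ?_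
    rw [mem_closedBall_zero_iff, pi_norm_le_iff_of_nonneg zero_le_one]
    rintro ⟨i, a⟩
    rw [← hv.2 i]
    exact norm_le_pi_norm (fun a => v ⟨i, a⟩) a

theorem unitCone_nz {v : Coord n → ℂ} (hv : v ∈ unitCone π) : BlockNZ v := by
  intro i hi
  have := hv.2 i
  rw [hi] at this
  simp at this

theorem exists_unitCone (H : IsCone X π) {x : PStack n} (hx : x ∈ X) :
    ∃ v, ∃ hv : BlockNZ v, v ∈ unitCone π ∧ ptOf v hv = x := by
  have ht : ∀ i, ((‖fun a => repOf x ⟨i, a⟩‖ : ℂ))⁻¹ ≠ 0 := fun i =>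
    inv_ne_zero (by exact_mod_cast norm_ne_zero_iff.mpr (repOf_nz x i))
  refine ⟨scale _ (repOf x), scale_nz ht (repOf_nz x), ⟨?_, fun i => ?_⟩, ?_⟩
  · rw [← H.mem_iff (scale_nz ht (repOf_nz x)), ptOf_scale ht (repOf_nz x), ptOf_repOf]
    exact hx
  · have : (fun a => scale (fun i => ((‖fun a => repOf x ⟨i, a⟩‖ : ℂ))⁻¹) (repOf x) ⟨i, a⟩) =
      ((‖fun a => repOf x ⟨i, a⟩‖ : ℂ))⁻¹ • fun a => repOf x ⟨i, a⟩ := rfl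
    rw [this, norm_smul, norm_inv, Complex.norm_real, norm_norm]
    exact inv_mul_cancel₀ (norm_ne_zero_iff.mpr (repOf_nz x i))
  · rw [ptOf_scale ht (repOf_nz x), ptOf_repOf]

/-- If every normalised solution of the system with coefficients `c₀` continues uniquely to nearby
coefficients, then the number of solutions is locally constant at `c₀`: by compactness of
`unitCone`, no solution of a nearby system stays away from those of `c₀`. -/
theorem sol_ncard_eventually (H : IsCone X π) (hg : HomSys g) {c₀ : (j : J) × S j → ℂ}
    {u : Coord n → ℂ} (hu : ∀ x ∈ Sol X g c₀, NormOK u x) (hfin : (Sol X g c₀).Finite)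
    (hloc : ∀ v ∈ NormSol X g c₀ u, LocAt (fun c => NormSol X g c u) c₀ v) :
    ∀ᶠ c in 𝓝 c₀, (Sol X g c).Finite ∧ (Sol X g c).ncard = (Sol X g c₀).ncard := by
  have hns : ∀ c, (∀ x ∈ Sol X g c, NormOK u x) → NormSol X g c u = normRep u '' Sol X g c := by
    intro c hc
    rw [normSol_eq, (Set.inter_eq_left.mpr fun x hx => hc x hx :
      Sol X g c ∩ {x | NormOK u x} = Sol X g c)]
  have hF : (NormSol X g c₀ u).Finite := by rw [hns c₀ hu]; exact hfin.image _
  choose! ψ hψc hψ0 hψ using hloc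
  -- near `c₀` every solution is one of the local solutions
  have h1 : ∀ᶠ c in 𝓝 c₀, ∀ v ∈ unitCone π, v ∈ unitCone π →
      (∀ j, ∑ a, c ⟨j, a⟩ * MvPolynomial.eval v (g j a) = 0) →
      (∀ i, ∑ a, u ⟨i, a⟩ * v ⟨i, a⟩ ≠ 0) ∧ ∃ p ∈ NormSol X g c₀ u, normVec u v = ψ p c := by
    refine (isCompact_unitCone π).eventually_forall_of_forall_eventually fun v₁ hv₁ => ?_
    have hv₁nz := unitCone_nz hv₁
    by_cases hz : ∀ j, ∑ a, c₀ ⟨j, a⟩ * MvPolynomial.eval v₁ (g j a) = 0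
    swap
    · -- away from the base section there is nothing to show
      push Not at hz
      obtain ⟨j, hj⟩ := hz
      have hj' : ∀ᶠ z in 𝓝 (c₀, v₁), ∑ a, z.1 ⟨j, a⟩ * MvPolynomial.eval z.2 (g j a) ≠ 0 :=
        (continuous_equation j).continuousAt.eventually_ne hj
      filter_upwards [hj'] with z hz _ h
      exact absurd (h j) hz
    · have hx₁ : ptOf v₁ hv₁nz ∈ Sol X g c₀ :=
        (hg.sol_iff c₀ hv₁nz).mpr ⟨(H.mem_iff hv₁nz).mpr hv₁.1, hz⟩
      have hu₁ := (normOK_ptOf hv₁nz).mp (hu _ hx₁)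
      have hp : normVec u v₁ ∈ NormSol X g c₀ u :=
        ⟨normVec_nz hv₁nz hu₁, by rw [ptOf_normVec hv₁nz hu₁]; exact hx₁, normVec_norm hu₁⟩
      have e1 : ∀ᶠ z : ((j : J) × S j → ℂ) × (Coord n → ℂ) in 𝓝 (c₀, v₁),
          ∀ i, ∑ a, u ⟨i, a⟩ * z.2 ⟨i, a⟩ ≠ 0 := by
        rw [eventually_all]
        intro i
        have : Continuous fun z : ((j : J) × S j → ℂ) × (Coord n → ℂ) =>
            ∑ a, u ⟨i, a⟩ * z.2 ⟨i, a⟩ := continuous_finsetSum _ fun a _ => by fun_prop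
        exact this.continuousAt.eventually_ne (hu₁ i)
      have e2 : Tendsto (fun z : ((j : J) × S j → ℂ) × (Coord n → ℂ) => (z.1, normVec u z.2))
          (𝓝 (c₀, v₁)) (𝓝 (c₀, normVec u v₁)) :=
        continuousAt_fst.tendsto.prodMk_nhds
          ((continuousAt_normVec hu₁).tendsto.comp continuousAt_snd.tendsto)
      have e3 : ∀ᶠ z : ((j : J) × S j → ℂ) × (Coord n → ℂ) in 𝓝 (c₀, v₁), BlockNZ z.2 := by
        filter_upwards [e1] with z hz i hi
        refine hz i (Finset.sum_eq_zero fun a _ => ?_)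
        rw [show z.2 ⟨i, a⟩ = 0 from congrFun hi a, mul_zero]
      have e4 : ∀ᶠ z : ((j : J) × S j → ℂ) × (Coord n → ℂ) in 𝓝 (c₀, v₁), z.2 ∈ unitCone π →
          (∀ j, ∑ a, z.1 ⟨j, a⟩ * MvPolynomial.eval z.2 (g j a) = 0) →
          (∀ i, ∑ a, u ⟨i, a⟩ * z.2 ⟨i, a⟩ ≠ 0) ∧
            ∃ p ∈ NormSol X g c₀ u, normVec u z.2 = ψ p z.1 := by
        filter_upwards [e1, e3, e2.eventually (hψ _ hp)] with z h1 h2 h3 h4 h5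
        refine ⟨h1, _, hp, h3.mp ?_⟩
        refine ⟨normVec_nz h2 h1, ?_, normVec_norm h1⟩
        rw [ptOf_normVec h2 h1]
        exact (hg.sol_iff _ h2).mpr ⟨(H.mem_iff h2).mpr h4.1, h5⟩
      exact e4
  -- the local solutions are solutions, and they are distinct
  have h2 : ∀ᶠ c in 𝓝 c₀, ∀ p ∈ NormSol X g c₀ u, ψ p c ∈ NormSol X g c u := by
    rw [eventually_all_finite hF]
    intro p hp
    have : Tendsto (fun c => (c, ψ p c)) (𝓝 c₀) (𝓝 (c₀, p)) := by
      have := (hψc p hp).tendsto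
      rw [hψ0 p hp] at this
      exact tendsto_id.prodMk_nhds this
    filter_upwards [this.eventually (hψ p hp)] with c hc
    exact hc.mpr rfl
  have h3 : ∀ᶠ c in 𝓝 c₀, ∀ p ∈ NormSol X g c₀ u, ∀ q ∈ NormSol X g c₀ u, p ≠ q →
      ψ p c ≠ ψ q c := by
    rw [eventually_all_finite hF]
    intro p hp
    rw [eventually_all_finite hF]
    intro q hq
    rw [eventually_imp_distrib_left]
    intro hpq
    have hne : ψ p c₀ ≠ ψ q c₀ := by rwa [hψ0 p hp, hψ0 q hq]
    exact ((hψc p hp).prodMk (hψc q hq)).tendsto.eventually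
      ((isOpen_ne_fun continuous_fst continuous_snd).mem_nhds hne)
  filter_upwards [h1, h2, h3] with c h1 h2 h3
  have hOK : ∀ x ∈ Sol X g c, NormOK u x ∧ ∃ p ∈ NormSol X g c₀ u, normRep u x = ψ p c := by
    intro x hx
    obtain ⟨v, hv, hvu, rfl⟩ := exists_unitCone H hx.1
    obtain ⟨h4, h5⟩ := h1 v hvu hvu ((hg.sol_iff c hv).mp hx).2
    rw [normRep_ptOf hv h4]
    exact ⟨(normOK_ptOf hv).mpr h4, h5⟩
  have e1 : NormSol X g c u = (fun p => ψ p c) '' NormSol X g c₀ u := by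
    rw [hns c fun x hx => (hOK x hx).1]
    apply Set.Subset.antisymm
    · rintro _ ⟨x, hx, rfl⟩
      obtain ⟨p, hp, h⟩ := (hOK x hx).2
      exact ⟨p, hp, h.symm⟩
    · rw [← hns c fun x hx => (hOK x hx).1]
      rintro _ ⟨p, hp, rfl⟩
      exact h2 p hp
  have inj : ∀ c, (∀ x ∈ Sol X g c, NormOK u x) → Set.InjOn (normRep u) (Sol X g c) :=
    fun c hc => (normRep_injOn u).mono fun x hx => hc x hx
  have inj2 : Set.InjOn (fun p => ψ p c) (NormSol X g c₀ u) := fun p hp q hq h => by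
    by_contra hne
    exact h3 p hp q hq hne h
  constructor
  · refine Set.Finite.of_finite_image (f := normRep u) ?_ (inj c fun x hx => (hOK x hx).1)
    rw [← hns c fun x hx => (hOK x hx).1, e1]
    exact hF.image _
  · rw [← (inj c fun x hx => (hOK x hx).1).ncard_image, ← hns c fun x hx => (hOK x hx).1, e1,
      inj2.ncard_image, hns c₀ hu, (inj c₀ hu).ncard_image]

end Global

/-! ### Perturbing a product of linear forms -/

section Perturb
open Filter Topology

variable {J : Type*} [Fintype J] {E V : Type*} [NormedAddCommGroup E] [NormedSpace ℂ E]
  [CompleteSpace E] [NormedAddCommGroup V] [NormedSpace ℂ V]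

omit [Fintype J] in
theorem isInvertible_diag (T : (J → ℂ) →L[ℂ] (J → ℂ)) (U : J → ℂ) (hU : ∀ j, U j ≠ 0)
    (hT : ∀ r j, T r j = U j * r j) : T.IsInvertible := by
  refine ContinuousLinearMap.IsInvertible.of_inverse
    (g := ContinuousLinearMap.pi fun j => (U j)⁻¹ • ContinuousLinearMap.proj j) ?_ ?_
  · ext r j
    simp [hT, hU j]
  · ext r j
    simp [hT, hU j]

/-- Let the values `r` of the functions `l j` near zero determine a point `x r` of `M` near `v₀`,
differentiably. If the system `q (c₀, ·)` is the product of `l` with functions `U` that do not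
vanish at `v₀`, then the system `q (c, ·) = 0` on `M` has a unique solution near `v₀` for `c` near
`c₀`, by the implicit function theorem applied to `(c, r) ↦ q (c, x r)`, whose derivative in `r` is
diagonal with nonzero entries. -/
theorem locAt_of_factor {M : Set V} {l : V → J → ℂ} {q : E × V → J → ℂ} {U : V → J → ℂ}
    {c₀ : E} {v₀ : V} (hl : Continuous l) (hl0 : l v₀ = 0)
    (hq : ∃ q', HasStrictFDerivAt (𝕜 := ℂ) q q' (c₀, v₀))
    (hfac : ∀ v j, q (c₀, v) j = l v j * U v j)
    (hU : DifferentiableAt ℂ U v₀) (hU0 : ∀ j, U v₀ j ≠ 0)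
    {x : (J → ℂ) → V} (hx : ∃ x', HasStrictFDerivAt (𝕜 := ℂ) x x' 0) (hx0 : x 0 = v₀)
    (hM : ∀ᶠ z in 𝓝 ((0 : J → ℂ), v₀), (z.2 ∈ M ∧ l z.2 = z.1) ↔ z.2 = x z.1) :
    LocAt (fun c => {v | v ∈ M ∧ q (c, v) = 0}) c₀ v₀ := by
  classical
  obtain ⟨q', hq⟩ := hq
  obtain ⟨x', hx⟩ := hx
  have hxc : ContinuousAt x 0 := hx.continuousAt
  -- `x r` solves the perturbed system with right-hand side `r`
  have hxM : ∀ᶠ r in 𝓝 (0 : J → ℂ), x r ∈ M ∧ l (x r) = r := by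
    have ht : Tendsto (fun r => (r, x r)) (𝓝 0) (𝓝 ((0 : J → ℂ), v₀)) := by
      have := (continuousAt_id (x := (0 : J → ℂ))).prodMk hxc
      simpa [ContinuousAt, hx0] using this
    filter_upwards [ht.eventually hM] with r hr using hr.mpr rfl
  let G : E × (J → ℂ) → J → ℂ := fun z => q (z.1, x z.2)
  have hG : HasStrictFDerivAt G (q' ∘L
      ((ContinuousLinearMap.fst ℂ E (J → ℂ)).prod (x' ∘L ContinuousLinearMap.snd ℂ E (J → ℂ))))
      (c₀, 0) := by
    have h1 : HasStrictFDerivAt (fun z : E × (J → ℂ) => x z.2)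
        (x' ∘L ContinuousLinearMap.snd ℂ E (J → ℂ)) (c₀, 0) :=
      HasStrictFDerivAt.comp (c₀, (0 : J → ℂ)) (g := x) hx hasStrictFDerivAt_snd
    have h2 := (hasStrictFDerivAt_fst (𝕜 := ℂ) (p := (c₀, (0 : J → ℂ)))).prodMk h1
    refine HasStrictFDerivAt.comp (c₀, (0 : J → ℂ)) (g := q) ?_ h2
    simpa [hx0] using hq
  have hG0 : G (c₀, 0) = 0 := by
    funext j
    simp [G, hx0, hfac, hl0]
  have hUx : DifferentiableAt ℂ (fun r => U (x r)) 0 :=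
    DifferentiableAt.comp (0 : J → ℂ) (by rwa [hx0]) hx.hasFDerivAt.differentiableAt
  -- the partial derivative in `r` is diagonal with entries `U v₀ j`
  have hdiag : (fun r => G (c₀, r)) =ᶠ[𝓝 0] fun r j => r j * U (x r) j := by
    filter_upwards [hxM] with r hr
    funext j
    simp only [G, hfac, hr.2]
  have hd1 : HasFDerivAt (fun r => G (c₀, r)) ((q' ∘L
      ((ContinuousLinearMap.fst ℂ E (J → ℂ)).prod
        (x' ∘L ContinuousLinearMap.snd ℂ E (J → ℂ)))) ∘L .inr ℂ E (J → ℂ)) 0 :=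
    hG.hasFDerivAt.comp 0 (hasFDerivAt_prodMk_right c₀ (0 : J → ℂ))
  have hinv : ((q' ∘L ((ContinuousLinearMap.fst ℂ E (J → ℂ)).prod
        (x' ∘L ContinuousLinearMap.snd ℂ E (J → ℂ)))) ∘L .inr ℂ E (J → ℂ)).IsInvertible := by
    refine isInvertible_diag _ (U v₀) hU0 fun r j => ?_
    have h1 := (hasFDerivAt_pi'.mp hd1) j
    have h2 : HasFDerivAt (fun r : J → ℂ => r j * U (x r) j) _ 0 :=
      (ContinuousLinearMap.proj (R := ℂ) (φ := fun _ : J => ℂ) j).hasFDerivAt.mul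
        (hasFDerivAt_pi'.mp hUx.hasFDerivAt j)
    have h3 := h1.unique (h2.congr_of_eventuallyEq (hdiag.mono fun r hr => congrFun hr j))
    have h4 := congrArg (fun L => L r) h3
    simpa [hx0] using h4
  have hE2 := hG.eventually_apply_eq_iff_implicitFunctionOfProdDomain hinv
  have hE4 := hG.eventually_apply_implicitFunctionOfProdDomain hinv
  have hρ := hG.tendsto_implicitFunctionOfProdDomain hinv
  set ρ := hG.implicitFunctionOfProdDomain hinv with hρdef
  rw [hG0] at hE4
  simp only [hG0] at hE2
  have hρ0 : ρ c₀ = 0 := (hE2.self_of_nhds.mp hG0)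
  refine ⟨fun c => x (ρ c), ?_, by simp only [hρ0, hx0], ?_⟩
  · refine ContinuousAt.comp (g := x) (by rwa [hρ0]) ?_
    rw [ContinuousAt, hρ0]
    exact hρ
  have ht1 : Tendsto (fun z : E × V => z.1) (𝓝 (c₀, v₀)) (𝓝 c₀) := continuous_fst.tendsto _
  have ht2 : Tendsto (fun z : E × V => l z.2) (𝓝 (c₀, v₀)) (𝓝 0) := by
    have := (hl.comp continuous_snd).tendsto ((c₀, v₀) : E × V)
    simpa [hl0, Function.comp_def] using this
  have ht3 : Tendsto (fun z : E × V => (z.1, l z.2)) (𝓝 (c₀, v₀)) (𝓝 (c₀, (0 : J → ℂ))) := by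
    rw [nhds_prod_eq (y := (0 : J → ℂ))]
    exact ht1.prodMk ht2
  have ht4 : Tendsto (fun z : E × V => (l z.2, z.2)) (𝓝 (c₀, v₀)) (𝓝 ((0 : J → ℂ), v₀)) := by
    rw [nhds_prod_eq (x := (0 : J → ℂ))]
    exact ht2.prodMk (continuous_snd.tendsto _)
  filter_upwards [ht4.eventually hM, ht3.eventually hE2, ht1.eventually (hρ.eventually hxM),
    ht1.eventually hE4] with z h1 h2 h3 h4
  obtain ⟨c, v⟩ := z
  simp only at h1 h2 h3 h4 ⊢
  constructor
  · rintro ⟨hv, hq0⟩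
    have hv' := h1.mp ⟨hv, trivial⟩
    have : ρ c = l v := h2.mp (by simp only [G]; rw [← hv']; exact hq0)
    rw [this]; exact hv'
  · rintro rfl
    exact ⟨h3.1, h4⟩

end Perturb

/-! ### Multilinear forms -/

section Multilinear
open Filter Topology

variable {ι : Type*} [Fintype ι] [DecidableEq ι] {n : ι → ℕ} {J : Type*} [Fintype J]
  {X : Set (PStack n)}

/-- numbering of the multilinear monomials -/
noncomputable def enum (n : ι → ℕ) :
    Fin (Fintype.card ((i : ι) → Fin (n i + 1))) ≃ ((i : ι) → Fin (n i + 1)) :=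
  (Fintype.equivFin _).symm

/-- The system of general multilinear forms, one for each element of `J`. -/
noncomputable def mulSys (n : ι → ℕ) (J : Type*) :
    ∀ _ : J, Fin (Fintype.card ((i : ι) → Fin (n i + 1))) → MvPolynomial (Coord n) ℂ :=
  fun _ a => ∏ i, MvPolynomial.X ⟨i, enum n a i⟩

theorem mulSys_hom : HomSys (mulSys n J) where
  hom j t ht := ⟨∏ i, t i, Finset.prod_ne_zero_iff.mpr fun i _ => ht i, fun a v => by
    simp [mulSys, scale, Finset.prod_mul_distrib]⟩
  bpf v hv j := by
    choose a ha using fun i => Function.ne_iff.mp (hv i)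
    refine ⟨(enum n).symm a, ?_⟩
    simpa [mulSys, Finset.prod_eq_zero_iff] using ha

/-- The coefficients of the products over all factors of the linear forms `l j`. -/
noncomputable def mulParam (l : J → Coord n → ℂ) :
    (_ : J) × Fin (Fintype.card ((i : ι) → Fin (n i + 1))) → ℂ :=
  fun p => ∏ i, l p.1 ⟨i, enum n p.2 i⟩

/-- coefficients of the linear forms selected by `φ` -/
def linParam (φ : J → ι) (l : J → Coord n → ℂ) : (j : J) × Fin (n (φ j) + 1) → ℂ :=
  fun p => l p.1 ⟨φ p.1, p.2⟩

/-- the linear form `l` in the coordinates of the factor `i` -/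
def blockForm (l : Coord n → ℂ) (i : ι) (v : Coord n → ℂ) : ℂ := ∑ b, l ⟨i, b⟩ * v ⟨i, b⟩

omit [Fintype J] in
theorem mulParam_eval (l : J → Coord n → ℂ) (j : J) (v : Coord n → ℂ) :
    ∑ a, mulParam l ⟨j, a⟩ * MvPolynomial.eval v (mulSys n J j a) =
      ∏ i, blockForm (l j) i v := by
  simp only [blockForm, mulParam, mulSys, map_prod, MvPolynomial.eval_X, ← Finset.prod_mul_distrib]
  rw [Finset.prod_univ_sum, Fintype.piFinset_univ]
  exact (enum n).sum_comp fun a => ∏ i, l j ⟨i, a i⟩ * v ⟨i, a i⟩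

omit [Fintype ι] [DecidableEq ι] [Fintype J] in
theorem linParam_eval (φ : J → ι) (l : J → Coord n → ℂ) (j : J) (v : Coord n → ℂ) :
    ∑ a, linParam φ l ⟨j, a⟩ * MvPolynomial.eval v (linSys n φ j a) =
      blockForm (l j) (φ j) v := by
  simp [linParam, linSys, blockForm]

theorem contDiff_blockForm (l : Coord n → ℂ) (i : ι) :
    ContDiff ℂ 1 (blockForm l i) := by
  unfold blockForm
  exact ContDiff.sum fun b _ => contDiff_const.mul (contDiff_apply ℂ ℂ _)

variable {K : Type*} [Field K] [Algebra ℂ K] {π : MvPolynomial (Coord n) ℂ →ₐ[ℂ] K}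

/-- A point of the section by the linear forms selected by `φ`, at which the linear forms in the
other factors do not vanish, continues uniquely to a solution of nearby multilinear systems. -/
theorem locAt_mulSys (H : IsCone X π) (φ : J → ι) (l : J → Coord n → ℂ) (u : Coord n → ℂ)
    {v₀ : Coord n → ℂ} (hv₀ : v₀ ∈ NormSol X (linSys n φ) (linParam φ l) u)
    (hs : SmoothAt (incFibre π (extPoly (linSys n φ)) extB) (extParam (linParam φ l) u))
    (hne : ∀ j i, i ≠ φ j → blockForm (l j) i v₀ ≠ 0) :
    LocAt (fun c => NormSol X (mulSys n J) c u) (mulParam l) v₀ := by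
  classical
  have hlin := linSys_hom (n := n) φ
  rw [← incFibre_ext H hlin] at hv₀
  obtain ⟨Y, ⟨Y', hY⟩, hY0, hYe⟩ := hs v₀ hv₀
  rw [incFibre_ext H hlin] at hv₀
  let M : Set (Coord n → ℂ) := {v | ∃ hv : BlockNZ v, ptOf v hv ∈ X ∧ ∀ i, blockForm u i v = 1}
  have hMlin : ∀ c v, v ∈ NormSol X (linSys n φ) c u ↔ v ∈ M ∧
      ∀ j, ∑ a, c ⟨j, a⟩ * MvPolynomial.eval v (linSys n φ j a) = 0 := by
    intro c v
    constructor
    · rintro ⟨hv, h1, h2⟩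
      rw [hlin.sol_iff] at h1
      exact ⟨⟨hv, h1.1, h2⟩, h1.2⟩
    · rintro ⟨⟨hv, h1, h2⟩, h3⟩
      exact ⟨hv, (hlin.sol_iff c hv).mpr ⟨h1, h3⟩, h2⟩
  let q : ((_ : J) × Fin (Fintype.card ((i : ι) → Fin (n i + 1))) → ℂ) × (Coord n → ℂ) → J → ℂ :=
    fun z j => ∑ a, z.1 ⟨j, a⟩ * MvPolynomial.eval z.2 (mulSys n J j a)
  have hMmul : (fun c => NormSol X (mulSys n J) c u) = fun c => {v | v ∈ M ∧ q (c, v) = 0} := by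
    funext c
    ext v
    constructor
    · rintro ⟨hv, h1, h2⟩
      rw [mulSys_hom.sol_iff] at h1
      exact ⟨⟨hv, h1.1, h2⟩, funext h1.2⟩
    · rintro ⟨⟨hv, h1, h2⟩, h3⟩
      exact ⟨hv, (mulSys_hom.sol_iff c hv).mpr ⟨h1, fun j => congrFun h3 j⟩, h2⟩
  rw [hMmul]
  let lf : (Coord n → ℂ) → J → ℂ := fun v j => blockForm (l j) (φ j) v
  -- the linear forms are deformed by multiples of the normalising forms
  let c' : (J → ℂ) → (j : J) × Fin (n (φ j) + 1) → ℂ :=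
    fun r p => l p.1 ⟨φ p.1, p.2⟩ - r p.1 * u ⟨φ p.1, p.2⟩
  have hc0 : c' 0 = linParam φ l := by
    funext p
    simp [c', linParam]
  have hc' : ContDiff ℂ 1 fun r => extParam (n := n) (c' r) u := by
    refine contDiff_pi.mpr ?_
    rintro ⟨j | i, a⟩
    · exact contDiff_const.sub ((contDiff_apply ℂ ℂ j).mul contDiff_const)
    · exact contDiff_const
  refine locAt_of_factor (l := lf) (U := fun v j => ∏ i ∈ Finset.univ.erase (φ j),
    blockForm (l j) i v) (x := fun r => Y (extParam (c' r) u)) ?_ ?_ ?_ ?_ ?_ ?_ ?_ ?_ ?_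
  · exact continuous_pi fun j => (contDiff_blockForm _ _).continuous
  · funext j
    have := ((hMlin _ _).mp hv₀).2 j
    rwa [linParam_eval] at this
  · have hq : ContDiff ℂ 1 q := by
      refine contDiff_pi.mpr fun j => ContDiff.sum fun a _ => ?_
      exact ((contDiff_apply ℂ ℂ _).comp contDiff_fst).mul
        ((contDiff_mvPolynomial_eval _).comp contDiff_snd)
    exact ⟨_, hq.contDiffAt.hasStrictFDerivAt one_ne_zero⟩
  · intro v j
    simp only [q, mulParam_eval, lf]
    exact (Finset.mul_prod_erase _ (fun i => blockForm (l j) i v) (Finset.mem_univ _)).symm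
  · refine differentiableAt_pi.mpr fun j => ?_
    have : ContDiff ℂ 1 fun v => ∏ i ∈ Finset.univ.erase (φ j), blockForm (l j) i v :=
      contDiff_prod fun i _ => contDiff_blockForm _ _
    exact (this.differentiable one_ne_zero).differentiableAt
  · intro j
    exact Finset.prod_ne_zero_iff.mpr fun i hi => hne j i (Finset.ne_of_mem_erase hi)
  · have h1 := hc'.contDiffAt.hasStrictFDerivAt (x := 0) one_ne_zero
    have h2 : HasStrictFDerivAt Y Y' (extParam (c' 0) u) := by rw [hc0]; exact hY
    exact ⟨_, h2.comp 0 h1⟩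
  · simp only [hc0, hY0]
  · have ht : Tendsto (fun z : (J → ℂ) × (Coord n → ℂ) => (extParam (c' z.1) u, z.2))
        (𝓝 (0, v₀)) (𝓝 (extParam (linParam φ l) u, v₀)) := by
      have := ((hc'.continuous.comp continuous_fst).prodMk continuous_snd).tendsto
        ((0 : J → ℂ), v₀)
      simpa [hc0, Function.comp_def] using this
    filter_upwards [ht.eventually hYe] with z hz
    rw [← hz, incFibre_ext H hlin, hMlin]
    refine and_congr_right fun hM => ?_
    rw [funext_iff]
    refine forall_congr' fun j => ?_
    have : ∑ a, c' z.1 ⟨j, a⟩ * MvPolynomial.eval z.2 (linSys n φ j a) =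
        blockForm (l j) (φ j) z.2 - z.1 j * blockForm u (φ j) z.2 := by
      simp only [c', linSys, blockForm, MvPolynomial.eval_X, sub_mul, Finset.sum_sub_distrib,
        Finset.mul_sum, mul_assoc]
    rw [this, hM.2.2, mul_one, sub_eq_zero]

end Multilinear

/-! ### Counting by degeneration -/

section Count
open Filter Topology

variable {ι : Type*} [Fintype ι] [DecidableEq ι] {n : ι → ℕ} {J : Type*} [Fintype J]
  {X : Set (PStack n)} {K : Type*} [Field K] [Algebra ℂ K]
  {π : MvPolynomial (Coord n) ℂ →ₐ[ℂ] K} {κ : Type*} [Fintype κ] {y : κ → K} {D : ℕ}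

omit [DecidableEq ι] [Fintype J] in
theorem blockForm_repOf {l : Coord n → ℂ} {i : ι} {v : Coord n → ℂ} (hv : BlockNZ v) :
    blockForm l i (repOf (ptOf v hv)) = 0 ↔ blockForm l i v = 0 := by
  obtain ⟨t, ht, hr⟩ := (ptOf_eq_iff hv (repOf_nz (ptOf v hv))).mp (ptOf_repOf _).symm
  rw [hr]
  simp only [blockForm, scale, mul_left_comm (l _), ← Finset.mul_sum, mul_eq_zero, ht i, false_or]

/-- For general linear forms no point of a multilinear section of complementary dimension lies on
a further hyperplane. -/
theorem IsCone.general_forms_ne_zero (H : IsCone X π) (hne : X.Nonempty)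
    (hy : IsTranscendenceBasis ℂ y) (hD : Fintype.card κ = D + Fintype.card ι)
    (hJ : Fintype.card J = D) (φ : J → ι) (j : J) (i : ι) (hi : i ≠ φ j) :
    ZGen fun L : J × Coord n → ℂ => ∀ x ∈ Sol X (linSys n φ) (linParam φ fun j p => L (j, p)),
      blockForm (fun p => L (j, p)) i (repOf x) ≠ 0 := by
  let φ' : Option J → ι := fun o => o.elim i φ
  let e : (o : Option J) × Fin (n (φ' o) + 1) → J × Coord n :=
    fun p => (p.1.elim j id, ⟨φ' p.1, p.2⟩)
  have he : Function.Injective e := by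
    rintro ⟨_ | o, a⟩ ⟨_ | o', a'⟩ h
    · have h2 : (⟨i, a⟩ : Coord n) = ⟨i, a'⟩ := congrArg Prod.snd h
      cases h2; rfl
    · have h1 : j = o' := congrArg Prod.fst h
      have h2 : i = φ o' := congrArg (fun z => z.2.1) h
      exact absurd (h1 ▸ h2) hi
    · have h1 : o = j := congrArg Prod.fst h
      have h2 : φ o = i := congrArg (fun z => z.2.1) h
      exact absurd (h1 ▸ h2.symm) hi
    · have h1 : o = o' := congrArg Prod.fst h
      subst h1
      have h2 : (⟨φ o, a⟩ : Coord n) = ⟨φ o, a'⟩ := congrArg Prod.snd h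
      cases h2; rfl
  refine ((H.sol_empty hne (linSys_hom φ') hy hD (by simp [hJ])).comp_injective e he).mono
    fun L hL x hx h0 => ?_
  have : x ∈ Sol X (linSys n φ') (L ∘ e) := by
    refine ⟨hx.1, ?_⟩
    rintro (_ | o)
    · simp only [linSys, MvPolynomial.eval_X]
      exact h0
    · exact hx.2 o
  rw [hL] at this
  exact this

/-- The general section by `dim X` multilinear forms has as many points as all the general sections
by linear forms selected by maps `φ` together. -/
theorem IsCone.mul_count [DecidableEq J] (H : IsCone X π) (hne : X.Nonempty)
    (hy : IsTranscendenceBasis ℂ y) (hD : Fintype.card κ = D + Fintype.card ι)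
    (hJ : Fintype.card J = D) : ∃ N : (J → ι) → ℕ,
      (∀ φ, ZGen fun c => (Sol X (linSys n φ) c).Finite ∧ (Sol X (linSys n φ) c).ncard = N φ) ∧
      ZGen fun c => (Sol X (mulSys n J) c).Finite ∧
        (Sol X (mulSys n J) c).ncard = ∑ φ : J → ι, N φ := by
  choose N hN using fun φ : J → ι => H.exists_fibreOK hne (linSys_hom φ) hy hD hJ
  have hS := fun φ => H.sol_of_fibreOK (linSys_hom φ) (hN φ)
  refine ⟨N, hS, ?_⟩
  let e : ∀ φ : J → ι, (j : J) × Fin (n (φ j) + 1) → J × Coord n :=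
    fun φ p => (p.1, ⟨φ p.1, p.2⟩)
  have he : ∀ φ, Function.Injective (e φ) := by
    rintro φ ⟨j, a⟩ ⟨j', a'⟩ h
    have h1 : j = j' := congrArg Prod.fst h
    subst h1
    simpa [e] using h
  -- General linear forms, one for each equation and each factor.
  obtain ⟨L, ⟨hL1, hL2⟩, hL3⟩ := ((ZGen.forall fun φ => (hN φ).ext.comp_injective (e φ) (he φ)).and
    (ZGen.forall fun φ => (hS φ).comp_injective (e φ) (he φ))).and
    (ZGen.forall fun φ => ZGen.forall fun j => ZGen.forall fun i : {i // i ≠ φ j} =>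
      H.general_forms_ne_zero hne hy hD hJ φ j i i.2) |>.exists
  let l : J → Coord n → ℂ := fun j p => L (j, p)
  replace hL2 : ∀ φ, (Sol X (linSys n φ) (linParam φ l)).Finite ∧
      (Sol X (linSys n φ) (linParam φ l)).ncard = N φ := hL2
  replace hL3 : ∀ φ, ∀ x ∈ Sol X (linSys n φ) (linParam φ l), ∀ j i, i ≠ φ j →
      blockForm (l j) i (repOf x) ≠ 0 := fun φ x hx j i hi => hL3 φ j ⟨i, hi⟩ x hx
  -- the section by products of linear forms is the disjoint union of linear sections
  have hU : Sol X (mulSys n J) (mulParam l) = ⋃ φ, Sol X (linSys n φ) (linParam φ l) := by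
    ext x
    rw [Set.mem_iUnion]
    constructor
    · rintro ⟨hx, h⟩
      have : ∀ j, ∃ i, blockForm (l j) i (repOf x) = 0 := fun j => by
        have := h j
        rw [mulParam_eval, Finset.prod_eq_zero_iff] at this
        obtain ⟨i, -, hi⟩ := this
        exact ⟨i, hi⟩
      choose φ hφ using this
      exact ⟨φ, hx, fun j => by rw [linParam_eval]; exact hφ j⟩
    · rintro ⟨φ, hx, h⟩
      refine ⟨hx, fun j => ?_⟩
      rw [mulParam_eval]
      refine Finset.prod_eq_zero (Finset.mem_univ (φ j)) ?_
      have := h j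
      rwa [linParam_eval] at this
  have hdisj : Pairwise (Function.onFun Disjoint fun φ => Sol X (linSys n φ) (linParam φ l)) := by
    intro φ ψ hφψ
    refine Set.disjoint_left.mpr fun x hx hx' => ?_
    obtain ⟨j, hj⟩ := Function.ne_iff.mp hφψ
    refine hL3 φ x hx j (ψ j) hj.symm ?_
    have := hx'.2 j
    rwa [linParam_eval] at this
  have hfin : (Sol X (mulSys n J) (mulParam l)).Finite := by
    rw [hU]
    exact Set.finite_iUnion fun φ => (hL2 φ).1
  have hcard : (Sol X (mulSys n J) (mulParam l)).ncard = ∑ φ, N φ := by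
    rw [hU, Set.ncard_iUnion_of_finite (fun φ => (hL2 φ).1) hdisj, finsum_eq_sum_of_fintype]
    exact Finset.sum_congr rfl fun φ _ => (hL2 φ).2
  obtain ⟨u, hu1, hu2⟩ := ((ZGen.forall hL1).and (zgen_normOK _ hfin)).exists
  have hloc := sol_ncard_eventually H (mulSys_hom (n := n) (J := J)) hu2 hfin (by
    rintro v ⟨hv, h1, h2⟩
    rw [hU, Set.mem_iUnion] at h1
    obtain ⟨φ, h1⟩ := h1
    refine locAt_mulSys H φ l u ⟨hv, h1, h2⟩ (hu1 φ).2.2 fun j i hi h0 => ?_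
    exact hL3 φ _ h1 j i hi ((blockForm_repOf hv).mpr h0))
  obtain ⟨N', hN'⟩ := H.exists_fibreOK hne (mulSys_hom (n := n) (J := J)) hy hD hJ
  have hN' := H.sol_of_fibreOK mulSys_hom hN'
  -- Compare with the general count on the open dense set where it is attained.
  obtain ⟨V, -, hVd, hV⟩ := hN'.generic
  obtain ⟨W, hW, hWo, hWc⟩ := eventually_nhds_iff.mp hloc
  obtain ⟨c, hcW, hcV⟩ := hVd.inter_open_nonempty W hWo ⟨_, hWc⟩
  have : N' = ∑ φ, N φ := by rw [← (hV c hcV).2, (hW c hcW).2, hcard]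
  rwa [this] at hN'

/-- The formula for the number of points of `X` on general multilinear forms. -/
theorem mul_degree (hX : IsIrredVariety X) (Deg : (ι → ℕ) → ℕ)
    (hDeg : ∀ e ∈ MDim X, DegIs X e (Deg e))
    (hDeg0 : ∀ e : ι → ℕ, (∀ i, e i ≤ n i) → e ∉ MDim X → Deg e = 0) :
    ZGen fun c => (Sol X (mulSys n (Fin (dimOf X))) c).Finite ∧
      (Sol X (mulSys n (Fin (dimOf X))) c).ncard = ∑ e ∈ Finset.univ.filter
          (fun e : (i : ι) → Fin (n i + 1) => ∑ i, (e i : ℕ) = dimOf X),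
        Nat.multinomial Finset.univ (fun i => (e i : ℕ)) *
          Deg (fun i => (e i : ℕ)) := by
  classical
  obtain ⟨K, _, _, π, H⟩ := exists_isCone hX
  have hne : X.Nonempty := hX.2.1
  obtain ⟨T, _, y, hy, hD⟩ := H.dimOf_eq hne
  obtain ⟨N, hN, h⟩ := H.mul_count (J := Fin (dimOf X)) hne hy hD (by simp)
  let W : (ι → ℕ) → ℕ := fun e => if ∀ i, e i ≤ n i then Deg e else 0
  have hNW : ∀ φ, N φ = W (cnt φ) := by
    intro φ
    by_cases hle : ∀ i, cnt φ i ≤ n i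
    · simp only [W, if_pos hle]
      exact deg_eq_of_le φ (hN φ) Deg hDeg hDeg0 hle
    · simp only [W, if_neg hle]
      push Not at hle
      obtain ⟨i, hi⟩ := hle
      exact count_eq_zero_of_lt φ (hN φ) hi
  have hsum := sum_cnt_eq (n := n) (dimOf X) W fun e i hi =>
    if_neg fun h => absurd (h i) (not_le.mpr hi)
  simp only [hNW] at h
  rw [hsum] at h
  have hWD : ∀ e : (i : ι) → Fin (n i + 1), W (fun i => (e i : ℕ)) = Deg fun i => (e i : ℕ) :=
    fun e => if_pos fun i => Nat.lt_succ_iff.mp (e i).2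
  simpa only [hWD] using h

end Count

/-! ### The Segre embedding -/

section SegreMap
variable {ι : Type*} [Fintype ι] [DecidableEq ι] {n : ι → ℕ}

theorem segre_ptOf {σ : PStack n → Projectivization ℂ (((i : ι) → Fin (n i + 1)) → ℂ)}
    (hσ : IsSegreMap n σ) {v : Coord n → ℂ} (hv : BlockNZ v) :
    ∃ h : (fun a : (i : ι) → Fin (n i + 1) => ∏ i, v ⟨i, a i⟩) ≠ 0,
      Projectivization.mk ℂ _ h = σ (ptOf v hv) :=
  hσ (ptOf v hv) (fun i a => v ⟨i, a⟩) fun i => ⟨hv i, rfl⟩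

/-- A tuple of points is recovered from the tensor of its coordinate vectors by fixing all but one
index. -/
theorem segre_injective {σ : PStack n → Projectivization ℂ (((i : ι) → Fin (n i + 1)) → ℂ)}
    (hσ : IsSegreMap n σ) : Function.Injective σ := by
  intro x y hxy
  obtain ⟨hx, ex⟩ := segre_ptOf hσ (repOf_nz x)
  obtain ⟨hy, ey⟩ := segre_ptOf hσ (repOf_nz y)
  rw [ptOf_repOf] at ex ey
  rw [← ex, ← ey, Projectivization.mk_eq_mk_iff] at hxy
  obtain ⟨s, hs⟩ := hxy
  have hs : ∀ a : (i : ι) → Fin (n i + 1), (s : ℂ) * ∏ i, repOf y ⟨i, a i⟩ =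
      ∏ i, repOf x ⟨i, a i⟩ := fun a => congrFun hs a
  choose a ha using fun i => Function.ne_iff.mp (repOf_nz x i)
  have hax : ∏ i, repOf x ⟨i, a i⟩ ≠ 0 := Finset.prod_ne_zero_iff.mpr fun i _ => ha i
  have hay : ∀ i, repOf y ⟨i, a i⟩ ≠ 0 := fun i =>
    Finset.prod_ne_zero_iff.mp (right_ne_zero_of_mul ((hs a).symm ▸ hax)) i (Finset.mem_univ _)
  rw [← ptOf_repOf x, ← ptOf_repOf y, ptOf_eq_iff]
  refine ⟨fun i => repOf y ⟨i, a i⟩ / repOf x ⟨i, a i⟩, fun i => div_ne_zero (hay i) (ha i), ?_⟩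
  funext ⟨i, b⟩
  have key : ∀ z : PStack n, ∏ j, repOf z ⟨j, Function.update a i b j⟩ =
      repOf z ⟨i, b⟩ * ∏ j ∈ Finset.univ.erase i, repOf z ⟨j, a j⟩ := by
    intro z
    rw [← Finset.mul_prod_erase _ _ (Finset.mem_univ i), Function.update_self]
    congr 1
    exact Finset.prod_congr rfl fun j hj => by rw [Function.update_of_ne (Finset.ne_of_mem_erase hj)]
  have key' : ∀ z : PStack n, ∏ j, repOf z ⟨j, a j⟩ =
      repOf z ⟨i, a i⟩ * ∏ j ∈ Finset.univ.erase i, repOf z ⟨j, a j⟩ := fun z =>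
    (Finset.mul_prod_erase _ (fun j => repOf z ⟨j, a j⟩) (Finset.mem_univ i)).symm
  have h1 := hs (Function.update a i b)
  have h2 := hs a
  rw [key, key] at h1
  rw [key', key'] at h2
  have hP : ∏ j ∈ Finset.univ.erase i, repOf y ⟨j, a j⟩ ≠ 0 :=
    Finset.prod_ne_zero_iff.mpr fun j _ => hay j
  have hs0 : (s : ℂ) ≠ 0 := s.ne_zero
  have hxi : repOf x ⟨i, a i⟩ ≠ 0 := ha i
  simp only [scale]
  rw [div_mul_eq_mul_div, eq_div_iff hxi]
  have hQ : ∏ j ∈ Finset.univ.erase i, repOf x ⟨j, a j⟩ ≠ 0 :=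
    Finset.prod_ne_zero_iff.mpr fun j _ => ha j
  refine mul_left_cancel₀ (mul_ne_zero hs0 (mul_ne_zero hP hQ)) ?_
  linear_combination (repOf x ⟨i, a i⟩ * ∏ j ∈ Finset.univ.erase i, repOf x ⟨j, a j⟩) * h1 -
    (repOf x ⟨i, b⟩ * ∏ j ∈ Finset.univ.erase i, repOf x ⟨j, a j⟩) * h2

/-- hyperplanes of the Segre space as coefficient vectors of multilinear forms -/
noncomputable def hyperHomeo (n : ι → ℕ) (d : ℕ) : (Fin d → ((i : ι) → Fin (n i + 1)) → ℂ) ≃ₜ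
    ((_ : Fin d) × Fin (Fintype.card ((i : ι) → Fin (n i + 1))) → ℂ) where
  toFun c p := c p.1 (enum n p.2)
  invFun c j a := c ⟨j, (enum n).symm a⟩
  left_inv c := by simp
  right_inv c := by simp
  continuous_toFun := by fun_prop
  continuous_invFun := by fun_prop

/-- The hyperplane sections of the Segre image are the images of the sections by multilinear forms.
-/
theorem segre_section {σ : PStack n → Projectivization ℂ (((i : ι) → Fin (n i + 1)) → ℂ)}
    (hσ : IsSegreMap n σ) (X : Set (PStack n)) {d : ℕ}
    (c : Fin d → ((i : ι) → Fin (n i + 1)) → ℂ) :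
    (σ '' X) ∩ {p | ∀ j, PLinVanish (c j) p} =
      σ '' Sol X (mulSys n (Fin d)) (hyperHomeo n d c) := by
  have key : ∀ x, (∀ j, PLinVanish (c j) (σ x)) ↔ ∀ j, ∑ a, hyperHomeo n d c ⟨j, a⟩ *
      MvPolynomial.eval (repOf x) (mulSys n (Fin d) j a) = 0 := by
    intro x
    refine forall_congr' fun j => ?_
    obtain ⟨hx, ex⟩ := segre_ptOf hσ (repOf_nz x)
    rw [ptOf_repOf] at ex
    rw [← ex, pLinVanish_mk]
    have : ∑ a, hyperHomeo n d c ⟨j, a⟩ *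
        MvPolynomial.eval (repOf x) (mulSys n (Fin d) j a) =
        ∑ a, c j a * ∏ i, repOf x ⟨i, a i⟩ := by
      rw [← (enum n).sum_comp]
      simp [hyperHomeo, mulSys]
    rw [this]
  ext p
  constructor
  · rintro ⟨⟨x, hx, rfl⟩, h⟩
    exact ⟨x, ⟨hx, (key x).mp h⟩, rfl⟩
  · rintro ⟨x, ⟨hx, h⟩, rfl⟩
    exact ⟨⟨x, hx, rfl⟩, (key x).mpr h⟩

end SegreMap

/-- The degree of the Segre embedding of an irreducible
multiprojective variety `X` of dimension `d` is
`∑_{|e| = d} (d!/(e₁!⋯e_k!)) · Deg_X(e)`. -/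
theorem segre_degree_formula {ι : Type*} [Fintype ι] [DecidableEq ι] {n : ι → ℕ}
    (X : Set (PStack n)) (hX : IsIrredVariety X) (d : ℕ) (hd : dimOf X = d)
    (σ : PStack n → Projectivization ℂ (((i : ι) → Fin (n i + 1)) → ℂ))
    (hσ : IsSegreMap n σ)
    (Deg : (ι → ℕ) → ℕ)
    (hDeg : ∀ e ∈ MDim X, DegIs X e (Deg e))
    (hDeg0 : ∀ e : ι → ℕ, (∀ i, e i ≤ n i) → e ∉ MDim X → Deg e = 0) :
    ProjDegIs (σ '' X) d
      (∑ e ∈ Finset.univ.filter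
          (fun e : (i : ι) → Fin (n i + 1) => ∑ i, (e i : ℕ) = d),
        Nat.multinomial Finset.univ (fun i => (e i : ℕ)) *
          Deg (fun i => (e i : ℕ))) := by
  subst hd
  refine generic_mono (generic_comp_homeomorph (hyperHomeo n (dimOf X))
    (mul_degree hX Deg hDeg hDeg0).generic) fun c hc => ?_
  rw [segre_section hσ, Set.ncard_image_of_injective _ (segre_injective hσ)]
  exact ⟨hc.1.image _, hc.2⟩
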